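/- arXiv:2312.06061 — 16 statements merged into one kernel-verified Lean document; each statement's English description precedes it below -/
import Mathlib

section
/- Every universally flexible loop with the inverse property is a Moufang loop; that is, if Q is an IP loop in which every principal isotope is flexible, then Q satisfies the Moufang identity ((x·y)·z)·y = x·(y·(z·y)) for all x, y, z ∈ Q. -/
/-- A loop `(Q, ·, \, /, 1)`: `mul x y = x·y`, `ld x y = x\y`, `rd x y = x/y`. -/
structure LoopStr (Q : Type*) where
  mul : Q → Q → Q
  ld : Q → Q → Q
  rd : Q → Q → Q
  one : Q
  ld_mul : ∀ x y, ld x (mul x y) = y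
  rd_mul : ∀ x y, rd (mul y x) x = y
  mul_ld : ∀ x y, mul x (ld x y) = y
  mul_rd : ∀ x y, mul (rd y x) x = y
  one_mul : ∀ x, mul one x = x
  mul_one : ∀ x, mul x one = x

/-- Every universally flexible IP loop is Moufang. -/
theorem uf_ip_is_moufang {Q : Type*} (L : LoopStr Q) (inv : Q → Q)
    (lip : ∀ x y, L.mul (inv x) (L.mul x y) = y)
    (rip : ∀ x y, L.mul (L.mul y x) (inv x) = y)
    -- every principal isotope `x ∘ y = (x/a)·(b\y)` is flexible
    (uf : ∀ a b x y,
      L.mul (L.rd x a) (L.ld b (L.mul (L.rd y a) (L.ld b x)))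
        = L.mul (L.rd (L.mul (L.rd x a) (L.ld b y)) a) (L.ld b x)) :
    ∀ x y z, L.mul (L.mul (L.mul x y) z) y = L.mul x (L.mul y (L.mul z y)) := by
  -- basic facts on inverses
  have lcan : ∀ x y z, L.mul x y = L.mul x z → y = z := fun x y z h => by
    rw [← L.ld_mul x y, h, L.ld_mul]
  have rcan : ∀ x y z, L.mul y x = L.mul z x → y = z := fun x y z h => by
    rw [← L.rd_mul x y, h, L.rd_mul]
  have invinv : ∀ x, inv (inv x) = x := fun x => by
    have h1 := lip (inv x) (L.mul x L.one)
    rw [lip x L.one, L.mul_one, L.mul_one] at h1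
    exact h1
  have lip2 : ∀ x y, L.mul x (L.mul (inv x) y) = y := fun x y => by
    have := lip (inv x) y
    rwa [invinv] at this
  have rip2 : ∀ x y, L.mul (L.mul y (inv x)) x = y := fun x y => by
    have := rip (inv x) y
    rwa [invinv] at this
  have rd_eq : ∀ x a, L.rd x a = L.mul x (inv a) := fun x a => by
    apply rcan a
    rw [L.mul_rd, rip2]
  have ld_eq : ∀ b x, L.ld b x = L.mul (inv b) x := fun b x => by
    apply lcan b
    rw [L.mul_ld, lip2]
  have inv_one : inv L.one = L.one := by
    have := lip L.one L.one
    rwa [L.mul_one, L.mul_one] at this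
  -- `L_a L_v` commutes with `R_{v(au)} R_u⁻¹`
  have A : ∀ a v z u, L.mul a (L.mul v (L.mul z (L.mul v (L.mul a u))))
      = L.mul (L.mul (L.mul a (L.mul v (L.mul z u))) (inv u)) (L.mul v (L.mul a u)) := by
    intro a v z u
    have h := uf u (inv v) (L.mul a u) (L.mul z u)
    simp only [rd_eq, ld_eq, invinv, rip] at h
    exact h
  have B : ∀ v z c, L.mul v (L.mul z (L.mul v c))
      = L.mul (L.mul (L.mul v (L.mul z c)) (inv c)) (L.mul v c) := by
    intro v z c
    have h := A L.one v z c
    simpa only [L.one_mul] using h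
  have key : ∀ w u a, L.mul (L.mul w (L.mul a u)) (inv u)
      = L.mul (L.mul w u) (L.mul (inv u) a) := by
    intro w u a
    have antiinv : inv (L.mul (inv a) u) = L.mul (inv u) a := by
      have h2 := rip (L.mul (inv a) u) a
      rw [lip2] at h2
      rw [← h2, lip, h2]
    have h1 := A (inv a) (inv w) (L.mul (L.mul w (L.mul a u)) (inv u)) u
    have e1 : L.mul u (inv u) = L.one := by
      have := rip u L.one
      rwa [L.one_mul] at this
    rw [rip2, lip, lip, e1, L.one_mul, B] at h1
    generalize L.mul (L.mul w (L.mul a u)) (inv u) = t at h1 ⊢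
    have h3 := congrArg (L.mul a) h1
    rw [lip2] at h3
    have h4 := congrArg (fun q => L.mul q (L.mul (inv a) u)) (rcan _ _ _ h3)
    simp only [rip2, lip2] at h4
    have h5 := congrArg (L.mul w) h4
    rw [lip2] at h5
    rw [← h5, ← antiinv, rip]
  intro x y z
  have h := key (L.mul x y) (inv y) (L.mul z y)
  rwa [rip, rip, invinv] at h
end

section
/- Every semi-universally flexible loop with the inverse property is diassociative: if Q is an SUF IP loop, then for all a, b ∈ Q the smallest subset of Q containing a and b and closed under the multiplication · and the inversion x ↦ x⁻¹ is associative (i.e., x·(y·z) = (x·y)·z for all x, y, z in that subset), and hence forms a group under ·. -/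
/-- The smallest subset of `Q` containing `a` and `b` and closed under
multiplication and inversion. -/
inductive Gen {Q : Type*} (L : LoopStr Q) (inv : Q → Q) (a b : Q) : Q → Prop
  | mem_a : Gen L inv a b a
  | mem_b : Gen L inv a b b
  | mul {x y : Q} : Gen L inv a b x → Gen L inv a b y → Gen L inv a b (L.mul x y)
  | inv {x : Q} : Gen L inv a b x → Gen L inv a b (inv x)

class SUFIP (Q : Type*) extends Mul Q, One Q, Inv Q where
  lip : ∀ x y : Q, x⁻¹ * (x * y) = y
  rip : ∀ x y : Q, (y * x) * x⁻¹ = y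
  one_mul' : ∀ x : Q, 1 * x = x
  mul_one' : ∀ x : Q, x * 1 = x
  s1 : ∀ x y u : Q, (x * u) * ((y * u) * x) = (((x * u) * y) * u) * x
  s2 : ∀ x y u : Q, x * (u * (y * (u * x))) = (x * (u * y)) * (u * x)

set_option linter.unusedSectionVars false
namespace SUFIP

section basic
variable {Q : Type*} [SUFIP Q]

theorem mul_inv (x : Q) : x * x⁻¹ = 1 := by
  have := rip x 1
  rwa [one_mul'] at this

theorem inv_mul (x : Q) : x⁻¹ * x = 1 := by
  have := lip x 1
  rwa [mul_one'] at this

theorem inv_inv' (x : Q) : x⁻¹⁻¹ = x := by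
  have := lip x⁻¹ x
  rwa [inv_mul, mul_one'] at this

theorem lip' (x y : Q) : x * (x⁻¹ * y) = y := by
  have := lip x⁻¹ y
  rwa [inv_inv'] at this

theorem rip' (x y : Q) : (y * x⁻¹) * x = y := by
  have := rip x⁻¹ y
  rwa [inv_inv'] at this

theorem mul_inv_rev' (x y : Q) : (x * y)⁻¹ = y⁻¹ * x⁻¹ := by
  have h := lip (x * y) y⁻¹
  rw [rip] at h
  have h2 := rip x (x * y)⁻¹
  rw [h] at h2
  exact h2.symm

def L (x : Q) : Equiv.Perm Q := ⟨fun y => x * y, fun y => x⁻¹ * y, lip x, lip' x⟩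
def R (x : Q) : Equiv.Perm Q := ⟨fun y => y * x, fun y => y * x⁻¹, rip x, rip' x⟩

theorem L_ap (x y : Q) : L x y = x * y := rfl
theorem R_ap (x y : Q) : R x y = y * x := rfl
theorem L_inv (x : Q) : L x⁻¹ = (L x)⁻¹ := by ext y; rfl
theorem R_inv (x : Q) : R x⁻¹ = (R x)⁻¹ := by ext y; rfl
theorem L_one : L (1 : Q) = 1 := by ext y; exact one_mul' y
theorem R_one : R (1 : Q) = 1 := by ext y; exact mul_one' y

theorem cS1 (x u : Q) : Commute (R x * R u) (L (x * u)) := by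
  ext y; exact (s1 x y u).symm
theorem cS2 (x u : Q) : Commute (L x * L u) (R (u * x)) := by
  ext y; exact (s2 x y u)
theorem flex (x : Q) : Commute (L x) (R x) := by
  have := cS2 x 1
  rwa [L_one, mul_one, one_mul'] at this

theorem F1 (u z : Q) : Commute (L (u * z) * (L u)⁻¹) (R z) := by
  have := cS2 (u * z) u⁻¹
  rwa [L_inv, lip] at this
theorem F2 (v z : Q) : Commute ((L v)⁻¹ * L (z * v)) (R z) := by
  have := cS2 v⁻¹ (z * v)
  rwa [L_inv, rip] at this
theorem F3 (v z : Q) : Commute (R (z * v) * (R v)⁻¹) (L z) := by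
  have := cS1 (z * v) v⁻¹
  rwa [R_inv, rip] at this
theorem F4 (v z : Q) : Commute ((R v)⁻¹ * R (v * z)) (L z) := by
  have := cS1 v⁻¹ (v * z)
  rwa [R_inv, lip] at this

theorem tele1 {G : Type*} [Group G] (F : Q → G) (g : Equiv.Perm Q) (c : G)
    (h : ∀ u, Commute (F (g u) * (F u)⁻¹) c) (k : ℤ) (u : Q) :
    Commute (F ((g ^ k) u) * (F u)⁻¹) c := by
  induction k using Int.induction_on with
  | zero => simp
  | succ n ih =>
    have h1 := (h ((g ^ (n:ℤ)) u)).mul_left ih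
    rw [add_comm, zpow_add, zpow_one, Equiv.Perm.mul_apply]
    simpa [mul_assoc] using h1
  | pred n ih =>
    have h1 := (h ((g ^ (-(n:ℤ) - 1)) u)).inv_left.mul_left ih
    have e : g ((g ^ (-(n:ℤ) - 1)) u) = (g ^ (-(n:ℤ))) u := by
      rw [← Equiv.Perm.mul_apply, ← zpow_one_add]; congr 2; ring
    rw [e] at h1
    simpa [mul_assoc] using h1

theorem tele2 {G : Type*} [Group G] (F : Q → G) (g : Equiv.Perm Q) (c : G)
    (h : ∀ u, Commute ((F u)⁻¹ * F (g u)) c) (k : ℤ) (u : Q) :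
    Commute ((F u)⁻¹ * F ((g ^ k) u)) c := by
  induction k using Int.induction_on with
  | zero => simp
  | succ n ih =>
    have h1 := ih.mul_left (h ((g ^ (n:ℤ)) u))
    rw [add_comm, zpow_add, zpow_one, Equiv.Perm.mul_apply]
    simpa [mul_assoc] using h1
  | pred n ih =>
    have h1 := ih.mul_left (h ((g ^ (-(n:ℤ) - 1)) u)).inv_left
    have e : g ((g ^ (-(n:ℤ) - 1)) u) = (g ^ (-(n:ℤ))) u := by
      rw [← Equiv.Perm.mul_apply, ← zpow_one_add]; congr 2; ring
    rw [e] at h1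
    simpa [mul_assoc] using h1

theorem T1 (u z : Q) (k : ℤ) : Commute (L ((R z ^ k) u) * (L u)⁻¹) (R z) :=
  tele1 L (R z) (R z) (fun u => F1 u z) k u
theorem T2 (v z : Q) (k : ℤ) : Commute ((L v)⁻¹ * L ((L z ^ k) v)) (R z) :=
  tele2 L (L z) (R z) (fun u => F2 u z) k v
theorem T3 (v z : Q) (k : ℤ) : Commute (R ((L z ^ k) v) * (R v)⁻¹) (L z) :=
  tele1 R (L z) (L z) (fun u => F3 u z) k v
theorem T4 (v z : Q) (k : ℤ) : Commute ((R v)⁻¹ * R ((R z ^ k) v)) (L z) :=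
  tele2 R (R z) (L z) (fun u => F4 u z) k v

/-- applying a commutation at a point -/
theorem cap {f g : Equiv.Perm Q} (h : Commute f g) (x : Q) : f (g x) = g (f x) :=
  congrArg (fun e : Equiv.Perm Q => e x) h.eq

theorem ascR {p p2 z : Q} (h : Commute (L p2 * (L p)⁻¹) (R z)) (t : Q)
    (e : p * (t * z) = (p * t) * z) : p2 * (t * z) = (p2 * t) * z := by
  have h1 := cap h (p * t)
  have a1 : ∀ y, (L p2 * (L p)⁻¹) (p * y) = p2 * y := fun y => by
    change p2 * (p⁻¹ * (p * y)) = _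
    rw [lip]
  rw [a1, R_ap, R_ap, ← e, a1] at h1
  exact h1

theorem ascL {q q2 z : Q} (h : Commute (R q2 * (R q)⁻¹) (L z)) (t : Q)
    (e : z * (t * q) = (z * t) * q) : z * (t * q2) = (z * t) * q2 := by
  have h1 := cap h (t * q)
  have a1 : ∀ y, (R q2 * (R q)⁻¹) (y * q) = y * q2 := fun y => by
    change ((y * q) * q⁻¹) * q2 = _
    rw [rip]
  rw [a1, L_ap, L_ap, e, a1] at h1
  exact h1.symm

def pw (z : Q) (k : ℤ) : Q := (R z ^ k) 1

theorem pw_L (z : Q) (k : ℤ) : (L z ^ k) 1 = pw z k := by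
  have h : (L z * (R z)⁻¹) 1 = 1 := by
    change z * (1 * z⁻¹) = 1
    rw [one_mul', mul_inv]
  have h2 := Equiv.Perm.zpow_apply_eq_self_of_apply_eq_self h k
  rw [((flex z).inv_right).mul_zpow, (((flex z).inv_right).zpow_zpow k k).eq,
    Equiv.Perm.mul_apply, inv_zpow, Equiv.Perm.inv_eq_iff_eq] at h2
  exact h2

theorem flexv (x y : Q) : (y * x) * y⁻¹ = y * (x * y⁻¹) := by
  have := cap ((flex y).inv_right) x
  exact this.symm

theorem Rsq (x : Q) : R (x * x) = R x * R x := by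
  have key : ∀ y, (y * x) * (x * x) = ((y * x) * x) * x := by
    intro y
    have e1 := s1 x y⁻¹ (y * x)
    rw [lip] at e1
    have e2 : x * ((y * x) * y⁻¹) = (x * (y * x)) * y⁻¹ := by
      have hc : Commute (R y⁻¹ * (R (x⁻¹ * y⁻¹))⁻¹) (L x) := by
        have := F3 (x⁻¹ * y⁻¹) x
        rwa [lip'] at this
      refine ascL hc _ ?_
      rw [← mul_inv_rev', mul_inv, rip, mul_one']
    have e3 := s2 x (x * y⁻¹) y
    have e4 : (x * y⁻¹) * (y * x) = y⁻¹ * ((y * x) * x) := by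
      have h := cap (F2 y⁻¹ x) y
      have h' : y * ((x * y⁻¹) * (y * x)) = (y * ((x * y⁻¹) * y)) * x := by
        have : ∀ w, ((L y⁻¹)⁻¹ * L (x * y⁻¹)) w = y * ((x * y⁻¹) * w) := by
          intro w; rw [L_inv, inv_inv]; rfl
        rw [this, this] at h; exact h
      rw [rip'] at h'
      rw [← h', lip]
    rw [← e2, flexv, ← e3, e4, lip'] at e1
    have e5 := cap (F3 x x) ((y * x) * x)
    have e5' : (x * (y * x)) * (x * x) = x * ((y * x) * (x * x)) := by
      have : ∀ w, (R (x * x) * (R x)⁻¹) (w * x) = w * (x * x) := by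
        intro w
        change ((w * x) * x⁻¹) * (x * x) = _
        rw [rip]
      have h := cap (F3 x x) ((y * x) * x)
      rw [this, L_ap, L_ap] at h
      rw [← h]
      have f := cap (flex x) (y * x)
      rw [L_ap, R_ap, L_ap, R_ap] at f
      rw [f, this]
    rw [e5'] at e1
    have f := cap (flex x) ((y * x) * x)
    rw [L_ap, R_ap, L_ap, R_ap] at f
    rw [← f] at e1
    exact (L x).injective e1
  ext y
  have := key (y * x⁻¹)
  rw [rip'] at this
  exact this


/-- powers of `z` up to absolute value `N` behave -/
def Good (z : Q) (N : ℕ) : Prop :=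
  ∀ k : ℤ, k.natAbs ≤ N → R (pw z k) = R z ^ k ∧ L (pw z k) = L z ^ k

theorem R_pw_comm (z : Q) (k : ℤ) : Commute (R (pw z k)) (L z) := by
  have := T3 1 z k
  rwa [R_one, inv_one, mul_one, pw_L] at this

theorem good_mul {z : Q} {N : ℕ} (H : Good z N) (k m : ℤ) (hk : k.natAbs ≤ N) :
    pw z k * pw z m = pw z (k + m) := by
  change L (pw z k) (pw z m) = _
  rw [(H k hk).2, ← pw_L, ← pw_L, zpow_add]; rfl

theorem conjl {z : Q} {N : ℕ} (H : Good z N) (u : Q) (k m : ℕ) (h : k + m ≤ N) :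
    (u * pw z k) * (pw z m * u⁻¹) = u * (pw z (k + m) * u⁻¹) := by
  have hk : (k : ℤ).natAbs ≤ N := by omega
  have hm : (m : ℤ).natAbs ≤ N := by omega
  have hm' : (-(m : ℤ)).natAbs ≤ N := by omega
  have hq : ((k : ℤ) + m).natAbs ≤ N := by omega
  -- right side multiplied by z^-m
  have a1 : (u * (pw z (k + m) * u⁻¹)) * pw z (-m) = u * ((pw z (k + m) * u⁻¹) * pw z (-m)) := by
    rw [← flexv]
    have b1 : (u * pw z (k+m)) * (u⁻¹ * pw z (-m)) = ((u * pw z (k+m)) * u⁻¹) * pw z (-m) := by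
      have c := (T1 u z (k+m)).zpow_right (-m)
      rw [← (H _ hm').1, ← (H _ hq).1] at c
      refine ascR c _ ?_
      rw [lip', mul_inv, one_mul']
    rw [← b1]
    have b2 : u * (pw z (k+m) * (u⁻¹ * pw z (-m))) = (u * pw z (k+m)) * (u⁻¹ * pw z (-m)) := by
      have c := (F3 (pw z (-m)) u⁻¹)
      rw [L_inv] at c
      refine ascL c.inv_right _ ?_
      · rw [good_mul H _ _ hq]
        change R _ u = R _ (R _ u)
        rw [(H _ hm').1, (H _ hq).1, (H _ (by omega)).1, ← Equiv.Perm.mul_apply, ← zpow_add]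
        congr 2; ring
    rw [← b2]
    congr 1
    have c := ((flex z).zpow_left (k+m)).zpow_right (-m)
    rw [← (H _ hm').1, ← (H _ hq).2] at c
    exact cap c u⁻¹
  have a2 : (u * pw z k) * (pw z m * u⁻¹) = (u * ((pw z (k + m) * u⁻¹) * pw z (-m))) * pw z m := by
    have c := F4 (pw z m) u⁻¹
    rw [L_inv] at c
    have d := cap c.inv_right (pw z k)
    rw [inv_inv, Equiv.Perm.mul_apply, Equiv.Perm.mul_apply, Equiv.Perm.inv_eq_iff_eq] at d
    rw [R_ap, R_ap, R_ap, L_ap, L_ap] at d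
    rw [d]
    congr 2
    rw [(H _ hm).1, ← zpow_neg, ← (H _ hm').1, R_ap]
    congr 1
    change L (pw z k) (L (pw z m) u⁻¹) = L (pw z (k + m)) u⁻¹
    rw [(H _ hm).2, (H _ hk).2, (H _ hq).2, zpow_add]; rfl
  rw [a2, ← a1]
  change R (pw z m) (R (pw z (-m)) _) = _
  rw [(H _ hm).1, (H _ hm').1, ← Equiv.Perm.mul_apply, ← zpow_add]
  simp

theorem oddR {z : Q} {j : ℕ} (hj : 1 ≤ j) (H : Good z (2 * j)) :
    R (pw z (2 * j + 1)) = R z ^ (2 * (j : ℤ) + 1) := by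
  have hi : ((j : ℤ) + 1).natAbs ≤ 2 * j := by omega
  have hjj : (j : ℤ).natAbs ≤ 2 * j := by omega
  have key : ∀ u, R (pw z (2 * j + 1)) ((R z ^ ((j : ℤ) + 1)) u)
      = (R z ^ (2 * (j : ℤ) + 1)) ((R z ^ ((j : ℤ) + 1)) u) := by
    intro u
    have hw : (u * z) * pw z j = u * pw z (j + 1) := by
      change R (pw z j) (R z u) = R _ u
      rw [(H _ hjj).1, (H _ hi).1, zpow_add]
      rw [zpow_one]; rfl
    have e1 := s1 (pw z (j + 1)) (u * z)⁻¹ ((u * z) * pw z j)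
    rw [lip, good_mul H _ _ hjj] at e1
    have e2 : pw z (j+1) * (((u * z) * pw z j) * (u * z)⁻¹)
        = (pw z (j+1) * ((u * z) * pw z j)) * (u * z)⁻¹ := by
      have c := (T3 ((pw z j)⁻¹ * (u * z)⁻¹) z j).zpow_right (j + 1)
      rw [← (H _ hjj).2, ← (H _ hi).2, L_ap, lip'] at c
      refine ascL c _ ?_
      rw [← mul_inv_rev', mul_inv, rip, mul_one']
    have e3 : ((u * z) * pw z j) * (u * z)⁻¹ = u * (pw z j * u⁻¹) := by
      rw [flexv, mul_inv_rev']
      obtain ⟨n, rfl⟩ : ∃ n, j = n + 1 := ⟨j - 1, by omega⟩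
      have c := conjl H u 1 n (by omega)
      have p1 : pw z ((1:ℕ):ℤ) = z := by simp [pw, R_ap, one_mul']
      rw [p1] at c
      have e : (1:ℕ) + (n:ℤ) = ((n + 1 : ℕ) : ℤ) := by push_cast; ring
      rw [e] at c
      rw [← c]
      congr 1
      change L (pw z _) (z⁻¹ * u⁻¹) = L (pw z _) _
      rw [(H _ hjj).2, (H n (by omega)).2]
      push_cast
      rw [zpow_add, zpow_one, Equiv.Perm.mul_apply, L_ap, lip']
    have e4 := s2 (pw z (j+1)) (pw z j * u⁻¹) u
    have e5 : (pw z j * u⁻¹) * (u * pw z (j+1)) = u⁻¹ * ((R z ^ (2 * (j:ℤ) + 1)) u) := by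
      have c := cap ((T2 u⁻¹ z j).zpow_right (j+1)) u
      rw [Equiv.Perm.mul_apply, Equiv.Perm.mul_apply, ← (H _ hjj).2, L_ap, L_ap, L_ap, rip',
        L_inv, inv_inv, L_ap, L_ap, ← (H _ hi).1, R_ap] at c
      have c2 := congrArg (fun w => u⁻¹ * w) c
      simp only [lip] at c2
      rw [c2]
      congr 1
      change R _ (R _ u) = _
      rw [(H _ hjj).1, (H _ hi).1, ← Equiv.Perm.mul_apply, ← zpow_add]
      congr 2; ring
    rw [← e2, e3, hw, ← e4, e5, lip'] at e1
    have d1 : (pw z (j+1) * (u * pw z (j+1))) * pw z (j + (j + 1))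
        = pw z (j+1) * ((u * pw z (j+1)) * pw z (j + (j+1))) := by
      have c := (R_pw_comm z (j + (j+1))).zpow_right (j+1)
      rw [← (H _ hi).2] at c
      exact cap c _
    have d2 : (pw z (j+1) * ((R z ^ (2 * (j:ℤ) + 1)) u)) * pw z (j + 1)
        = pw z (j+1) * ((R z ^ (2 * (j : ℤ) + 1)) ((R z ^ ((j : ℤ) + 1)) u)) := by
      have c := ((flex z).zpow_left (j+1)).zpow_right (j + 1)
      have c' := cap c ((R z ^ (2 * (j:ℤ) + 1)) u)
      rw [← (H _ hi).2, cap ((Commute.refl (R z)).zpow_zpow (j+1) (2*j+1)), ← (H _ hi).1] at c'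
      rw [← (H _ hi).1]
      exact c'.symm
    rw [d1, d2] at e1
    have e6 := (L (pw z (j+1))).injective e1
    rw [← (H _ hi).1] at e6 ⊢
    have : (2 * (j:ℤ) + 1) = j + (j + 1) := by ring
    rw [this] at e6 ⊢
    exact e6
  ext y
  have := key ((R z ^ ((j : ℤ) + 1))⁻¹ y)
  simpa using this

instance : SUFIP Qᵐᵒᵖ where
  lip x y := MulOpposite.unop_injective (rip x.unop y.unop)
  rip x y := MulOpposite.unop_injective (lip x.unop y.unop)
  one_mul' x := MulOpposite.unop_injective (mul_one' x.unop)
  mul_one' x := MulOpposite.unop_injective (one_mul' x.unop)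
  s1 x y u := MulOpposite.unop_injective (s2 x.unop y.unop u.unop).symm
  s2 x y u := MulOpposite.unop_injective (s1 x.unop y.unop u.unop).symm

theorem semi {A B : Type*} (φ : A → B) (f : Equiv.Perm A) (g : Equiv.Perm B)
    (h : ∀ a, φ (f a) = g (φ a)) (k : ℤ) (a : A) : φ ((f ^ k) a) = (g ^ k) (φ a) := by
  induction k using Int.induction_on with
  | zero => simp
  | succ n ih =>
    rw [add_comm, zpow_add, zpow_one, Equiv.Perm.mul_apply, h, ih, ← Equiv.Perm.mul_apply,
      ← zpow_one_add]
  | pred n ih =>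
    apply g.injective
    rw [← h, ← Equiv.Perm.mul_apply, ← Equiv.Perm.mul_apply, ← zpow_one_add, ← zpow_one_add]
    have e : (1 + (-(n:ℤ) - 1)) = -n := by ring
    rw [e, ih]

theorem op_R (z y : Q) (k : ℤ) :
    MulOpposite.op ((R z ^ k) y) = (L (MulOpposite.op z) ^ k) (MulOpposite.op y) :=
  semi MulOpposite.op (R z) (L (MulOpposite.op z)) (fun _ => rfl) k y
theorem op_L (z y : Q) (k : ℤ) :
    MulOpposite.op ((L z ^ k) y) = (R (MulOpposite.op z) ^ k) (MulOpposite.op y) :=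
  semi MulOpposite.op (L z) (R (MulOpposite.op z)) (fun _ => rfl) k y
theorem op_pw (z : Q) (k : ℤ) : pw (MulOpposite.op z) k = MulOpposite.op (pw z k) := by
  rw [← pw_L z, op_L]; rfl

theorem good_op {z : Q} {N : ℕ} (H : Good z N) : Good (MulOpposite.op z) N := by
  intro k hk
  constructor
  · ext y
    rw [op_pw]
    change MulOpposite.op (L (pw z k) y.unop) = _
    rw [(H k hk).2, op_L]; rfl
  · ext y
    rw [op_pw]
    change MulOpposite.op (R (pw z k) y.unop) = _
    rw [(H k hk).1, op_R]; rfl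

theorem Lsq (x : Q) : L (x * x) = L x * L x := by
  ext y
  have := congrArg (fun e => e (MulOpposite.op y)) (Rsq (MulOpposite.op x))
  exact congrArg MulOpposite.unop this

theorem oddL {z : Q} {j : ℕ} (hj : 1 ≤ j) (H : Good z (2 * j)) :
    L (pw z (2 * j + 1)) = L z ^ (2 * (j : ℤ) + 1) := by
  ext y
  have := congrArg (fun e => e (MulOpposite.op y)) (oddR hj (good_op H))
  simp only [op_pw] at this
  rw [← op_L] at this
  exact congrArg MulOpposite.unop this

theorem good_of {z : Q} {N : ℕ}
    (h : ∀ k : ℕ, k ≤ N → R (pw z k) = R z ^ (k:ℤ) ∧ L (pw z k) = L z ^ (k:ℤ)) : Good z N := by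
  intro k hk
  obtain ⟨n, rfl | rfl⟩ := k.eq_nat_or_neg
  · exact h n (by omega)
  · have hn := h n (by omega)
    have e : pw z (-n) = (pw z n)⁻¹ := by
      rw [pw, zpow_neg, ← hn.1, ← R_inv, R_ap, one_mul']
    rw [e, R_inv, L_inv, hn.1, hn.2, zpow_neg, zpow_neg]
    exact ⟨rfl, rfl⟩

theorem good_all (z : Q) (N : ℕ) : Good z N := by
  suffices h : ∀ n : ℕ, R (pw z n) = R z ^ (n:ℤ) ∧ L (pw z n) = L z ^ (n:ℤ) from
    good_of fun k _ => h k
  intro n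
  induction n using Nat.strong_induction_on with
  | _ n ih =>
    rcases Nat.even_or_odd' n with ⟨j, rfl | rfl⟩
    · rcases Nat.eq_zero_or_pos j with rfl | hj
      · simp [pw, R_one, L_one]
      · have h := ih j (by omega)
        have e : pw z ((2 * j : ℕ) : ℤ) = pw z j * pw z j := by
          change _ = R (pw z j) (pw z j)
          rw [h.1, pw, pw, ← Equiv.Perm.mul_apply, ← zpow_add]
          push_cast; congr 2; ring
        rw [e, Rsq, Lsq, h.1, h.2, ← zpow_add, ← zpow_add]
        push_cast
        constructor <;> congr 1 <;> ring
    · rcases Nat.eq_zero_or_pos j with rfl | hj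
      · simp [pw, R_ap, one_mul']
      · have H : Good z (2 * j) := good_of fun k hk => ih k (by omega)
        push_cast
        exact ⟨oddR hj H, oddL hj H⟩

theorem R_pw (z : Q) (k : ℤ) : R (pw z k) = R z ^ k := (good_all z k.natAbs k le_rfl).1
theorem L_pw (z : Q) (k : ℤ) : L (pw z k) = L z ^ k := (good_all z k.natAbs k le_rfl).2

end basic

section words
variable {Q : Type*} [SUFIP Q] (g : Bool → Q)

def X : ℕ → Q → Prop
  | 0, x => x = 1
  | n + 1, x => ∃ c s y, X n y ∧ x = (L (g c) ^ (s : ℤ)) y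

def Y : ℕ → Q → Prop
  | 0, x => x = 1
  | n + 1, x => ∃ c s y, Y n y ∧ x = (R (g c) ^ (s : ℤ)) y

def A (n : ℕ) : Prop := ∀ x, X g n x → ∀ c d s r,
  (L (g c) ^ (s : ℤ)) ((R (g d) ^ (r : ℤ)) x) = (R (g d) ^ r) ((L (g c) ^ s) x)

variable {g}

theorem zz (f : Equiv.Perm Q) (s t : ℤ) (x : Q) : (f ^ s) ((f ^ t) x) = (f ^ (s + t)) x := by
  rw [zpow_add]; rfl

theorem X_succ {n : ℕ} {x : Q} (h : X g n x) : X g (n + 1) x := ⟨true, 0, x, h, by simp⟩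
theorem Y_succ {n : ℕ} {x : Q} (h : Y g n x) : Y g (n + 1) x := ⟨true, 0, x, h, by simp⟩
theorem X_L {n : ℕ} {x : Q} (h : X g n x) (c : Bool) (s : ℤ) : X g (n + 1) ((L (g c) ^ s) x) :=
  ⟨c, s, x, h, rfl⟩
theorem Y_R {n : ℕ} {x : Q} (h : Y g n x) (c : Bool) (s : ℤ) : Y g (n + 1) ((R (g c) ^ s) x) :=
  ⟨c, s, x, h, rfl⟩
theorem X_mono {m n : ℕ} (h : m ≤ n) {x : Q} (hx : X g m x) : X g n x := by
  induction h with
  | refl => exact hx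
  | step _ ih => exact X_succ ih
theorem Y_mono {m n : ℕ} (h : m ≤ n) {x : Q} (hx : Y g m x) : Y g n x := by
  induction h with
  | refl => exact hx
  | step _ ih => exact Y_succ ih
theorem A_mono {m n : ℕ} (h : m ≤ n) (hA : A g n) : A g m := fun x hx => hA x (X_mono h hx)

theorem X_iff_Y {n : ℕ} (hA : A g n) : ∀ m, m ≤ n + 1 → ∀ x, X g m x ↔ Y g m x := by
  intro m
  induction m using Nat.strong_induction_on with
  | _ m ih =>
    intro hm x
    match m, ih, hm with
    | 0, _, _ => exact Iff.rfl
    | 1, _, _ =>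
      constructor
      · rintro ⟨c, s, y, rfl, rfl⟩
        rw [pw_L]; exact ⟨c, s, 1, rfl, rfl⟩
      · rintro ⟨c, s, y, rfl, rfl⟩
        exact ⟨c, s, 1, rfl, (pw_L _ _).symm⟩
    | m + 2, ih, hm =>
      have i1 := ih (m + 1) (by omega) (by omega)
      have i0 := ih m (by omega) (by omega)
      have hm' : A g m := A_mono (by omega) hA
      constructor
      · rintro ⟨c, s, y, hy, rfl⟩
        obtain ⟨d, r, w, hw, rfl⟩ := (i1 y).1 hy
        have hw' := (i0 w).2 hw
        rw [hm' w hw']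
        exact Y_R ((i1 _).1 (X_L hw' _ _)) _ _
      · rintro ⟨c, s, y, hy, rfl⟩
        obtain ⟨d, r, w, hw, rfl⟩ := (i1 y).2 hy
        rw [← hm' w hw]
        exact X_L ((i1 _).2 (Y_R ((i0 w).1 hw) _ _)) _ _

theorem gen1 {f p ρ : Equiv.Perm Q} (c : Commute (f * p⁻¹) ρ) {x : Q} (h : p (ρ x) = ρ (p x)) :
    f (ρ x) = ρ (f x) := by
  have := cap c (p x)
  rw [← h] at this
  simpa using this

theorem gen2 {f p ρ : Equiv.Perm Q} (c : Commute (p⁻¹ * f) ρ) {x : Q}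
    (h : p⁻¹ (ρ (f x)) = ρ (p⁻¹ (f x))) : f (ρ x) = ρ (f x) := by
  have := cap c x
  rw [Equiv.Perm.mul_apply, Equiv.Perm.mul_apply, ← h] at this
  exact p⁻¹.injective this

theorem D_eq1 (a b : Q) (s t : ℤ) : pw a s * pw b t = (R b ^ t) (pw a s) := by
  rw [← R_pw]; rfl
theorem D_eq2 (a b : Q) (s t : ℤ) : pw a s * pw b t = (L a ^ s) (pw b t) := by
  rw [← L_pw]; rfl

theorem D_b {n : ℕ} (hA : A g n) (a b : Bool) (s t r : ℤ) {x : Q} (hx : X g n x) :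
    L (pw (g a) s * pw (g b) t) ((R (g b) ^ r) x)
      = (R (g b) ^ r) (L (pw (g a) s * pw (g b) t) x) := by
  have c := (T1 (pw (g a) s) (g b) t).zpow_right r
  rw [← D_eq1] at c
  refine gen1 c ?_
  rw [L_pw]
  exact hA x hx _ _ _ _

theorem D_a {n : ℕ} (hA : A g n) (a b : Bool) (s t r : ℤ) {x : Q}
    (hx : X g n (L (pw (g a) s * pw (g b) t) x)) :
    L (pw (g a) s * pw (g b) t) ((R (g a) ^ r) x)
      = (R (g a) ^ r) (L (pw (g a) s * pw (g b) t) x) := by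
  have c := (T2 (pw (g b) t) (g a) s).zpow_right r
  rw [← D_eq2] at c
  refine gen2 c ?_
  rw [L_pw, ← zpow_neg]
  exact hA _ hx _ _ _ _

theorem same (z : Q) (s r : ℤ) (x : Q) : (L z ^ s) ((R z ^ r) x) = (R z ^ r) ((L z ^ s) x) :=
  cap ((flex z).zpow_zpow s r) x

theorem lemB {m : ℕ} (hA : A g (m + 1)) (a b : Bool) (hab : a ≠ b) (s t : ℤ) :
    ∀ k, k ≤ m → ∀ y, X g k y →
      L (pw (g a) s * pw (g b) t) y = (L (g a) ^ s) ((L (g b) ^ t) y) := by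
  intro k
  induction k with
  | zero =>
    rintro - y rfl
    rw [L_ap, mul_one', pw_L, ← L_pw, L_ap]
  | succ k ih =>
    intro hk y hy
    obtain ⟨d, r, w, hw, rfl⟩ := (X_iff_Y hA (k + 1) (by omega) y).1 hy
    have hwx : X g k w := (X_iff_Y hA k (by omega) w).2 hw
    have hD := ih (by omega) w hwx
    have hbw : X g (m + 1) ((L (g b) ^ t) w) := X_mono (by omega) (X_L hwx b t)
    have hwm : X g (m + 1) w := X_mono (by omega) hwx
    rw [hA w hwm, hA _ hbw, ← hD]
    have hd : d = a ∨ d = b := by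
      cases a <;> cases b <;> cases d <;> simp_all
    rcases hd with rfl | rfl
    · apply D_a hA
      rw [hD]
      exact X_mono (by omega) (X_L (X_L hwx b t) _ s)
    · exact D_b hA _ _ _ _ _ hwm

theorem A_succ {n : ℕ} (hA : A g n) : A g (n + 1) := by
  rintro x ⟨c1, t, T, hT, rfl⟩ a b s r
  by_cases hab : a = b
  · subst hab; exact same _ _ _ _
  have h1 : c1 = a ∨ c1 = b := by
    cases a <;> cases b <;> cases c1 <;> simp_all
  rcases h1 with rfl | rfl
  · rw [← hA T hT, zz, zz, hA T hT]
  rename' c1 => b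
  match n, hA, hT with
  | 0, hA, hT =>
    obtain rfl : T = 1 := hT
    rw [pw_L, pw, zz, hA 1 rfl, hA 1 rfl, zz]
  | m + 1, hA, hT =>
    obtain ⟨e, u, T2, hT2, rfl⟩ := hT
    have h1 : e = a ∨ e = b := by
      cases a <;> cases b <;> cases e <;> simp_all
    rcases h1 with rfl | rfl
    · rename' e => a
      have hA' : A g m := A_mono (by omega) hA
      have hT2' : X g (m + 1) T2 := X_succ hT2
      have q1 := lemB hA a b hab s t m le_rfl T2 hT2
      have q2 : L (pw (g a) s * pw (g b) t) ((R (g b) ^ r) T2)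
          = (L (g a) ^ s) ((L (g b) ^ t) ((R (g b) ^ r) T2)) := by
        rw [D_b hA _ _ _ _ _ hT2', q1, hA T2 hT2', hA _ (X_L hT2 b t)]
      have shift : ∀ v, L (pw (g a) s * pw (g b) t) v = (L (g a) ^ s) ((L (g b) ^ t) v) →
          L (pw (g a) s * pw (g b) t) ((L (g a) ^ u) v)
            = (L (g a) ^ s) ((L (g b) ^ t) ((L (g a) ^ u) v)) := by
        intro v hv
        have c := (T3 v (g a) u).zpow_right s
        rw [← L_pw _ s] at c
        rw [← L_pw _ s, ← L_pw _ t] at hv ⊢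
        exact (ascL c _ hv.symm).symm
      have q1' := shift _ q1
      have q2' := shift _ q2
      rw [hA T2 hT2'] at q2'
      rw [← same, ← q2', ← q1', D_b hA _ _ _ _ _ (X_L hT2 a u)]
    · rw [zz]
      exact hA _ (X_L hT2 _ _) _ _ _ _

theorem A_all (n : ℕ) : A g n := by
  induction n with
  | zero =>
    rintro x rfl c d s r
    rw [pw_L, ← R_pw, ← L_pw, R_ap, L_ap, R_ap, one_mul']
  | succ n ih => exact A_succ ih

variable (g) in
def H (x : Q) : Prop := ∃ n, X g n x

theorem H_iff (x : Q) : H g x ↔ ∃ n, Y g n x := by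
  constructor
  · rintro ⟨n, h⟩; exact ⟨n, (X_iff_Y (A_all n) n (by omega) x).1 h⟩
  · rintro ⟨n, h⟩; exact ⟨n, (X_iff_Y (A_all n) n (by omega) x).2 h⟩

theorem H_L {x : Q} (h : H g x) (c : Bool) (s : ℤ) : H g ((L (g c) ^ s) x) := by
  obtain ⟨n, h⟩ := h; exact ⟨_, X_L h c s⟩
theorem H_R {x : Q} (h : H g x) (c : Bool) (s : ℤ) : H g ((R (g c) ^ s) x) := by
  obtain ⟨n, h⟩ := (H_iff x).1 h; exact (H_iff _).2 ⟨_, Y_R h c s⟩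
theorem H_comm {x : Q} (h : H g x) (c d : Bool) (s r : ℤ) :
    (L (g c) ^ s) ((R (g d) ^ r) x) = (R (g d) ^ r) ((L (g c) ^ s) x) := by
  obtain ⟨n, h⟩ := h; exact A_all n x h c d s r

theorem R_prod (a b : Bool) (hab : a ≠ b) (s t : ℤ) {x : Q} (hx : H g x) :
    R (pw (g b) t * pw (g a) s) x = (R (g a) ^ s) ((R (g b) ^ t) x) := by
  obtain ⟨n, hx⟩ := hx
  induction n generalizing x with
  | zero =>
    obtain rfl : x = 1 := hx
    rw [R_ap, one_mul', D_eq1]; rfl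
  | succ n ih =>
    obtain ⟨c, r, y, hy, rfl⟩ := hx
    have hyH : H g y := ⟨n, hy⟩
    have h0 := ih hy
    rw [← H_comm hyH, ← H_comm (H_R hyH b t), ← h0]
    have h1 : c = a ∨ c = b := by
      cases a <;> cases b <;> cases c <;> simp_all
    rcases h1 with rfl | rfl
    · have k := (T4 (pw (g b) t) (g c) s).zpow_right r
      rw [← D_eq1] at k
      refine gen2 k ?_
      rw [R_pw, ← zpow_neg, H_comm]
      rw [h0]
      exact H_R (H_R hyH _ _) _ _
    · have k := (T3 (pw (g a) s) (g c) t).zpow_right r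
      rw [← D_eq2] at k
      refine gen1 k ?_
      rw [R_pw, H_comm hyH]

variable (g) in
def C (u : Q) : Prop := ∀ x, H g x → H g (L u x) ∧
  ∀ d (r : ℤ), L u ((R (g d) ^ r) x) = (R (g d) ^ r) (L u x)

theorem C_of {u : Q} (hu : H g u)
    (h : ∀ x, H g x → H g (L u x) → ∀ d (r : ℤ), L u ((R (g d) ^ r) x) = (R (g d) ^ r) (L u x)) :
    C g u := by
  suffices hh : ∀ x, H g x → H g (L u x) from fun x hx => ⟨hh x hx, h x hx (hh x hx)⟩
  intro x hx
  obtain ⟨n, hx⟩ := (H_iff x).1 hx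
  induction n generalizing x with
  | zero =>
    obtain rfl : x = 1 := hx
    rwa [L_ap, mul_one']
  | succ n ih =>
    obtain ⟨d, r, y, hy, rfl⟩ := hx
    have hyH : H g y := (H_iff y).2 ⟨n, hy⟩
    rw [h y hyH (ih y hyH hy)]
    exact H_R (ih y hyH hy) _ _

theorem C_all (n : ℕ) : ∀ u, Y g n u → C g u := by
  induction n with
  | zero =>
    rintro u rfl
    intro x hx
    rw [L_one]
    exact ⟨hx, fun _ _ => rfl⟩
  | succ n ih =>
    intro u hu
    have huH : H g u := (H_iff u).2 ⟨_, hu⟩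
    obtain ⟨a, s, u1, hu1, rfl⟩ := hu
    match n, ih, hu1 with
    | 0, ih, hu1 =>
      obtain rfl : u1 = 1 := hu1
      refine C_of huH fun x hx _ d r => ?_
      change L (pw (g a) s) _ = (R (g d) ^ r) (L (pw (g a) s) x)
      rw [L_pw, H_comm hx]
    | n + 1, ih, hu1 =>
      have hC1 := ih u1 hu1
      obtain ⟨b, t, u2, hu2, rfl⟩ := hu1
      by_cases hab : a = b
      · subst hab
        rw [zz]
        exact ih _ (Y_R hu2 _ _)
      have hhu : H g u2 := (H_iff u2).2 ⟨_, hu2⟩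
      refine C_of huH fun x hx hux d r => ?_
      have h1 : d = a ∨ d = b := by
        cases a <;> cases b <;> cases d <;> simp_all
      rcases h1 with rfl | rfl
      · exact gen1 ((T1 ((R (g b) ^ t) u2) (g d) s).zpow_right r) ((hC1 x hx).2 _ _)
      · have hC2 := ih _ (Y_R hu2 d (t - r))
        have hv : H g ((R (g d) ^ (t - r)) u2) := H_R hhu _ _
        have e : (R (g a) ^ s) ((R (g d) ^ t) u2)
            = ((R (g d) ^ (t - r)) u2) * (pw (g d) r * pw (g a) s) := by
          have := R_prod a d hab s r hv
          rw [R_ap] at this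
          rw [this, zz]; congr 3; ring
        rw [e] at hux ⊢
        have k := F1 ((R (g d) ^ (t - r)) u2) (pw (g d) r * pw (g a) s)
        have k2 := gen1 (x := x) k (by
          rw [R_prod a d hab s r hx, R_prod a d hab s r (hC2 x hx).1,
            (hC2 _ (H_R hx _ _)).2, (hC2 x hx).2])
        rw [R_prod a d hab s r hx, R_prod a d hab s r hux, ← e] at k2
        rw [← e]
        have k3 := gen1 ((T1 ((R (g d) ^ t) u2) (g a) s).zpow_right s)
          ((hC1 _ (H_R hx d r)).2 a s)
        rw [k3] at k2
        exact (R (g a) ^ s).injective k2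

theorem H_C {u : Q} (hu : H g u) : C g u := by
  obtain ⟨n, h⟩ := (H_iff u).1 hu; exact C_all n u h

theorem H_mul {x y : Q} (hx : H g x) (hy : H g y) : H g (x * y) := (H_C hx y hy).1

theorem H_inv {x : Q} (hx : H g x) : H g x⁻¹ := by
  obtain ⟨n, hx⟩ := hx
  induction n generalizing x with
  | zero =>
    obtain rfl : x = 1 := hx
    refine ⟨0, ?_⟩
    have := mul_inv (1 : Q)
    rwa [one_mul'] at this
  | succ n ih =>
    obtain ⟨c, s, y, hy, rfl⟩ := hx
    rw [← L_pw, L_ap, mul_inv_rev']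
    change H g (R (pw (g c) s)⁻¹ y⁻¹)
    rw [R_inv, R_pw, ← zpow_neg]
    exact H_R (ih hy) _ _

theorem H_gen (c : Bool) : H g (g c) :=
  ⟨1, c, 1, 1, rfl, by simp [L_ap, mul_one']⟩

theorem H_assoc {u x y : Q} (hu : H g u) (hx : H g x) (hy : H g y) :
    u * (x * y) = (u * x) * y := by
  obtain ⟨n, hy⟩ := (H_iff y).1 hy
  induction n generalizing y with
  | zero =>
    obtain rfl : y = 1 := hy
    rw [mul_one', mul_one']
  | succ n ih =>
    obtain ⟨d, r, y, hy', rfl⟩ := hy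
    have hyH : H g y := (H_iff y).2 ⟨n, hy'⟩
    have i := ih hyH hy'
    change L u (L x _) = L (u * x) _
    rw [(H_C hx y hyH).2, (H_C hu _ (H_C hx y hyH).1).2, (H_C (H_mul hu hx) y hyH).2]
    exact congrArg _ i

end words
end SUFIP


/-- Every semi-universally flexible IP loop is diassociative. -/
theorem suf_ip_diassociative {Q : Type*} (L : LoopStr Q) (inv : Q → Q)
    (lip : ∀ x y, L.mul (inv x) (L.mul x y) = y)
    (rip : ∀ x y, L.mul (L.mul y x) (inv x) = y)
    -- left semi-universal flexibility
    (lsuf : ∀ x y u,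
      L.mul (L.rd x u) (L.mul (L.rd y u) x)
        = L.mul (L.rd (L.mul (L.rd x u) y) u) x)
    -- right semi-universal flexibility
    (rsuf : ∀ x y v,
      L.mul x (L.ld v (L.mul y (L.ld v x)))
        = L.mul (L.mul x (L.ld v y)) (L.ld v x)) :
    ∀ a b : Q, ∀ x y z : Q, Gen L inv a b x → Gen L inv a b y → Gen L inv a b z →
      L.mul x (L.mul y z) = L.mul (L.mul x y) z := by
  have rd : ∀ x u, L.rd x u = L.mul x (inv u) := fun x u => by
    have h := rip u (L.rd x u)
    rw [L.mul_rd] at h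
    exact h.symm
  have ld : ∀ v x, L.ld v x = L.mul (inv v) x := fun v x => by
    have h := lip v (L.ld v x)
    rw [L.mul_ld] at h
    exact h.symm
  have ii : ∀ x, inv (inv x) = x := fun x => by
    have h := lip (inv x) x
    have h2 := lip x L.one
    rw [L.mul_one] at h2
    rwa [h2, L.mul_one] at h
  let inst : SUFIP Q :=
    { mul := L.mul
      one := L.one
      inv := inv
      lip := lip
      rip := rip
      one_mul' := L.one_mul
      mul_one' := L.mul_one
      s1 := fun x y u => by
        have h := lsuf x y (inv u)
        simp only [rd, ii] at h
        exact h
      s2 := fun x y u => by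
        have h := rsuf x y (inv u)
        simp only [ld, ii] at h
        exact h }
  intro a b x y z hx hy hz
  have key : ∀ w, Gen L inv a b w → SUFIP.H (fun c : Bool => if c then a else b) w := by
    intro w hw
    induction hw with
    | mem_a => exact SUFIP.H_gen (g := fun c : Bool => if c then a else b) true
    | mem_b => exact SUFIP.H_gen (g := fun c : Bool => if c then a else b) false
    | mul _ _ h1 h2 => exact SUFIP.H_mul h1 h2
    | inv _ h1 => exact SUFIP.H_inv h1
  exact SUFIP.H_assoc (key x hx) (key y hy) (key z hz)
end

section
/- Let Q be a left semi-universally flexible loop and let a, b, c ∈ Q. Then the following three statements are equivalent: (i) a·(b·c) = (a·b)·c; (ii) (a·b)·(a·c) = a·(b·(a·c)); (iii) (a·b)·(a\c) = a·(b·(a\c)). -/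
/-- In a left semi-universally flexible loop, the three associativity
conditions (i), (ii), (iii) are equivalent. -/
theorem lsuf_assoc_equiv {Q : Type*} (L : LoopStr Q)
    (lsuf : ∀ x y u,
      L.mul (L.rd x u) (L.mul (L.rd y u) x)
        = L.mul (L.rd (L.mul (L.rd x u) y) u) x)
    (a b c : Q) :
    (L.mul a (L.mul b c) = L.mul (L.mul a b) c
      ↔ L.mul (L.mul a b) (L.mul a c) = L.mul a (L.mul b (L.mul a c)))
    ∧ (L.mul (L.mul a b) (L.mul a c) = L.mul a (L.mul b (L.mul a c))
      ↔ L.mul (L.mul a b) (L.ld a c) = L.mul a (L.mul b (L.ld a c))) := by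
  have key : ∀ c, (L.mul a (L.mul b c) = L.mul (L.mul a b) c
      ↔ L.mul (L.mul a b) (L.mul a c) = L.mul a (L.mul b (L.mul a c))) := by
    intro c
    have h := lsuf (L.mul a c) (L.mul b c) c
    rw [L.rd_mul, L.rd_mul] at h
    constructor
    · intro e
      rw [h, e, L.rd_mul]
    · intro e
      rw [h] at e
      have e2 := congrArg (fun t => L.rd t (L.mul a c)) e
      simp only [L.rd_mul] at e2
      rw [e2, L.mul_rd]
  refine ⟨key c, (key c).symm.trans ?_⟩
  have k := key (L.ld a c)
  rw [L.mul_ld] at k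
  exact ⟨fun h => (k.2 h.symm).symm, fun h => (k.1 h.symm).symm⟩
end

section
/- Let Q be a left semi-universally flexible loop. Then for all x, y ∈ Q and all integers n, x·(y·xⁿ) = (x·y)·xⁿ, where the integer powers xⁿ are defined left-associatedly by x⁰ = 1, x^(n+1) = x·xⁿ, and x^(n−1) = x\xⁿ. -/
/-- In a left SUF loop, `x·(y·xⁿ) = (x·y)·xⁿ` for all integers `n`,
where integer powers are defined left-associatedly. -/
theorem lsuf_xyxn {Q : Type*} (L : LoopStr Q)
    (lsuf : ∀ x y u,
      L.mul (L.rd x u) (L.mul (L.rd y u) x)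
        = L.mul (L.rd (L.mul (L.rd x u) y) u) x)
    (pow : Q → ℤ → Q)
    (pow_zero : ∀ x, pow x 0 = L.one)
    (pow_succ : ∀ x (n : ℤ), pow x (n + 1) = L.mul x (pow x n))
    (pow_pred : ∀ x (n : ℤ), pow x (n - 1) = L.ld x (pow x n)) :
    ∀ x y : Q, ∀ n : ℤ,
      L.mul x (L.mul y (pow x n)) = L.mul (L.mul x y) (pow x n) := by
  intro x y n
  have key : ∀ b u, L.mul x (L.mul b (L.mul x u))
      = L.mul (L.rd (L.mul x (L.mul b u)) u) (L.mul x u) := by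
    intro b u
    have h := lsuf (L.mul x u) (L.mul b u) u
    simpa only [L.rd_mul] using h
  induction n using Int.induction_on generalizing y with
  | zero => simp only [pow_zero, L.mul_one]
  | succ i ih => rw [pow_succ, key, ih, L.rd_mul]
  | pred i ih =>
    rw [pow_pred]
    have h := key y (L.ld x (pow x (-(i : ℤ))))
    rw [L.mul_ld, ih] at h
    have h2 := congrArg (fun z => L.rd z (pow x (-(i : ℤ)))) h
    simp only [L.rd_mul] at h2
    rw [h2, L.mul_rd]
end

section
/- Every left semi-universally flexible loop is power-associative: for all x and all integers m, n, one has xᵐ·xⁿ = x^(m+n), where integer powers are defined left-associatedly by x⁰ = 1, x^(n+1) = x·xⁿ, and x^(n−1) = x\xⁿ. -/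
/-- Left SUF loops are power-associative: `xᵐ·xⁿ = x^(m+n)`,
where integer powers are defined left-associatedly. -/
theorem lsuf_power_associative {Q : Type*} (L : LoopStr Q)
    (lsuf : ∀ x y u,
      L.mul (L.rd x u) (L.mul (L.rd y u) x)
        = L.mul (L.rd (L.mul (L.rd x u) y) u) x)
    (pow : Q → ℤ → Q)
    (pow_zero : ∀ x, pow x 0 = L.one)
    (pow_succ : ∀ x (n : ℤ), pow x (n + 1) = L.mul x (pow x n))
    (pow_pred : ∀ x (n : ℤ), pow x (n - 1) = L.ld x (pow x n)) :
    ∀ x : Q, ∀ m n : ℤ, L.mul (pow x m) (pow x n) = pow x (m + n) := by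
  intro x
  -- the left SUF identity in division-free form
  have key : ∀ a b u, L.mul (L.rd (L.mul a (L.mul b u)) u) (L.mul a u)
      = L.mul a (L.mul b (L.mul a u)) := by
    intro a b u
    have h := lsuf (L.mul a u) (L.mul b u) u
    rw [L.rd_mul, L.rd_mul] at h
    exact h.symm
  have const : ∀ f : ℤ → Q, (∀ k, f (k + 1) = f k) → ∀ k, f k = f 0 := by
    intro f hf k
    induction k using Int.induction_on with
    | zero => rfl
    | succ i ih => rw [hf, ih]
    | pred i ih => rw [← ih, ← hf, sub_add_cancel]
  -- if the quotients x^(s+k) / x^k do not depend on k, then x^s x^n = x^(s+n)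
  have fin : ∀ s : ℤ, (∀ k, L.rd (pow x (s + (k + 1))) (pow x (k + 1))
      = L.rd (pow x (s + k)) (pow x k)) →
      ∀ n, L.mul (pow x s) (pow x n) = pow x (s + n) := by
    intro s hs n
    have h := const (fun k => L.rd (pow x (s + k)) (pow x k)) hs n
    have h0 : L.rd (pow x (s + 0)) (pow x 0) = pow x s := by
      have := L.rd_mul L.one (pow x s)
      rw [L.mul_one] at this
      rw [pow_zero, add_zero, this]
    simp only [h0] at h
    rw [← h, L.mul_rd]
  have p1 : ∀ n, L.mul x (pow x n) = pow x (1 + n) := by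
    intro n
    rw [add_comm, pow_succ]
  have e1 : pow x 1 = x := by
    have h := pow_succ x 0
    rw [zero_add, pow_zero, L.mul_one] at h
    exact h
  have pn1 : ∀ n, L.mul (pow x (-1)) (pow x n) = pow x (-1 + n) := by
    apply fin
    intro k
    have h := key x (L.rd (pow x (-1 + k)) (pow x k)) (pow x k)
    have h1 : L.rd (pow x k) (pow x k) = L.one := by
      have := L.rd_mul (pow x k) L.one
      rwa [L.one_mul] at this
    rw [L.mul_rd, p1, show (1 : ℤ) + (-1 + k) = k by ring, h1, L.one_mul, p1] at h
    have h2 := congrArg (L.ld x) h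
    rw [L.ld_mul, ← p1, L.ld_mul, p1, add_comm 1 k] at h2
    have h3 := congrArg (fun z => L.rd z (pow x (k + 1))) h2
    simp only [L.rd_mul] at h3
    rw [show (-1 : ℤ) + (k + 1) = k by ring]
    exact h3
  have step : ∀ i j : ℤ, (∀ n, L.mul (pow x i) (pow x n) = pow x (i + n)) →
      (∀ n, L.mul (pow x j) (pow x n) = pow x (j + n)) →
      ∀ k, L.rd (pow x (i + j + (i + k))) (pow x (i + k))
        = L.rd (pow x (i + j + k)) (pow x k) := by
    intro i j hi hj k
    have h := key (pow x i) (pow x j) (pow x k)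
    simp only [hi, hj] at h
    rw [show i + j + (i + k) = i + (j + (i + k)) by ring, ← h, L.rd_mul, add_assoc]
  intro m
  induction m using Int.induction_on with
  | zero => intro n; rw [pow_zero, L.one_mul, zero_add]
  | succ i ih =>
    apply fin
    intro k
    have h := step 1 i (by rw [e1]; exact p1) ih k
    rwa [add_comm 1 k, add_comm 1 (i : ℤ)] at h
  | pred i ih =>
    apply fin
    intro k
    have h := step (-1) (-i) pn1 ih (k + 1)
    rw [show (-1 : ℤ) + (k + 1) = k by ring, show (-1 : ℤ) + -i = -i - 1 by ring] at h
    exact h.symm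
end

section
/- Let Q be a semi-universally flexible loop. Then for all x, y ∈ Q and all integers m, n, xᵐ·(y·xⁿ) = (xᵐ·y)·xⁿ, where integer powers are defined left-associatedly by x⁰ = 1, x^(n+1) = x·xⁿ, and x^(n−1) = x\xⁿ. -/
/-- In an SUF loop, `xᵐ·(y·xⁿ) = (xᵐ·y)·xⁿ` for all integers `m, n`,
where integer powers are defined left-associatedly. -/
theorem suf_pow_comm {Q : Type*} (L : LoopStr Q)
    (lsuf : ∀ x y u,
      L.mul (L.rd x u) (L.mul (L.rd y u) x)
        = L.mul (L.rd (L.mul (L.rd x u) y) u) x)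
    (rsuf : ∀ x y v,
      L.mul x (L.ld v (L.mul y (L.ld v x)))
        = L.mul (L.mul x (L.ld v y)) (L.ld v x))
    (pow : Q → ℤ → Q)
    (pow_zero : ∀ x, pow x 0 = L.one)
    (pow_succ : ∀ x (n : ℤ), pow x (n + 1) = L.mul x (pow x n))
    (pow_pred : ∀ x (n : ℤ), pow x (n - 1) = L.ld x (pow x n)) :
    ∀ x y : Q, ∀ m n : ℤ,
      L.mul (pow x m) (L.mul y (pow x n))
        = L.mul (L.mul (pow x m) y) (pow x n) := by
  have lc : ∀ a b c, L.mul a b = L.mul a c → b = c := fun a b c h => by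
    rw [← L.ld_mul a b, h, L.ld_mul]
  have rc : ∀ a b c, L.mul b a = L.mul c a → b = c := fun a b c h => by
    rw [← L.rd_mul a b, h, L.rd_mul]
  -- translation forms of the two identities
  have l1 : ∀ a b u, L.mul a (L.mul b (L.mul a u))
      = L.mul (L.rd (L.mul a (L.mul b u)) u) (L.mul a u) := fun a b u => by
    have h := lsuf (L.mul a u) (L.mul b u) u
    rwa [L.rd_mul, L.rd_mul] at h
  have r1 : ∀ v b c, L.mul (L.mul v b) (L.ld v (L.mul (L.mul v c) b))
      = L.mul (L.mul (L.mul v b) c) b := fun v b c => by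
    have h := rsuf (L.mul v b) (L.mul v c) v
    rwa [L.ld_mul, L.ld_mul] at h
  let C : Q → Q → Prop := fun a w => ∀ y, L.mul a (L.mul y w) = L.mul (L.mul a y) w
  have hA : ∀ a u, C a u ↔ C a (L.mul a u) := fun a u => by
    constructor
    · intro h y
      rw [l1, h, L.rd_mul]
    · intro h y
      have h1 := h y
      rw [l1] at h1
      rw [← rc _ _ _ h1, L.mul_rd]
  have hB : ∀ v b, C v b ↔ C (L.mul v b) b := fun v b => by
    constructor
    · intro h y
      rw [← r1, ← h, L.ld_mul]
    · intro h y
      have h1 := h y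
      rw [← r1] at h1
      rw [lc _ _ _ h1, L.mul_ld]
  have c_one : ∀ a, C a L.one := fun a y => by rw [L.mul_one, L.mul_one]
  have one_c : ∀ a, C L.one a := fun a y => by rw [L.one_mul, L.one_mul]
  intro x
  have hx : ∀ n : ℤ, C x (pow x n) := by
    intro n
    induction n using Int.induction_on with
    | zero => rw [pow_zero]; exact c_one x
    | succ i ih => rw [pow_succ]; exact (hA _ _).1 ih
    | pred i ih =>
      refine (hA _ _).2 ?_
      rw [← pow_succ, sub_add_cancel]
      exact ih
  have padd : ∀ n m : ℤ, L.mul (pow x m) (pow x n) = pow x (m + n) := by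
    intro n m
    induction m using Int.induction_on with
    | zero => rw [pow_zero, L.one_mul, zero_add]
    | succ i ih => rw [pow_succ, ← hx n, ih, ← pow_succ]; congr 1; ring
    | pred i ih =>
      apply lc x
      rw [hx n, ← pow_succ, ← pow_succ, sub_add_cancel, ih]
      congr 1; ring
  have sA : ∀ m n : ℤ, C (pow x m) (pow x n) ↔ C (pow x m) (pow x (m + n)) := fun m n => by
    rw [← padd]; exact hA _ _
  have sB : ∀ m n : ℤ, C (pow x m) (pow x n) ↔ C (pow x (m + n)) (pow x n) := fun m n => by
    rw [← padd]; exact hB _ _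
  -- Euclidean algorithm on the exponents
  have key : ∀ k : ℕ, ∀ m n : ℤ, m.natAbs + n.natAbs ≤ k → C (pow x m) (pow x n) := by
    intro k
    induction k with
    | zero =>
      intro m n h
      have : m = 0 := by omega
      rw [this, pow_zero]; exact one_c _
    | succ k ih =>
      intro m n h
      by_cases hm : m = 0
      · rw [hm, pow_zero]; exact one_c _
      by_cases hn : n = 0
      · rw [hn, pow_zero]; exact c_one _
      have hcases : m.natAbs + (m + n).natAbs ≤ k ∨ m.natAbs + (n - m).natAbs ≤ k ∨
          (m + n).natAbs + n.natAbs ≤ k ∨ (m - n).natAbs + n.natAbs ≤ k := by omega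
      rcases hcases with h | h | h | h
      · exact (sA m n).2 (ih _ _ h)
      · have h2 := (sA m (n - m)).1 (ih _ _ h)
        rwa [add_sub_cancel] at h2
      · exact (sB m n).2 (ih _ _ h)
      · have h2 := (sB (m - n) n).1 (ih _ _ h)
        rwa [sub_add_cancel] at h2
  intro y m n
  exact key _ m n le_rfl y
end

section
/- Let Q be a semi-universally flexible loop and a, b, c ∈ Q. Then the following five statements are equivalent: (i) (a·b)·c = a·(b·c); (ii) (a·b)·(a·c) = a·(b·(a·c)); (iii) ((a·c)·b)·c = (a·c)·(b·c); (iv) (a·b)·(a\c) = a·(b·(a\c)); (v) ((a/c)·b)·c = (a/c)·(b·c). -/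
/-- In an SUF loop, five associativity conditions are equivalent. -/
theorem suf_assoc_tfae {Q : Type*} (L : LoopStr Q)
    (lsuf : ∀ x y u,
      L.mul (L.rd x u) (L.mul (L.rd y u) x)
        = L.mul (L.rd (L.mul (L.rd x u) y) u) x)
    (rsuf : ∀ x y v,
      L.mul x (L.ld v (L.mul y (L.ld v x)))
        = L.mul (L.mul x (L.ld v y)) (L.ld v x))
    (a b c : Q) :
    [L.mul (L.mul a b) c = L.mul a (L.mul b c),
     L.mul (L.mul a b) (L.mul a c) = L.mul a (L.mul b (L.mul a c)),
     L.mul (L.mul (L.mul a c) b) c = L.mul (L.mul a c) (L.mul b c),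
     L.mul (L.mul a b) (L.ld a c) = L.mul a (L.mul b (L.ld a c)),
     L.mul (L.mul (L.rd a c) b) c = L.mul (L.rd a c) (L.mul b c)].TFAE := by
  have hl : ∀ a b c, L.mul (L.mul a b) c = L.mul a (L.mul b c) ↔
      L.mul (L.mul a b) (L.mul a c) = L.mul a (L.mul b (L.mul a c)) := by
    intro a b c
    have h := lsuf (L.mul a c) (L.mul b c) c
    rw [L.rd_mul, L.rd_mul] at h
    rw [h]
    constructor
    · intro e
      rw [← e, L.rd_mul]
    · intro e
      have e2 := congrArg (fun t => L.rd t (L.mul a c)) e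
      simp only [L.rd_mul] at e2
      rw [e2, L.mul_rd]
  have hr : ∀ a b c, L.mul (L.mul a b) c = L.mul a (L.mul b c) ↔
      L.mul (L.mul (L.mul a c) b) c = L.mul (L.mul a c) (L.mul b c) := by
    intro a b c
    have h := rsuf (L.mul a c) (L.mul a b) a
    rw [L.ld_mul, L.ld_mul] at h
    rw [← h]
    constructor
    · intro e
      rw [e, L.ld_mul]
    · intro e
      have e2 := congrArg (fun t => L.ld (L.mul a c) t) e
      simp only [L.ld_mul] at e2
      rw [← e2, L.mul_ld]
  tfae_have 1 ↔ 2 := hl a b c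
  tfae_have 1 ↔ 3 := hr a b c
  tfae_have 4 ↔ 1 := by
    have h := hl a b (L.ld a c)
    rwa [L.mul_ld] at h
  tfae_have 5 ↔ 1 := by
    have h := hr (L.rd a c) b c
    rwa [L.mul_rd] at h
  tfae_finish
end

section
/- A loop Q with a two-sided inverse map x ↦ x⁻¹ (i.e., 1/x = x\1 = x⁻¹ for all x) satisfies the identity x·(v·(y·(v·x))) = (x·(v·y))·(v·x) for all x, y, v if and only if Q has the left inverse property (x⁻¹·(x·y) = y for all x, y) and every isotope of the form x∘y = x·(v\y) is flexible, i.e., x·(v\(y·(v\x))) = (x·(v\y))·(v\x) for all x, y, v. -/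
/-- A loop with a two-sided inverse satisfies
`x·(v·(y·(v·x))) = (x·(v·y))·(v·x)` iff it has the left inverse property and
every isotope `x ∘ y = x·(v\y)` is flexible. -/
theorem rsuf_lip_equiv {Q : Type*} (L : LoopStr Q) (inv : Q → Q)
    (hinv : ∀ x, L.rd L.one x = inv x ∧ L.ld x L.one = inv x) :
    (∀ x y v, L.mul x (L.mul v (L.mul y (L.mul v x)))
        = L.mul (L.mul x (L.mul v y)) (L.mul v x))
    ↔ ((∀ x y, L.mul (inv x) (L.mul x y) = y)
        ∧ (∀ x y v, L.mul x (L.ld v (L.mul y (L.ld v x)))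
            = L.mul (L.mul x (L.ld v y)) (L.ld v x))) := by
  have h1 : ∀ x, L.mul (inv x) x = L.one := fun x => by
    rw [← (hinv x).1]; exact L.mul_rd _ _
  have h2 : ∀ x, L.mul x (inv x) = L.one := fun x => by
    rw [← (hinv x).2]; exact L.mul_ld _ _
  have hcanc : ∀ x a b, L.mul x a = L.mul x b → a = b := fun x a b h => by
    rw [← L.ld_mul x a, h, L.ld_mul]
  have hii : ∀ x, inv (inv x) = x := fun x =>
    hcanc (inv x) _ _ (by rw [h1, h2])
  have hld : (∀ x y, L.mul (inv x) (L.mul x y) = y) →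
      ∀ x y, L.ld x y = L.mul (inv x) y := fun hl x y => by
    have h := hl x (L.ld x y)
    rw [L.mul_ld] at h
    exact h.symm
  constructor
  · intro h
    have hl : ∀ x y, L.mul (inv x) (L.mul x y) = y := fun v x => by
      have e := h x (inv v) v
      rw [h2, L.mul_one] at e
      exact hcanc _ _ _ (hcanc _ _ _ e)
    refine ⟨hl, fun x y v => ?_⟩
    simp only [hld hl]
    exact h x y (inv v)
  · rintro ⟨hl, h⟩ x y v
    have e := h x y (inv v)
    simp only [hld hl, hii] at e
    exact e
end

section
/- A loop Q with a two-sided inverse map x ↦ x⁻¹ (i.e., 1/x = x\1 = x⁻¹ for all x) satisfies the identity (x·u)·((y·u)·x) = (((x·u)·y)·u)·x for all x, y, u if and only if Q has the right inverse property ((y·x)·x⁻¹ = y for all x, y) and every isotope of the form x∘y = (x/u)·y is flexible, i.e., (x/u)·((y/u)·x) = (((x/u)·y)/u)·x for all x, y, u. -/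
/-- A loop with a two-sided inverse satisfies
`(x·u)·((y·u)·x) = (((x·u)·y)·u)·x` iff it has the right inverse property and
every isotope `x ∘ y = (x/u)·y` is flexible. -/
theorem lsuf_rip_equiv {Q : Type*} (L : LoopStr Q) (inv : Q → Q)
    (hinv : ∀ x, L.rd L.one x = inv x ∧ L.ld x L.one = inv x) :
    (∀ x y u, L.mul (L.mul x u) (L.mul (L.mul y u) x)
        = L.mul (L.mul (L.mul (L.mul x u) y) u) x)
    ↔ ((∀ x y, L.mul (L.mul y x) (inv x) = y)
        ∧ (∀ x y u, L.mul (L.rd x u) (L.mul (L.rd y u) x)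
            = L.mul (L.rd (L.mul (L.rd x u) y) u) x)) := by
  have hl : ∀ x, L.mul (inv x) x = L.one := fun x => by
    rw [← (hinv x).1]; exact L.mul_rd x L.one
  have hr : ∀ x, L.mul x (inv x) = L.one := fun x => by
    rw [← (hinv x).2]; exact L.mul_ld x L.one
  have hii : ∀ x, inv (inv x) = x := fun x => by
    rw [← (hinv (inv x)).1, ← hr x]; exact L.rd_mul _ _
  have hrc : ∀ a b x, L.mul a x = L.mul b x → a = b := fun a b x h => by
    rw [← L.rd_mul x a, h, L.rd_mul]
  have hrd : (∀ x y, L.mul (L.mul y x) (inv x) = y) →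
      ∀ x u, L.rd x u = L.mul x (inv u) := fun h x u => by
    have := h u (L.rd x u)
    rw [L.mul_rd] at this
    exact this.symm
  constructor
  · intro h
    have key : ∀ z u, L.mul (L.mul z (inv u)) u = z := fun z u => by
      have h1 := h (L.rd z u) (inv u) u
      rw [L.mul_rd, hl, L.one_mul] at h1
      exact (hrc _ _ _ h1).symm
    have rip : ∀ x y, L.mul (L.mul y x) (inv x) = y := fun x y => by
      have := key y (inv x)
      rwa [hii] at this
    refine ⟨rip, fun x y u => ?_⟩
    simp only [hrd rip]
    exact h x y (inv u)
  · rintro ⟨rip, h⟩ x y u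
    have := h x y (inv u)
    simpa only [hrd rip, hii] using this
end

section
/- Every semi-universally flexible loop with the inverse property is alternative: if Q is an SUF IP loop, then x·(x·y) = (x·x)·y and (x·y)·y = x·(y·y) for all x, y ∈ Q. -/
theorem core_alt {Q : Type*} (m : Q → Q → Q) (i : Q → Q) (e : Q)
    (e0 : ∀ x y, m (i x) (m x y) = y) (e1 : ∀ x y, m (m y x) (i x) = y)
    (e2 : ∀ x, m e x = x) (e3 : ∀ x, m x e = x) (e4 : ∀ x, i (i x) = x)
    (e5 : ∀ x y, i (m x y) = m (i y) (i x))
    (e6 : ∀ x y, m (m x y) x = m x (m y x))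
    (e7 : ∀ x y u, m (m (m (m x u) y) u) x = m (m x u) (m (m y u) x))
    (e8 : ∀ x y u, m x (m u (m y (m u x))) = m (m x (m u y)) (m u x)) :
    ∀ c d, m c (m c d) = m (m c c) d := by
  intro c d
  have e9 : ∀ x0 x1, (m (i x0) (m x0 x1)) = x1 := fun x0 x1 =>
    (e0 x0 x1)
  have e10 : ∀ x0 x1, (m (m x0 x1) (i x1)) = x0 := fun x0 x1 =>
    (e1 x1 x0)
  have e11 : ∀ x0, (m e x0) = x0 := fun x0 =>
    (e2 x0)
  have e12 : ∀ x0, (m x0 e) = x0 := fun x0 =>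
    (e3 x0)
  have e13 : ∀ x0, (i (i x0)) = x0 := fun x0 =>
    (e4 x0)
  have e15 : ∀ x0 x1, (m (m x0 x1) x0) = (m x0 (m x1 x0)) := fun x0 x1 =>
    (e6 x0 x1)
  have e16 : ∀ x0 x1 x2, (m (m (m (m x0 x1) x2) x1) x0) = (m (m x0 x1) (m (m x2 x1) x0)) := fun x0 x1 x2 =>
    (e7 x0 x2 x1)
  have e17 : ∀ x0 x1 x2, (m (m x0 (m x1 x2)) (m x1 x0)) = (m x0 (m x1 (m x2 (m x1 x0)))) := fun x0 x1 x2 =>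
    (e8 x0 x2 x1).symm
  have e24 : ∀ x0 x1, (m (m x0 (i x1)) x1) = x0 := fun x0 x1 =>
    ((congrArg (fun z => (m (m x0 (i x1)) z)) (e13 x1).symm)).trans
      (e10 x0 (i x1))
  have e30 : ∀ x0 x1, (m (m x0 (m x1 x0)) (i x0)) = (m x0 x1) := fun x0 x1 =>
    ((congrArg (fun z => (m z (i x0))) (e15 x0 x1).symm)).trans
      (e10 (m x0 x1) x0)
  have e39 : ∀ x0 x1, (m (m x0 x1) (i x0)) = (m x0 (m x1 (i x0))) := fun x0 x1 =>
    ((congrArg (fun z => (m (m x0 z) (i x0))) (e24 x1 x0).symm)).trans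
      (e30 x0 (m x1 (i x0)))
  have e46 : ∀ x0 x1, (m (m (m x0 x1) x1) x0) = (m (m x0 x1) (m x1 x0)) := fun x0 x1 =>
    (((congrArg (fun z => (m (m z x1) x0)) (e12 (m x0 x1)).symm)).trans
      (e16 x0 x1 e)).trans
      (congrArg (fun z => (m (m x0 x1) (m z x0))) (e11 x1))
  have e47 : ∀ x0 x1, (m (m x0 x1) (m x1 x0)) = (m x0 (m x1 (m x1 x0))) := fun x0 x1 =>
    (((congrArg (fun z => (m (m x0 z) (m x1 x0))) (e12 x1).symm)).trans
      (e17 x0 x1 e)).trans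
      (congrArg (fun z => (m x0 (m x1 z))) (e11 (m x1 x0)))
  have e54 : ∀ x0 x1, (m (m (m x0 x1) x1) x0) = (m x0 (m x1 (m x1 x0))) := fun x0 x1 =>
    ((e46 x0 x1)).trans
      (e47 x0 x1)
  have e95 : ∀ x0 x1, (m (m x0 (m x1 x0)) (i x1)) = (m x0 (m x1 (m x0 (i x1)))) := fun x0 x1 =>
    ((((congrArg (fun z => (m (m z (m x1 x0)) (i x1))) (e9 x1 x0).symm)).trans
      (e46 (i x1) (m x1 x0))).trans
      (congrArg (fun z => (m z (m (m x1 x0) (i x1)))) (e9 x1 x0))).trans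
      (congrArg (fun z => (m x0 z)) (e39 x1 x0))
  have e96 : ∀ x0 x1, (m (m x0 (m x1 (m x0 (i x1)))) x1) = (m x0 (m x1 x0)) := fun x0 x1 =>
    (((congrArg (fun z => (m (m x0 (m x1 (m x0 (i x1)))) z)) (e13 x1).symm)).trans
      (congrArg (fun z => (m z (i (i x1)))) (e95 x0 x1).symm)).trans
      (e10 (m x0 (m x1 x0)) (i x1))
  have e99 : ∀ x0 x1, (m (m x0 x1) (m x0 (i x1))) = (m x0 (m x1 (m x0 (i x1)))) := fun x0 x1 =>
    (((congrArg (fun z => (m (m z x1) (m x0 (i x1)))) (e24 x0 x1).symm)).trans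
      (e46 (m x0 (i x1)) x1)).trans
      (congrArg (fun z => (m z (m x1 (m x0 (i x1))))) (e24 x0 x1))
  have e100 : ∀ x0 x1, (m (m x0 x1) (m x0 x0)) = (m x0 (m (m x1 x0) x0)) := fun x0 x1 =>
    (((((congrArg (fun z => (m (m x0 x1) (m z x0))) (e24 x0 x1).symm)).trans
      (e16 x0 x1 (m x0 (i x1))).symm).trans
      (congrArg (fun z => (m (m z x1) x0)) (e99 x0 x1))).trans
      (congrArg (fun z => (m z x0)) (e96 x0 x1))).trans
      (e15 x0 (m x1 x0))
  have e102 : ∀ x0 x1, (m (m x0 x1) x1) = (m x0 (m x1 x1)) := fun x0 x1 =>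
    ((((((((e0 x1 (m (m x0 x1) x1)).symm).trans
      (congrArg (fun z => (m (i x1) z)) (e0 x1 (m x1 (m (m x0 x1) x1))).symm)).trans
      (congrArg (fun z => (m (i x1) (m (i x1) (m x1 z)))) (e15 x1 (m x0 x1)).symm)).trans
      (congrArg (fun z => (m (i x1) (m (i x1) (m x1 (m z x1))))) (e15 x1 x0).symm)).trans
      (congrArg (fun z => (m (i x1) (m (i x1) z))) (e100 x1 (m x1 x0)).symm)).trans
      (congrArg (fun z => (m (i x1) (m (i x1) z))) (e17 x1 x1 x0))).trans
      (congrArg (fun z => (m (i x1) z)) (e0 x1 (m x1 (m x0 (m x1 x1)))))).trans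
      (e0 x1 (m x0 (m x1 x1)))
  have e103 : ∀ x0 x1, (m (m x0 x0) x1) = (m x0 (m x0 x1)) := fun x0 x1 =>
    (((((e0 x1 (m (m x0 x0) x1)).symm).trans
      (congrArg (fun z => (m (i x1) z)) (e15 x1 (m x0 x0)).symm)).trans
      (congrArg (fun z => (m (i x1) (m z x1))) (e102 x1 x0).symm)).trans
      (congrArg (fun z => (m (i x1) z)) (e54 x1 x0))).trans
      (e0 x1 (m x0 (m x0 x1)))
  have e104 :  (m c (m c d)) = (m (m c c) d) :=
    (e103 c d).symm
  exact e104

/-- Every semi-universally flexible IP loop is alternative. -/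
theorem suf_ip_alternative {Q : Type*} (L : LoopStr Q) (inv : Q → Q)
    (lip : ∀ x y, L.mul (inv x) (L.mul x y) = y)
    (rip : ∀ x y, L.mul (L.mul y x) (inv x) = y)
    (lsuf : ∀ x y u,
      L.mul (L.rd x u) (L.mul (L.rd y u) x)
        = L.mul (L.rd (L.mul (L.rd x u) y) u) x)
    (rsuf : ∀ x y v,
      L.mul x (L.ld v (L.mul y (L.ld v x)))
        = L.mul (L.mul x (L.ld v y)) (L.ld v x)) :
    ∀ x y, L.mul x (L.mul x y) = L.mul (L.mul x x) y
      ∧ L.mul (L.mul x y) y = L.mul x (L.mul y y) := by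
  have inv_r : ∀ x, L.mul x (inv x) = L.one := fun x => by
    have h := rip x L.one
    rwa [L.one_mul] at h
  have inv_l : ∀ x, L.mul (inv x) x = L.one := fun x => by
    have h := lip x L.one
    rwa [L.mul_one] at h
  have inv_inv : ∀ x, inv (inv x) = x := fun x => by
    have h := lip (inv x) x
    rwa [inv_l, L.mul_one] at h
  have lip2 : ∀ x y, L.mul x (L.mul (inv x) y) = y := fun x y => by
    have h := lip (inv x) y
    rwa [inv_inv] at h
  have rip2 : ∀ x y, L.mul (L.mul y (inv x)) x = y := fun x y => by
    have h := rip (inv x) y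
    rwa [inv_inv] at h
  have hld : ∀ x y, L.ld x y = L.mul (inv x) y := fun x y => by
    have h := L.ld_mul x (L.mul (inv x) y)
    rwa [lip2] at h
  have hrd : ∀ y x, L.rd y x = L.mul y (inv x) := fun y x => by
    have h := L.rd_mul x (L.mul y (inv x))
    rwa [rip2] at h
  have inv_mul : ∀ x y, inv (L.mul x y) = L.mul (inv y) (inv x) := fun x y => by
    have h1 : L.mul y (inv (L.mul x y)) = inv x := by
      have h := lip x (L.mul y (inv (L.mul x y)))
      have h2 := rip (L.mul x y) (inv x)
      rwa [lip] at h2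
    have h3 := lip y (inv (L.mul x y))
    rw [h1] at h3
    exact h3.symm
  have e7 : ∀ x y u, L.mul (L.mul (L.mul (L.mul x u) y) u) x
      = L.mul (L.mul x u) (L.mul (L.mul y u) x) := fun x y u => by
    have h := lsuf x y (inv u)
    simp only [hrd, inv_inv] at h
    exact h.symm
  have e8 : ∀ x y u, L.mul x (L.mul u (L.mul y (L.mul u x)))
      = L.mul (L.mul x (L.mul u y)) (L.mul u x) := fun x y u => by
    have h := rsuf x y (inv u)
    simp only [hld, inv_inv] at h
    exact h
  have e6 : ∀ x y, L.mul (L.mul x y) x = L.mul x (L.mul y x) := fun x y => by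
    have h := e7 x y L.one
    simpa only [L.mul_one] using h
  have key := core_alt L.mul inv L.one lip rip L.one_mul L.mul_one inv_inv inv_mul e6 e7 e8
  intro x y
  refine ⟨key x y, ?_⟩
  have h := congrArg inv (key (inv y) (inv x))
  simp only [inv_mul, inv_inv] at h
  exact h
end

section
/- A loop Q with a two-sided inverse map x ↦ x⁻¹ (i.e., 1/x = x\1 = x⁻¹ for all x) satisfies the identity (x·u)·(v·((y·u)·(v·x))) = (((x·u)·(v·y))·u)·(v·x) for all x, y, u, v if and only if Q is a universally flexible loop with the inverse property (x⁻¹·(x·y)=y and (y·x)·x⁻¹=y for all x,y). -/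
/-- A loop with a two-sided inverse satisfies
`(x·u)·(v·((y·u)·(v·x))) = (((x·u)·(v·y))·u)·(v·x)` iff it is a universally
flexible loop with the inverse property. -/
theorem uf_ip_equiv {Q : Type*} (L : LoopStr Q) (inv : Q → Q)
    (hinv : ∀ x, L.rd L.one x = inv x ∧ L.ld x L.one = inv x) :
    (∀ x y u v,
      L.mul (L.mul x u) (L.mul v (L.mul (L.mul y u) (L.mul v x)))
        = L.mul (L.mul (L.mul (L.mul x u) (L.mul v y)) u) (L.mul v x))
    ↔ ((∀ x y u v,
          L.mul (L.rd x u) (L.ld v (L.mul (L.rd y u) (L.ld v x)))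
            = L.mul (L.rd (L.mul (L.rd x u) (L.ld v y)) u) (L.ld v x))
        ∧ (∀ x y, L.mul (inv x) (L.mul x y) = y)
        ∧ (∀ x y, L.mul (L.mul y x) (inv x) = y)) := by
  have cl : ∀ a b c, L.mul a b = L.mul a c → b = c := fun a b c h => by
    rw [← L.ld_mul a b, h, L.ld_mul]
  have cr : ∀ a b c, L.mul b a = L.mul c a → b = c := fun a b c h => by
    rw [← L.rd_mul a b, h, L.rd_mul]
  have il : ∀ x, L.mul (inv x) x = L.one := fun x => by rw [← (hinv x).1, L.mul_rd]
  have ir : ∀ x, L.mul x (inv x) = L.one := fun x => by rw [← (hinv x).2, L.mul_ld]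
  have ii : ∀ x, inv (inv x) = x := fun x => cl (inv x) _ _ (by rw [ir, il])
  have hld : (∀ x y, L.mul (inv x) (L.mul x y) = y) → ∀ x y, L.ld x y = L.mul (inv x) y :=
    fun h x y => by
      have := h x (L.ld x y)
      rw [L.mul_ld] at this
      exact this.symm
  have hrd : (∀ x y, L.mul (L.mul y x) (inv x) = y) → ∀ x y, L.rd y x = L.mul y (inv x) :=
    fun h x y => by
      have := h x (L.rd y x)
      rw [L.mul_rd] at this
      exact this.symm
  constructor
  · intro H
    have lip' : ∀ v w, L.mul v (L.mul (inv v) w) = w := fun v w => by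
      have h := H (L.ld v w) (inv v) L.one v
      simp only [L.mul_one, L.mul_ld, ir] at h
      exact cl _ _ _ h
    have rip' : ∀ u z, L.mul (L.mul z (inv u)) u = z := fun u z => by
      have h := H (L.rd z u) (inv u) u L.one
      simp only [L.one_mul, L.mul_rd, il] at h
      exact (cr _ _ _ h).symm
    have lip : ∀ x y, L.mul (inv x) (L.mul x y) = y := fun x y => by
      have := lip' (inv x) y
      rwa [ii] at this
    have rip : ∀ x y, L.mul (L.mul y x) (inv x) = y := fun x y => by
      have := rip' (inv x) y
      rwa [ii] at this
    refine ⟨fun x y u v => ?_, lip, rip⟩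
    simp only [hld lip, hrd rip]
    exact H x y (inv u) (inv v)
  · rintro ⟨H, lip, rip⟩ x y u v
    have h := H x y (inv u) (inv v)
    simp only [hld lip, hrd rip, ii] at h
    exact h
end

section
/- In every universally flexible loop with the inverse property, the identity (u·(y·x⁻¹))·x = (u·(y·(u⁻¹·x⁻¹)))·(x·u) holds for all u, x, y. -/
/-- In every universally flexible IP loop,
`(u·(y·x⁻¹))·x = (u·(y·(u⁻¹·x⁻¹)))·(x·u)`. -/
theorem uf_ip_identity {Q : Type*} (L : LoopStr Q) (inv : Q → Q)
    (lip : ∀ x y, L.mul (inv x) (L.mul x y) = y)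
    (rip : ∀ x y, L.mul (L.mul y x) (inv x) = y)
    (uf : ∀ x y u v,
      L.mul (L.rd x u) (L.ld v (L.mul (L.rd y u) (L.ld v x)))
        = L.mul (L.rd (L.mul (L.rd x u) (L.ld v y)) u) (L.ld v x)) :
    ∀ u x y, L.mul (L.mul u (L.mul y (inv x))) x
      = L.mul (L.mul u (L.mul y (L.mul (inv u) (inv x)))) (L.mul x u) := by
  intro u x y
  have m1 : ∀ z, L.mul (inv z) z = L.one := fun z => by
    have := lip z L.one; rwa [L.mul_one] at this
  have m2 : ∀ z, inv (inv z) = z := fun z => by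
    have := lip (inv z) z; rwa [m1, L.mul_one] at this
  have lip2 : ∀ a b, L.mul a (L.mul (inv a) b) = b := fun a b => by
    have := lip (inv a) b; rwa [m2] at this
  have rip2 : ∀ a b, L.mul (L.mul b (inv a)) a = b := fun a b => by
    have := rip (inv a) b; rwa [m2] at this
  have hrd : ∀ a b, L.rd a b = L.mul a (inv b) := fun a b => by
    have := rip b (L.rd a b); rw [L.mul_rd] at this; exact this.symm
  have hld : ∀ a, L.ld L.one a = a := fun a => by
    have := L.ld_mul L.one a; rwa [L.one_mul] at this
  -- flexibility of the isotopes with `v = 1`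
  have key : ∀ a b c, L.mul (L.mul a b) (L.mul (L.mul c b) a)
      = L.mul (L.mul (L.mul (L.mul a b) c) b) a := fun a b c => by
    have := uf a c (inv b) L.one
    simpa only [hrd, hld, m2] using this
  -- antiautomorphic inverse property
  have aaip : ∀ a b, inv (L.mul a b) = L.mul (inv b) (inv a) := fun a b => by
    have h1 := rip (L.mul a b) (inv a)
    rw [lip] at h1
    have h2 := lip b (inv (L.mul a b))
    rw [h1] at h2
    exact h2.symm
  have h := key (inv x) (L.mul x u) (L.mul y (inv (L.mul x u)))
  rw [lip, rip2, aaip] at h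
  rw [h, rip2]
end

section
/- An IP loop Q is flexible and alternative if and only if it satisfies the condition H(3): for all a, b ∈ Q and all x, y, z belonging to the set {1, a, a⁻¹, b, b⁻¹}, one has x·(y·z) = (x·y)·z. -/
/-- An IP loop is flexible and alternative iff it satisfies `H(3)`. -/
theorem flex_alt_iff_H3 {Q : Type*} (L : LoopStr Q) (inv : Q → Q)
    (lip : ∀ x y, L.mul (inv x) (L.mul x y) = y)
    (rip : ∀ x y, L.mul (L.mul y x) (inv x) = y) :
    ((∀ x y, L.mul x (L.mul y x) = L.mul (L.mul x y) x)
      ∧ (∀ x y, L.mul x (L.mul x y) = L.mul (L.mul x x) y)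
      ∧ (∀ x y, L.mul (L.mul x y) y = L.mul x (L.mul y y)))
    ↔ (∀ a b : Q, ∀ x y z : Q,
        x ∈ ({L.one, a, inv a, b, inv b} : Set Q) →
        y ∈ ({L.one, a, inv a, b, inv b} : Set Q) →
        z ∈ ({L.one, a, inv a, b, inv b} : Set Q) →
        L.mul x (L.mul y z) = L.mul (L.mul x y) z) := by
  have inv_mul : ∀ x, L.mul (inv x) x = L.one := fun x => by
    have := lip x L.one
    rwa [L.mul_one] at this
  have mul_inv : ∀ x, L.mul x (inv x) = L.one := fun x => by
    have := rip x L.one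
    rwa [L.one_mul] at this
  have inv_inv : ∀ x, inv (inv x) = x := fun x => by
    have := lip (inv x) x
    rwa [inv_mul, L.mul_one] at this
  have lip' : ∀ x y, L.mul x (L.mul (inv x) y) = y := fun x y => by
    have := lip (inv x) y
    rwa [inv_inv] at this
  have rip' : ∀ x y, L.mul (L.mul y (inv x)) x = y := fun x y => by
    have := rip (inv x) y
    rwa [inv_inv] at this
  constructor
  · rintro ⟨fl, la, ra⟩ a b x y z hx hy hz
    have f1 : ∀ u v, L.mul u (L.mul v (inv u)) = L.mul (L.mul u v) (inv u) := fun u v => by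
      have h := fl u (L.mul v (inv u))
      rw [rip'] at h
      rw [h, rip]
    have f2 : ∀ u v, L.mul (inv u) (L.mul v u) = L.mul (L.mul (inv u) v) u := fun u v => by
      have h := f1 (inv u) v
      rwa [inv_inv] at h
    simp only [Set.mem_insert_iff, Set.mem_singleton_iff] at hx hy hz
    rcases hx with rfl | rfl | rfl | rfl | rfl <;>
    rcases hy with rfl | rfl | rfl | rfl | rfl <;>
    rcases hz with rfl | rfl | rfl | rfl | rfl <;>
    first
      | exact fl _ _
      | exact la _ _
      | exact (ra _ _).symm
      | exact f1 _ _
      | exact f2 _ _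
      | simp only [L.one_mul, L.mul_one, inv_mul, mul_inv, lip, rip, lip', rip']
  · intro h
    refine ⟨fun x y => h x y x y x ?_ ?_ ?_, fun x y => h x y x x y ?_ ?_ ?_,
      fun x y => (h x y x y y ?_ ?_ ?_).symm⟩ <;> simp
end

section
/- Every stepping-up loop is diassociative: if Q is an alternative, flexible IP loop in which SA(x,y,z) implies SA(x,y,y·z) for all x, y, z, then for all a, b ∈ Q the smallest subset of Q containing a and b and closed under the multiplication · and the inversion x ↦ x⁻¹ is associative (x·(y·z) = (x·y)·z for all x, y, z in it), hence a group under ·. -/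
/-- `SA x y z`: every triple from `{x, x⁻¹, y, y⁻¹, z, z⁻¹}` associates. -/
def SA {Q : Type*} (L : LoopStr Q) (inv : Q → Q) (x y z : Q) : Prop :=
  ∀ u v w : Q,
    u ∈ ({x, inv x, y, inv y, z, inv z} : Set Q) →
    v ∈ ({x, inv x, y, inv y, z, inv z} : Set Q) →
    w ∈ ({x, inv x, y, inv y, z, inv z} : Set Q) →
    L.mul u (L.mul v w) = L.mul (L.mul u v) w

namespace StepUp

/-- Strong associativity of three elements, for `Mul`/`Inv` notation. -/
def SAm {Q : Type*} [Mul Q] [Inv Q] (x y z : Q) : Prop :=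
  ∀ u v w : Q,
    u ∈ ({x, x⁻¹, y, y⁻¹, z, z⁻¹} : Set Q) →
    v ∈ ({x, x⁻¹, y, y⁻¹, z, z⁻¹} : Set Q) →
    w ∈ ({x, x⁻¹, y, y⁻¹, z, z⁻¹} : Set Q) →
    u * (v * w) = (u * v) * w

/-- Stepping-up loops in multiplicative notation. -/
class SU (Q : Type*) extends Mul Q, Inv Q, One Q where
  lip : ∀ x y : Q, x⁻¹ * (x * y) = y
  rip : ∀ x y : Q, (y * x) * x⁻¹ = y
  flex : ∀ x y : Q, x * (y * x) = (x * y) * x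
  lalt : ∀ x y : Q, x * (x * y) = (x * x) * y
  ralt : ∀ x y : Q, (x * y) * y = x * (y * y)
  oneMul : ∀ x : Q, 1 * x = x
  mulOne : ∀ x : Q, x * 1 = x
  step : ∀ x y z : Q, SAm x y z → SAm x y (y * z)

open SU

section basics
variable {Q : Type*} [SU Q]

theorem invInv (x : Q) : x⁻¹⁻¹ = x := by
  have h := lip x⁻¹ x
  have h1 := lip x 1
  rw [mulOne] at h1
  rwa [h1, mulOne] at h

theorem invMul (x : Q) : x⁻¹ * x = 1 := by
  have h := lip x 1
  rwa [mulOne] at h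

theorem mulInv (x : Q) : x * x⁻¹ = 1 := by
  have h := rip x 1
  rwa [oneMul] at h

theorem lip' (x y : Q) : x * (x⁻¹ * y) = y := by
  have h := lip x⁻¹ y
  rwa [invInv] at h

theorem rip' (x y : Q) : (y * x⁻¹) * x = y := by
  have h := rip x⁻¹ y
  rwa [invInv] at h

theorem mulRev (x y : Q) : (x * y)⁻¹ = y⁻¹ * x⁻¹ := by
  have h := lip (x * y) y⁻¹
  rw [rip] at h
  have h2 := rip x (x * y)⁻¹
  rw [h] at h2
  exact h2.symm

theorem invOne : (1 : Q)⁻¹ = 1 := by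
  have h := invMul (1 : Q)
  rwa [mulOne] at h

/-- `u` is `x` or its inverse. -/
def Pm (x u : Q) : Prop := u = x ∨ u = x⁻¹

theorem Pm.self (x : Q) : Pm x x := Or.inl rfl

theorem Pm.inv {x u : Q} (h : Pm x u) : Pm x u⁻¹ := by
  rcases h with rfl | rfl
  · exact Or.inr rfl
  · left; exact invInv _

theorem Pm.ofInv {x u : Q} (h : Pm x⁻¹ u) : Pm x u := by
  rcases h with rfl | rfl
  · exact Or.inr rfl
  · left; exact invInv _

/-- associativity of a triple -/
def As (x y z : Q) : Prop := x * (y * z) = (x * y) * z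

theorem As.rev {x y z : Q} (h : As x y z) : As z⁻¹ y⁻¹ x⁻¹ := by
  have h2 := congrArg (fun t => t⁻¹) h
  simp only [mulRev] at h2
  exact h2.symm

theorem flexInv (x y : Q) : x * (y * x⁻¹) = (x * y) * x⁻¹ := by
  have h := flex x (y * x⁻¹)
  rw [rip'] at h
  rw [h, rip]

theorem as12 {x u v w : Q} (hu : Pm x u) (hv : Pm x v) : As u v w := by
  unfold As
  rcases hu with rfl | rfl <;> rcases hv with rfl | rfl
  · exact lalt _ _
  · rw [lip', mulInv, oneMul]
  · rw [lip, invMul, oneMul]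
  · exact lalt _ _

theorem as23 {x u v w : Q} (hu : Pm x v) (hv : Pm x w) : As u v w := by
  unfold As
  rcases hu with rfl | rfl <;> rcases hv with rfl | rfl
  · exact (ralt _ _).symm
  · rw [rip, mulInv, mulOne]
  · rw [rip', invMul, mulOne]
  · exact (ralt _ _).symm

theorem as13 {x u v w : Q} (hu : Pm x u) (hv : Pm x w) : As u v w := by
  unfold As
  rcases hu with rfl | rfl <;> rcases hv with rfl | rfl
  · exact flex _ _
  · exact flexInv _ _
  · have := flexInv w⁻¹ v
    rwa [invInv] at this
  · exact flex _ _

theorem mem_iff {x y z u : Q} :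
    u ∈ ({x, x⁻¹, y, y⁻¹, z, z⁻¹} : Set Q) ↔ Pm x u ∨ Pm y u ∨ Pm z u := by
  simp only [Set.mem_insert_iff, Set.mem_singleton_iff, Pm]
  tauto

theorem SAm.as {x y z u v w : Q} (h : SAm x y z) (hu : Pm x u ∨ Pm y u ∨ Pm z u)
    (hv : Pm x v ∨ Pm y v ∨ Pm z v) (hw : Pm x w ∨ Pm y w ∨ Pm z w) : As u v w :=
  h u v w (mem_iff.2 hu) (mem_iff.2 hv) (mem_iff.2 hw)

theorem SAm.of {x y z x' y' z' : Q} (h : SAm x y z)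
    (hh : ∀ u, Pm x' u ∨ Pm y' u ∨ Pm z' u → Pm x u ∨ Pm y u ∨ Pm z u) : SAm x' y' z' :=
  fun _ _ _ hu hv hw =>
    h.as (hh _ (mem_iff.1 hu)) (hh _ (mem_iff.1 hv)) (hh _ (mem_iff.1 hw))

theorem SAm.mk3 {x y z : Q}
    (h1 : ∀ u v w, Pm x u → Pm y v → Pm z w → As u v w)
    (h2 : ∀ u v w, Pm y u → Pm x v → Pm z w → As u v w)
    (h3 : ∀ u v w, Pm x u → Pm z v → Pm y w → As u v w) : SAm x y z := by
  have key : ∀ {u v w : Q}, As w⁻¹ v⁻¹ u⁻¹ → As u v w := by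
    intro u v w h
    have := h.rev
    simpa only [invInv] using this
  intro u v w hu hv hw
  rw [mem_iff] at hu hv hw
  show As u v w
  rcases hu with hu | hu | hu <;> rcases hv with hv | hv | hv <;>
    rcases hw with hw | hw | hw <;>
    first
    | exact as12 hu hv
    | exact as23 hv hw
    | exact as13 hu hw
    | exact h1 _ _ _ hu hv hw
    | exact h2 _ _ _ hu hv hw
    | exact h3 _ _ _ hu hv hw
    | exact key (h1 _ _ _ hw.inv hv.inv hu.inv)
    | exact key (h2 _ _ _ hw.inv hv.inv hu.inv)
    | exact key (h3 _ _ _ hw.inv hv.inv hu.inv)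

theorem Pm_one {u : Q} (h : Pm (1 : Q) u) : u = 1 := by
  rcases h with h | h
  · exact h
  · rw [h, invOne]

theorem SAm.one (x y : Q) : SAm x y 1 := by
  apply SAm.mk3
  · intro u v w _ _ h; rw [Pm_one h]; simp only [As, mulOne]
  · intro u v w _ _ h; rw [Pm_one h]; simp only [As, mulOne]
  · intro u v w _ h _; rw [Pm_one h]; simp only [As, mulOne, oneMul]

theorem SAm.swap23 {x y z : Q} (h : SAm x y z) : SAm x z y := h.of (by tauto)
theorem SAm.swap12 {x y z : Q} (h : SAm x y z) : SAm y x z := h.of (by tauto)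
theorem SAm.inv1 {x y z : Q} (h : SAm x y z) : SAm x⁻¹ y z :=
  h.of (by intro u hu; have := @Pm.ofInv Q _ x u; tauto)
theorem SAm.inv3 {x y z : Q} (h : SAm x y z) : SAm x y z⁻¹ := h.swap23.swap12.inv1.swap12.swap23

/-- multiply the third entry on the left by the first one -/
theorem SAm.l3 {x y z c : Q} (h : SAm x y z) (hc : Pm x c) : SAm x y (c * z) := by
  rcases hc with rfl | rfl
  · exact (step _ _ _ h.swap12).swap12
  · have := (step _ _ _ h.inv1.swap12).swap12.inv1
    rwa [invInv] at this

theorem SAm.r3 {x y z c : Q} (h : SAm x y z) (hc : Pm x c) : SAm x y (z * c) := by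
  have := (h.inv3.l3 hc.inv).inv3
  rwa [mulRev, invInv, invInv] at this

theorem SAm.l2 {x y z c : Q} (h : SAm x y z) (hc : Pm x c) : SAm x (c * y) z :=
  (h.swap23.l3 hc).swap23
theorem SAm.r2 {x y z c : Q} (h : SAm x y z) (hc : Pm x c) : SAm x (y * c) z :=
  (h.swap23.r3 hc).swap23

end basics

section words
variable {Q : Type*} [SU Q]

/-- generator with given index -/
def gen (a b : Q) (t : Bool) : Q := if t then a else b

/-- value of a letter -/
def el (a b : Q) (c : Bool × Bool) : Q := if c.2 then gen a b c.1 else (gen a b c.1)⁻¹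

/-- letterwise action of a word -/
def act (a b : Q) : List (Bool × Bool) → Q → Q
  | [], q => q
  | c :: w, q => el a b c * act a b w q

/-- value of a word -/
def ev (a b : Q) (w : List (Bool × Bool)) : Q := act a b w 1

/-- inverse word -/
def wi : List (Bool × Bool) → List (Bool × Bool)
  | [] => []
  | c :: w => wi w ++ [(c.1, !c.2)]

theorem el_pm (a b : Q) (c : Bool × Bool) : Pm (gen a b c.1) (el a b c) := by
  unfold el
  split
  · exact Or.inl rfl
  · exact Or.inr rfl

theorem pm_el (a b : Q) (t : Bool) {u : Q} (h : Pm (gen a b t) u) :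
    ∃ s, u = el a b (t, s) := by
  rcases h with h | h
  · exact ⟨true, by simp [el, h]⟩
  · exact ⟨false, by simp [el, h]⟩

theorem el_flip (a b : Q) (c : Bool × Bool) : el a b (c.1, !c.2) = (el a b c)⁻¹ := by
  rcases c with ⟨t, s⟩
  cases s <;> simp [el, invInv]

theorem act_append (a b : Q) (u v : List (Bool × Bool)) (q : Q) :
    act a b (u ++ v) q = act a b u (act a b v q) := by
  induction u with
  | nil => rfl
  | cons c u ih => simp [act, ih]

theorem SA_act (a b : Q) (w : List (Bool × Bool)) {q : Q} (h : SAm a b q) :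
    SAm a b (act a b w q) := by
  induction w with
  | nil => exact h
  | cons c w ih =>
    rcases c with ⟨t, s⟩
    have := el_pm a b (t, s)
    cases t
    · exact (ih.swap12.l3 this).swap12
    · exact ih.l3 this

theorem SA_ev (a b : Q) (w : List (Bool × Bool)) : SAm a b (ev a b w) :=
  SA_act a b w (SAm.one a b)

theorem gen_mem (a b z : Q) (t : Bool) {u : Q} (h : Pm (gen a b t) u) :
    Pm a u ∨ Pm b u ∨ Pm z u := by
  cases t
  · exact Or.inr (Or.inl h)
  · exact Or.inl h

theorem ev_snoc (a b : Q) (w : List (Bool × Bool)) (c : Bool × Bool) :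
    ev a b (w ++ [c]) = ev a b w * el a b c := by
  induction w with
  | nil => simp [ev, act, oneMul, mulOne]
  | cons d w ih =>
    have h : As (el a b d) (ev a b w) (el a b c) :=
      (SA_ev a b w).as (gen_mem _ _ _ _ (el_pm a b d)) (Or.inr (Or.inr (Pm.self _)))
        (gen_mem _ _ _ _ (el_pm a b c))
    have h1 : ev a b (d :: w ++ [c]) = el a b d * ev a b (w ++ [c]) := rfl
    have h2 : ev a b (d :: w) = el a b d * ev a b w := rfl
    rw [h1, h2, ih]
    exact h

theorem ev_wi (a b : Q) (w : List (Bool × Bool)) : ev a b (wi w) = (ev a b w)⁻¹ := by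
  induction w with
  | nil => simp [wi, ev, act, invOne]
  | cons c w ih =>
    have h2 : ev a b (c :: w) = el a b c * ev a b w := rfl
    rw [wi, ev_snoc, ih, el_flip, h2, mulRev]

theorem wi_append (u v : List (Bool × Bool)) : wi (u ++ v) = wi v ++ wi u := by
  induction u with
  | nil => simp [wi]
  | cons c u ih => simp [wi, ih]

theorem wi_wi (u : List (Bool × Bool)) : wi (wi u) = u := by
  induction u with
  | nil => rfl
  | cons c u ih => simp [wi, ih, wi_append]

/-- the loop product of two words is the concatenation -/
def P (a b : Q) (x w : List (Bool × Bool)) : Prop :=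
  ev a b x * ev a b w = ev a b (x ++ w)

theorem P_rev {a b : Q} {x w : List (Bool × Bool)} (h : P a b (wi x) (wi w)) : P a b w x := by
  have := congrArg (fun t => t⁻¹) h
  simp only [← wi_append, ev_wi, mulRev, invInv] at this
  exact this

/-- a word that multiplies correctly -/
def Good (a b : Q) (x : List (Bool × Bool)) : Prop := ∀ w, P a b x w

theorem pm_ev {a b : Q} {x : List (Bool × Bool)} {u : Q} (h : Pm (ev a b x) u) :
    ∃ x', (x' = x ∨ x' = wi x) ∧ u = ev a b x' := by
  rcases h with h | h
  · exact ⟨x, Or.inl rfl, h⟩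
  · exact ⟨wi x, Or.inr rfl, by rw [h, ev_wi]⟩

theorem SA_make {a b : Q} (t : Bool) (x w : List (Bool × Bool))
    (hx : Good a b x) (hx' : Good a b (wi x))
    (h : ∀ x' w' s, (x' = x ∨ x' = wi x) → (w' = w ∨ w' = wi w) →
      P a b ((t, s) :: x') w' ∧ P a b (x' ++ [(t, s)]) w') :
    SAm (gen a b t) (ev a b x) (ev a b w) := by
  have hg : ∀ x', (x' = x ∨ x' = wi x) → Good a b x' := by
    rintro x' (rfl | rfl)
    · exact hx
    · exact hx'
  have hgr : ∀ x', (x' = x ∨ x' = wi x) → ∀ v, P a b v x' := by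
    rintro x' (rfl | rfl) v
    · exact P_rev (hx' _)
    · apply P_rev; rw [wi_wi]; exact hx _
  have hc : ∀ c v, el a b c * ev a b v = ev a b (c :: v) := fun _ _ => rfl
  apply SAm.mk3
  · intro u v z hu hv hz
    obtain ⟨s, rfl⟩ := pm_el _ _ _ hu
    obtain ⟨x', hx1, rfl⟩ := pm_ev hv
    obtain ⟨w', hw1, rfl⟩ := pm_ev hz
    have h1 := (h x' w' s hx1 hw1).1
    have h2 := hg x' hx1 w'
    unfold As
    unfold P at h1 h2
    rw [h2, hc, hc, h1]; rfl
  · intro u v z hv hu hz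
    obtain ⟨s, rfl⟩ := pm_el _ _ _ hu
    obtain ⟨x', hx1, rfl⟩ := pm_ev hv
    obtain ⟨w', hw1, rfl⟩ := pm_ev hz
    have h1 := (h x' w' s hx1 hw1).2
    have h2 := hg x' hx1 ((t, s) :: w')
    unfold As
    unfold P at h1 h2
    rw [hc, h2, ← ev_snoc, h1]; simp
  · intro u v z hu hz hv
    obtain ⟨s, rfl⟩ := pm_el _ _ _ hu
    obtain ⟨x', hx1, rfl⟩ := pm_ev hv
    obtain ⟨w', hw1, rfl⟩ := pm_ev hz
    have h1 := hgr x' hx1 w'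
    have h2 := hgr x' hx1 ((t, s) :: w')
    unfold As
    unfold P at h1 h2
    rw [h1, hc, hc, h2]; rfl

/-- all letters have generator index `t` -/
def AllT (t : Bool) (p : List (Bool × Bool)) : Prop := ∀ c ∈ p, c.1 = t

theorem AllT.tail {t : Bool} {c : Bool × Bool} {p : List (Bool × Bool)} (h : AllT t (c :: p)) :
    AllT t p := fun d hd => h d (List.mem_cons_of_mem _ hd)

theorem AllT.pm {t : Bool} {c : Bool × Bool} {p : List (Bool × Bool)} (h : AllT t (c :: p))
    (a b : Q) : Pm (gen a b t) (el a b c) := by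
  have := el_pm a b c
  rwa [h c List.mem_cons_self] at this

theorem SA_act2 {a b : Q} {t : Bool} {p : List (Bool × Bool)} (hp : AllT t p) {u w : Q}
    (h : SAm (gen a b t) u w) : SAm (gen a b t) (act a b p u) w := by
  induction p with
  | nil => exact h
  | cons c p ih => exact (ih hp.tail).l2 (hp.pm a b)

theorem SA_act3 {a b : Q} {t : Bool} {p : List (Bool × Bool)} (hp : AllT t p) {u w : Q}
    (h : SAm (gen a b t) u w) : SAm (gen a b t) u (act a b p w) :=
  (SA_act2 hp h.swap23).swap23

theorem SA_app2 {a b : Q} {t : Bool} {p : List (Bool × Bool)} (hp : AllT t p)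
    {u : List (Bool × Bool)} {w : Q}
    (h : SAm (gen a b t) (ev a b u) w) : SAm (gen a b t) (ev a b (u ++ p)) w := by
  induction p generalizing u with
  | nil => simpa using h
  | cons c p ih =>
    have h1 : SAm (gen a b t) (ev a b (u ++ [c])) w := by
      rw [ev_snoc]; exact h.r2 (hp.pm a b)
    simpa using ih hp.tail h1

theorem K1 {a b : Q} {t : Bool} {p : List (Bool × Bool)} (hp : AllT t p) {u w : Q}
    (h : SAm (gen a b t) u w) : act a b p u * w = act a b p (u * w) := by
  induction p with
  | nil => rfl
  | cons c p ih =>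
    have h1 : As (el a b c) (act a b p u) w :=
      (SA_act2 hp.tail h).as (Or.inl (hp.pm a b)) (Or.inr (Or.inl (Pm.self _)))
        (Or.inr (Or.inr (Pm.self _)))
    have h2 := ih hp.tail
    unfold As at h1
    simp only [act]
    rw [← h1, h2]

theorem K2 {a b : Q} {t : Bool} {q : List (Bool × Bool)} (hq : AllT t q)
    {u : List (Bool × Bool)} {w : Q}
    (h : SAm (gen a b t) (ev a b u) w) :
    ev a b (u ++ q) * w = ev a b u * act a b q w := by
  induction q generalizing u with
  | nil => simp [act]
  | cons c q ih =>
    have h1 : SAm (gen a b t) (ev a b (u ++ [c])) w := by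
      rw [ev_snoc]; exact h.r2 (hq.pm a b)
    have h2 := ih hq.tail h1
    have h3 : As (ev a b u) (el a b c) (act a b q w) :=
      (SA_act3 hq.tail h).as (Or.inr (Or.inl (Pm.self _))) (Or.inl (hq.pm a b))
        (Or.inr (Or.inr (Pm.self _)))
    unfold As at h3
    rw [ev_snoc] at h2
    have h4 : u ++ c :: q = (u ++ [c]) ++ q := by simp
    rw [h4, h2, ← h3]; rfl

/-- words with at most `n` syllables, starting with syllable type `t` -/
def A : Bool → ℕ → List (Bool × Bool) → Prop
  | _, 0, w => w = []
  | t, n + 1, w => ∃ p v, AllT t p ∧ A (!t) n v ∧ w = p ++ v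

theorem A_end {t : Bool} {n : ℕ} {w : List (Bool × Bool)} :
    A t (n + 1) w ↔ ∃ v q, A t n v ∧ AllT (t ^^ n.bodd) q ∧ w = v ++ q := by
  induction n generalizing t w with
  | zero => simp [A]
  | succ n ih =>
    have e : (t ^^ (n + 1).bodd) = ((!t) ^^ n.bodd) := by
      rw [Nat.bodd_succ]; cases t <;> cases n.bodd <;> rfl
    rw [e]
    constructor
    · rintro ⟨p, v, hp, hv, rfl⟩
      obtain ⟨v', q, hv', hq, rfl⟩ := ih.1 hv
      exact ⟨p ++ v', q, ⟨p, v', hp, hv', rfl⟩, hq, by simp⟩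
    · rintro ⟨v, q, ⟨p, v', hp, hv', rfl⟩, hq, rfl⟩
      exact ⟨p, v' ++ q, hp, ih.2 ⟨v', q, hv', hq, rfl⟩, by simp⟩

theorem AllT_wi {t : Bool} {p : List (Bool × Bool)} (h : AllT t p) : AllT t (wi p) := by
  induction p with
  | nil => exact h
  | cons c p ih =>
    intro d hd
    rw [wi, List.mem_append] at hd
    rcases hd with hd | hd
    · exact ih h.tail d hd
    · rw [List.mem_singleton] at hd
      rw [hd]; exact h c List.mem_cons_self

theorem A_wi {t : Bool} {n : ℕ} {w : List (Bool × Bool)} (h : A t (n + 1) w) :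
    A (t ^^ n.bodd) (n + 1) (wi w) := by
  induction n generalizing t w with
  | zero =>
    obtain ⟨p, v, hp, rfl, rfl⟩ := h
    exact ⟨wi p, [], by simpa using AllT_wi hp, rfl, by simp⟩
  | succ n ih =>
    obtain ⟨p, v, hp, hv, rfl⟩ := h
    have h1 := ih hv
    rw [A_end]
    refine ⟨wi v, wi p, ?_, ?_, wi_append _ _⟩
    · convert h1 using 1
      rw [Nat.bodd_succ]; cases t <;> cases n.bodd <;> rfl
    · have := AllT_wi hp
      convert this using 1
      rw [Nat.bodd_succ]; cases t <;> cases n.bodd <;> rfl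

theorem A_wi' {t : Bool} {n : ℕ} {w : List (Bool × Bool)} (h : A t n w) :
    ∃ t', A t' n (wi w) := by
  cases n with
  | zero => exact ⟨t, by rw [show w = [] from h]; rfl⟩
  | succ n => exact ⟨_, A_wi h⟩

theorem AllT_single (t s : Bool) : AllT t [(t, s)] := by
  intro c hc
  rw [List.mem_singleton] at hc
  rw [hc]

theorem AllT_snoc {t : Bool} {p : List (Bool × Bool)} (hp : AllT t p) (a b : Q) {u : Q}
    {w : List (Bool × Bool)} (h : SAm (gen a b t) u (ev a b w)) :
    SAm (gen a b t) u (ev a b (w ++ p)) :=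
  (SA_app2 hp h.swap23).swap23

theorem A_self (w : List (Bool × Bool)) : ∃ n t, A t n w := by
  induction w with
  | nil => exact ⟨0, true, rfl⟩
  | cons c w ih =>
    obtain ⟨n, t, h⟩ := ih
    refine ⟨n + 2, c.1, [c], w, ?_, ?_, rfl⟩
    · exact AllT_single c.1 c.2
    · by_cases e : t = !c.1
      · rw [← e]
        refine A_end.2 ⟨w, [], h, ?_, by simp⟩
        intro d hd; simp at hd
      · refine ⟨[], w, ?_, ?_, rfl⟩
        · intro d hd; simp at hd
        · have : (!!c.1) = t := by
            revert e; cases t <;> cases c.1 <;> simp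
          rw [this]; exact h

/-- passing from an odd number of syllables to an even one -/
theorem even_step (a b : Q) (n : ℕ) (hn : n.bodd = false)
    (ih : ∀ t w, A t (n + 1) w → Good a b w) (m : ℕ) :
    ∀ t x, A t (n + 2) x → ∀ t' w, A t' m w → P a b x w := by
  induction m with
  | zero =>
    intro t x _ t' w hw
    rw [show w = [] from hw]
    simp [P, ev, act, mulOne]
  | succ m ihm =>
    have key : ∀ r u w1 t', A (!r) (n + 1) u → A t' m w1 →
        SAm (gen a b r) (ev a b u) (ev a b w1) := by
      intro r u w1 t' hu hw1
      have hui : A (!r) (n + 1) (wi u) := by simpa [hn] using A_wi hu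
      apply SA_make r u w1 (ih _ _ hu) (ih _ _ hui)
      intro x' w' s hx' hw'
      have hx1 : A (!r) (n + 1) x' := by rcases hx' with rfl | rfl <;> assumption
      obtain ⟨t2, hw2⟩ : ∃ t2, A t2 m w' := by
        rcases hw' with rfl | rfl
        · exact ⟨_, hw1⟩
        · exact A_wi' hw1
      constructor
      · exact ihm r _ ⟨[(r, s)], x', AllT_single r s, hx1, rfl⟩ _ _ hw2
      · refine ihm (!r) _ (A_end.2 ⟨x', [(r, s)], hx1, ?_, rfl⟩) _ _ hw2
        simpa [hn] using AllT_single r s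
    intro t x hx t' w hw
    obtain ⟨w1, r, hw1, hr, rfl⟩ := A_end.1 hw
    by_cases e : (t' ^^ m.bodd) = t
    · rw [e] at hr
      obtain ⟨p, v, hp, hv, rfl⟩ := hx
      have h := AllT_snoc hr a b (key t v w1 t' hv hw1)
      have h1 := K1 hp h
      have h2 := ih _ _ hv (w1 ++ r)
      unfold P at h2 ⊢
      rw [h2] at h1
      simp only [ev, act_append] at h1 ⊢
      exact h1
    · have e' : (t' ^^ m.bodd) = !t := by
        revert e; cases (t' ^^ m.bodd) <;> cases t <;> simp
      rw [e'] at hr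
      obtain ⟨v, q, hv, hq, rfl⟩ := A_end.1 hx
      have hq' : AllT (!t) q := by simpa [hn] using hq
      have h := AllT_snoc hr a b (key (!t) v w1 t' (by simpa using hv) hw1)
      have h1 := K2 hq' h
      have h2 := ih _ _ hv (q ++ (w1 ++ r))
      have h3 : act a b q (ev a b (w1 ++ r)) = ev a b (q ++ (w1 ++ r)) := by
        simp only [ev, act_append]
      unfold P at h2 ⊢
      rw [h1, h3, h2, List.append_assoc]

theorem all_good (a b : Q) (n : ℕ) : ∀ t w, A t n w → Good a b w := by
  induction n with
  | zero =>
    intro t w hw v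
    rw [show w = [] from hw]
    simp [P, ev, act, oneMul]
  | succ n ih =>
    cases n with
    | zero =>
      rintro t w ⟨p, v, hp, rfl, rfl⟩ z
      have h1 := K1 hp ((SAm.one (gen a b t) (ev a b z)).swap23)
      rw [oneMul] at h1
      simp only [P, ev, act_append, act] at h1 ⊢
      exact h1
    | succ n =>
      cases hn : n.bodd with
      | false =>
        intro t x hx w
        obtain ⟨m, t', hw⟩ := A_self w
        exact even_step a b n hn ih m t x hx t' w hw
      | true =>
        obtain ⟨j, rfl⟩ : ∃ j, n = j + 1 := by
          cases n with
          | zero => simp at hn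
          | succ j => exact ⟨j, rfl⟩
        have hj : j.bodd = false := by simpa using hn
        rintro t x ⟨p, v, hp, hv, rfl⟩ w
        obtain ⟨y, q, hy, hq, rfl⟩ := A_end.1 hv
        have hq' : AllT t q := by simpa [hj] using hq
        have hsub : ∀ y', A (!t) (j + 1) y' → Good a b y' := by
          intro y' hy'
          refine ih t y' ⟨[], y', ?_, hy', rfl⟩
          intro d hd; simp at hd
        have hyi : A (!t) (j + 1) (wi y) := by simpa [hj] using A_wi hy
        have h : SAm (gen a b t) (ev a b y) (ev a b w) := by
          apply SA_make t y w (hsub _ hy) (hsub _ hyi)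
          intro x' w' s hx' _
          have hx1 : A (!t) (j + 1) x' := by rcases hx' with rfl | rfl <;> assumption
          constructor
          · exact ih t _ ⟨[(t, s)], x', AllT_single t s, hx1, rfl⟩ _
          · refine ih (!t) _ (A_end.2 ⟨x', [(t, s)], hx1, ?_, rfl⟩) _
            simpa [hj] using AllT_single t s
        have h1 := K1 hp (SA_app2 hq' h)
        have h2 := ih _ _ hv w
        unfold P at h2 ⊢
        rw [h2] at h1
        simp only [ev, act_append] at h1 ⊢
        exact h1

theorem good (a b : Q) (x w : List (Bool × Bool)) :
    ev a b x * ev a b w = ev a b (x ++ w) := by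
  obtain ⟨n, t, h⟩ := A_self x
  exact all_good a b n t x h w

end words

end StepUp

/-- Every stepping-up loop is diassociative. -/
theorem stepping_up_diassociative {Q : Type*} (L : LoopStr Q) (inv : Q → Q)
    (lip : ∀ x y, L.mul (inv x) (L.mul x y) = y)
    (rip : ∀ x y, L.mul (L.mul y x) (inv x) = y)
    (flex : ∀ x y, L.mul x (L.mul y x) = L.mul (L.mul x y) x)
    (lalt : ∀ x y, L.mul x (L.mul x y) = L.mul (L.mul x x) y)
    (ralt : ∀ x y, L.mul (L.mul x y) y = L.mul x (L.mul y y))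
    (step : ∀ x y z, SA L inv x y z → SA L inv x y (L.mul y z)) :
    ∀ a b : Q, ∀ x y z : Q, Gen L inv a b x → Gen L inv a b y → Gen L inv a b z →
      L.mul x (L.mul y z) = L.mul (L.mul x y) z := by
  letI inst : StepUp.SU Q :=
    { mul := L.mul, inv := inv, one := L.one, lip := lip, rip := rip, flex := flex,
      lalt := lalt, ralt := ralt, oneMul := L.one_mul, mulOne := L.mul_one, step := step }
  intro a b x y z hx hy hz
  have key : ∀ x, Gen L inv a b x → ∃ w, x = StepUp.ev a b w := by
    intro x hx
    induction hx with
    | mem_a => exact ⟨[(true, true)], (L.mul_one a).symm⟩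
    | mem_b => exact ⟨[(false, true)], (L.mul_one b).symm⟩
    | mul _ _ h1 h2 =>
      obtain ⟨u, rfl⟩ := h1
      obtain ⟨v, rfl⟩ := h2
      exact ⟨u ++ v, StepUp.good a b u v⟩
    | inv _ h =>
      obtain ⟨u, rfl⟩ := h
      exact ⟨StepUp.wi u, (StepUp.ev_wi a b u).symm⟩
  obtain ⟨u, rfl⟩ := key x hx
  obtain ⟨v, rfl⟩ := key y hy
  obtain ⟨w, rfl⟩ := key z hz
  change StepUp.ev a b u * (StepUp.ev a b v * StepUp.ev a b w) =
    (StepUp.ev a b u * StepUp.ev a b v) * StepUp.ev a b w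
  simp only [StepUp.good, List.append_assoc]
end

section
/- Every semi-universally flexible IP loop is a stepping-up loop: if Q is an SUF IP loop, then Q is alternative and flexible, and for all a, b, c ∈ Q, SA(a,b,c) implies SA(a,b,b·c). -/
set_option maxHeartbeats 4000000
set_option linter.all false

theorem suf_basic {Q : Type*} (m : Q → Q → Q) (i : Q → Q) (e : Q)
    (one_mul : ∀ x, m e x = x) (mul_one : ∀ x, m x e = x)
    (lip : ∀ x y, m (i x) (m x y) = y) (rip : ∀ x y, m (m y x) (i x) = y)
    (flex : ∀ x y, m (m x y) x = m x (m y x))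
    (L : ∀ x y u, m (m x u) (m (m y u) x) = m (m (m (m x u) y) u) x)
    (R : ∀ x y v, m x (m v (m y (m v x))) = m (m x (m v y)) (m v x)) :
    (∀ x y, i (m x y) = m (i y) (i x)) ∧ (∀ x y, m x (m x y) = m (m x x) y) ∧
    (∀ x y, m (m x y) y = m x (m y y)) := by
  have c0 : ∀ x0, m e x0 = x0 := by
    intros; exact one_mul _
  have c1 : ∀ x0, m x0 e = x0 := by
    intros; exact mul_one _
  have c2 : ∀ x0 x1, m (i x0) (m x0 x1) = x1 := by
    intros; exact lip _ _
  have c3 : ∀ x0 x1, m (m x0 x1) (i x1) = x0 := by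
    intros; exact rip _ _
  have c4 : ∀ x0 x1, m (m x0 x1) x0 = m x0 (m x1 x0) := by
    intros; exact flex _ _
  have c5 : ∀ x0 x1 x2, m (m (m (m x0 x1) x2) x1) x0 = m (m x0 x1) (m (m x2 x1) x0) := by
    intros; exact (L _ _ _).symm
  have c8 : ∀ x0, m (i x0) x0 = e := by
    intro x0
    have := c1 x0
    have := c2 x0 e
    grind (ematch := 0) only
  have c9 : ∀ x0 x1, m (i (i x0)) x1 = m x0 x1 := by
    intro x0 x1
    have := c2 x0 x1
    have := c2 (i x0) (m x0 x1)
    grind (ematch := 0) only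
  have c12 : ∀ x0 x1, m (i (m x0 x1)) x0 = i x1 := by
    intro x0 x1
    have := c3 x0 x1
    have := c2 (m x0 x1) (i x1)
    grind (ematch := 0) only
  have c16 : ∀ x1 x0, m (i x1) (m (m x1 x0) (i x1)) = m x0 (i x1) := by
    intro x1 x0
    have := c4 (i x1) (m x1 x0)
    have := c2 x1 x0
    grind (ematch := 0) only
  have c17 : ∀ x0 x1, m (m x0 (m x1 x0)) (i x0) = m x0 x1 := by
    intro x0 x1
    have := c4 x0 x1
    have := c3 (m x0 x1) x0
    grind (ematch := 0) only
  have c20 : ∀ x0 x1, m (m (m x0 x1) x1) x0 = m (m x0 x1) (m x1 x0) := by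
    intro x0 x1
    have := c1 (m x0 x1)
    have := c5 x0 x1 e
    have := c0 x1
    grind (ematch := 0) only
  have c27 : ∀ x0 x1, m (m (m x0 (m x1 x0)) x1) x0 = m (m x0 x1) (m x0 (m x1 x0)) := by
    intro x0 x1
    have := c4 x0 x1
    have := c5 x0 x1 x0
    grind (ematch := 0) only
  have c46 : ∀ x0, i (i x0) = x0 := by
    intro x0
    have := c1 (i (i x0))
    have := c8 x0
    have := c2 (i x0) x0
    grind (ematch := 0) only
  have c48 : ∀ x0 x1, m x0 (m (i x0) x1) = x1 := by
    intro x0 x1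
    exact (c9 x0 (m (i x0) x1)).symm.trans (
      c2 (i x0) x1)
  have c52 : ∀ x0 x1, m (m x0 (i x1)) x1 = x0 := by
    intro x0 x1
    have := c46 x1
    have := c3 x0 (i x1)
    grind (ematch := 0) only
  have c54 : ∀ x1 x0, i (m x1 x0) = m (i x0) (i x1) := by
    intro x1 x0
    have := c12 (i x1) (m x1 x0)
    have := c2 x1 x0
    grind (ematch := 0) only
  have c115 : ∀ x0 x1 x2, m (m x0 x1) (m (m (i x1) (i x0)) x2) = x2 := by
    intro x0 x1 x2
    have := c54 x0 x1
    have := c48 (m x0 x1) x2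
    grind (ematch := 0) only
  have c136 : ∀ x0 x1, m (m x0 x1) (i x0) = m x0 (m x1 (i x0)) := by
    intro x0 x1
    have := c2 (i x0) (m (m x0 x1) (i x0))
    have := c16 x0 x1
    have := c46 x0
    grind (ematch := 0) only
  have c160 : ∀ x0 x1, m (m (i x0) x1) x0 = m (i x0) (m x1 x0) := by
    intro x0 x1
    have := c46 x0
    have := c3 x1 x0
    have := c17 (i x0) (m x1 x0)
    grind (ematch := 0) only
  have c358 : ∀ x0 x1, m (m x0 (m x1 x0)) (i x1) = m x0 (m (m x1 x0) (i x1)) := by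
    intro x0 x1
    have := c2 x1 x0
    have := c20 (i x1) (m x1 x0)
    grind (ematch := 0) only
  have c370 : ∀ x0 x1, m (m x0 x1) (m x0 (i x1)) = m x0 (m x1 (m x0 (i x1))) := by
    intro x0 x1
    have := c52 x0 x1
    have := c20 (m x0 (i x1)) x1
    grind (ematch := 0) only
  have c918 : ∀ x1 x0, m (m (m x1 x0) (m (i x0) x1)) x0 = m x1 (m x1 x0) := by
    intro x1 x0
    have := c48 x0 (m x1 x0)
    have := c160 x0 x1
    have := c27 x0 (m (i x0) x1)
    have := c48 x0 x1
    grind (ematch := 0) only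
  have c2610 : ∀ x0 x1, m (m x0 (m x1 x0)) (i x1) = m x0 (m x1 (m x0 (i x1))) := by
    intro x0 x1
    have := c358 x0 x1
    have := c136 x1 x0
    grind (ematch := 0) only
  have c2612 : ∀ x0 x1, m (m x0 (m x1 (m x0 (i x1)))) x1 = m x0 (m x1 x0) := by
    intro x0 x1
    have := c46 x1
    have := c2610 x0 x1
    have := c3 (m x0 (m x1 x0)) (i x1)
    grind (ematch := 0) only
  have c2849 : ∀ x0 x1, m (m x0 x1) (m x0 x0) = m x0 (m (m x1 x0) x0) := by
    intro x0 x1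
    have := c52 x0 x1
    have := c5 x0 x1 (m x0 (i x1))
    have := c370 x0 x1
    have := c2612 x0 x1
    have := c4 x0 (m x1 x0)
    grind (ematch := 0) only
  have c2891 : ∀ x0 x1, m (m x0 x1) x1 = m x0 (m x1 x1) := by
    intro x0 x1
    have := c48 x1 (m (m x0 x1) x1)
    have := c160 x1 (m x0 x1)
    have := c160 x1 x0
    have := c2849 x1 (m (i x1) x0)
    have := c48 x1 x0
    grind (ematch := 0) only
  have c2980 : ∀ x0 x1, m (m x0 (i x1)) (m x1 x1) = m x0 x1 := by
    intro x0 x1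
    have := c2891 (m x0 (i x1)) x1
    have := c52 x0 x1
    grind (ematch := 0) only
  have c3198 : ∀ x0 x1, m (m x0 x1) (m (i x1) x0) = m x0 x0 := by
    intro x0 x1
    have := c2980 (i x1) x0
    have := c115 x0 x1 (m x0 x0)
    grind (ematch := 0) only
  have c3338 : ∀ x0 x1, m (m x0 x0) x1 = m x0 (m x0 x1) := by
    intro x0 x1
    have := c3198 x0 x1
    have := c918 x0 x1
    grind (ematch := 0) only
  refine ⟨fun A B => ?_, fun A B => ?_, fun A B => ?_⟩
  · have goal_ia : (i (m A B)) = (m (i B) (i A)) := by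
      exact c54 A B
    exact goal_ia
  · have goal_la : (m A (m A B)) = (m (m A A) B) := by
      exact (c3338 A B).symm
    exact goal_la
  · have goal_ra : (m (m A B) B) = (m A (m B B)) := by
      exact c2891 A B
    exact goal_ra

theorem suf_key1 {Q : Type*} (m : Q → Q → Q) (i : Q → Q) (e : Q)
    (one_mul : ∀ x, m e x = x) (mul_one : ∀ x, m x e = x)
    (lip : ∀ x y, m (i x) (m x y) = y) (rip : ∀ x y, m (m y x) (i x) = y)
    (flex : ∀ x y, m (m x y) x = m x (m y x))
    (L : ∀ x y u, m (m x u) (m (m y u) x) = m (m (m (m x u) y) u) x)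
    (R : ∀ x y v, m x (m v (m y (m v x))) = m (m x (m v y)) (m v x))
    (alt1 : ∀ x y, m (m x x) y = m x (m x y)) (alt2 : ∀ x y, m (m x y) y = m x (m y y))
    (A B C : Q)
    (HS : ∀ u v w : Q, u ∈ ({A, i A, B, i B, C, i C} : Set Q) →
      v ∈ ({A, i A, B, i B, C, i C} : Set Q) → w ∈ ({A, i A, B, i B, C, i C} : Set Q) →
      m u (m v w) = m (m u v) w) :
    m A (m B (m B C)) = m (m A B) (m B C) ∧
    m (m B C) (m (i B) A) = m (m (m B C) (i B)) A ∧
    m (i A) (m (i B) (m B C)) = m (m (i A) (i B)) (m B C) ∧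
    m A (m (m B C) B) = m (m A (m B C)) B ∧
    m A (m (m B C) (i B)) = m (m A (m B C)) (i B) ∧
    m A (m (i (m B C)) B) = m (m A (i (m B C))) B ∧
    m B (m (m B C) A) = m (m B (m B C)) A ∧
    m B (m (i A) (m B C)) = m (m B (i A)) (m B C) ∧
    m B (m A (i (m B C))) = m (m B A) (i (m B C)) ∧
    m (i B) (m (i A) (m B C)) = m (m (i B) (i A)) (m B C) ∧
    m (m B C) (m A B) = m (m (m B C) A) B := by
  have c1 : ∀ x0, m x0 e = x0 := by
    intros; exact mul_one _
  have c2 : ∀ x0 x1, m (i x0) (m x0 x1) = x1 := by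
    intros; exact lip _ _
  have c3 : ∀ x0 x1, m (m x0 x1) (i x1) = x0 := by
    intros; exact rip _ _
  have c4 : ∀ x0 x1, m (m x0 x1) x0 = m x0 (m x1 x0) := by
    intros; exact flex _ _
  have c5 : ∀ x0 x1 x2, m (m (m (m x0 x1) x2) x1) x0 = m (m x0 x1) (m (m x2 x1) x0) := by
    intros; exact (L _ _ _).symm
  have c6 : ∀ x0 x1 x2, m (m x0 (m x1 x2)) (m x1 x0) = m x0 (m x1 (m x2 (m x1 x0))) := by
    intros; exact (R _ _ _).symm
  have c25 : m (m A B) C = m A (m B C) := by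
    exact (HS A B C (by simp) (by simp) (by simp)).symm
  have c32 : m (m A (i B)) (i C) = m A (m (i B) (i C)) := by
    exact (HS A (i B) (i C) (by simp) (by simp) (by simp)).symm
  have c35 : m (m A C) B = m A (m C B) := by
    exact (HS A C B (by simp) (by simp) (by simp)).symm
  have c36 : m (m A C) (i B) = m A (m C (i B)) := by
    exact (HS A C (i B) (by simp) (by simp) (by simp)).symm
  have c42 : m (m A (i C)) (i B) = m A (m (i C) (i B)) := by
    exact (HS A (i C) (i B) (by simp) (by simp) (by simp)).symm
  have c61 : m (m (i A) B) C = m (i A) (m B C) := by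
    exact (HS (i A) B C (by simp) (by simp) (by simp)).symm
  have c71 : m (m (i A) C) B = m (i A) (m C B) := by
    exact (HS (i A) C B (by simp) (by simp) (by simp)).symm
  have c72 : m (m (i A) C) (i B) = m (i A) (m C (i B)) := by
    exact (HS (i A) C (i B) (by simp) (by simp) (by simp)).symm
  have c85 : m (m B A) C = m B (m A C) := by
    exact (HS B A C (by simp) (by simp) (by simp)).symm
  have c86 : m (m B A) (i C) = m B (m A (i C)) := by
    exact (HS B A (i C) (by simp) (by simp) (by simp)).symm
  have c91 : m (m B (i A)) C = m B (m (i A) C) := by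
    exact (HS B (i A) C (by simp) (by simp) (by simp)).symm
  have c105 : m (m B C) A = m B (m C A) := by
    exact (HS B C A (by simp) (by simp) (by simp)).symm
  have c106 : m (m B C) (i A) = m B (m C (i A)) := by
    exact (HS B C (i A) (by simp) (by simp) (by simp)).symm
  have c108 : m (m B C) (i B) = m B (m C (i B)) := by
    exact (HS B C (i B) (by simp) (by simp) (by simp)).symm
  have c111 : m (m B (i C)) A = m B (m (i C) A) := by
    exact (HS B (i C) A (by simp) (by simp) (by simp)).symm
  have c121 : m (m (i B) A) C = m (i B) (m A C) := by
    exact (HS (i B) A C (by simp) (by simp) (by simp)).symm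
  have c127 : m (m (i B) (i A)) C = m (i B) (m (i A) C) := by
    exact (HS (i B) (i A) C (by simp) (by simp) (by simp)).symm
  have c142 : m (m (i B) C) (i A) = m (i B) (m C (i A)) := by
    exact (HS (i B) C (i A) (by simp) (by simp) (by simp)).symm
  have c147 : m (m (i B) (i C)) A = m (i B) (m (i C) A) := by
    exact (HS (i B) (i C) A (by simp) (by simp) (by simp)).symm
  have c148 : m (m (i B) (i C)) (i A) = m (i B) (m (i C) (i A)) := by
    exact (HS (i B) (i C) (i A) (by simp) (by simp) (by simp)).symm
  have c155 : m (m C A) B = m C (m A B) := by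
    exact (HS C A B (by simp) (by simp) (by simp)).symm
  have c156 : m (m C A) (i B) = m C (m A (i B)) := by
    exact (HS C A (i B) (by simp) (by simp) (by simp)).symm
  have c161 : m (m C (i A)) B = m C (m (i A) B) := by
    exact (HS C (i A) B (by simp) (by simp) (by simp)).symm
  have c162 : m (m C (i A)) (i B) = m C (m (i A) (i B)) := by
    exact (HS C (i A) (i B) (by simp) (by simp) (by simp)).symm
  have c165 : m (m C B) A = m C (m B A) := by
    exact (HS C B A (by simp) (by simp) (by simp)).symm
  have c166 : m (m C B) (i A) = m C (m B (i A)) := by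
    exact (HS C B (i A) (by simp) (by simp) (by simp)).symm
  have c171 : m (m C (i B)) A = m C (m (i B) A) := by
    exact (HS C (i B) A (by simp) (by simp) (by simp)).symm
  have c191 : m (m (i C) A) B = m (i C) (m A B) := by
    exact (HS (i C) A B (by simp) (by simp) (by simp)).symm
  have c208 : m (m (i C) (i B)) (i A) = m (i C) (m (i B) (i A)) := by
    exact (HS (i C) (i B) (i A) (by simp) (by simp) (by simp)).symm
  have c226 : ∀ x0, m (i x0) x0 = e := by
    intro x0
    have := c1 x0
    have := c2 x0 e
    grind (ematch := 0) only
  have c230 : ∀ x0 x1, m (i (m x0 x1)) x0 = i x1 := by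
    intro x0 x1
    have := c3 x0 x1
    have := c2 (m x0 x1) (i x1)
    grind (ematch := 0) only
  have c234 : ∀ x1 x0, m (i x1) (m (m x1 x0) (i x1)) = m x0 (i x1) := by
    intro x1 x0
    have := c4 (i x1) (m x1 x0)
    have := c2 x1 x0
    grind (ematch := 0) only
  have c235 : ∀ x0 x1, m (m x0 (m x1 x0)) (i x0) = m x0 x1 := by
    intro x0 x1
    have := c4 x0 x1
    have := c3 (m x0 x1) x0
    grind (ematch := 0) only
  have c240 : ∀ x0 x1 x2, m (m (m x0 x1) (m x2 x0)) (i x2) = m x0 (m (m x1 (m x2 x0)) (i x2)) := by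
    intro x0 x1 x2
    have := c2 x2 x0
    have := c5 (i x2) (m x2 x0) x1
    grind (ematch := 0) only
  have c241 : ∀ x0 x1 x2, m (m (m x0 x1) (m (m x2 x1) x0)) (i x0) = m (m (m x0 x1) x2) x1 := by
    intro x0 x1 x2
    have := c5 x0 x1 x2
    have := c3 (m (m (m x0 x1) x2) x1) x0
    grind (ematch := 0) only
  have c244 : ∀ x0 x1 x2, m (m (m x0 x1) (i x2)) (m x0 x2) = m x0 (m (m x1 (i x2)) (m x0 x2)) := by
    intro x0 x1 x2
    have := c3 x0 x2
    have := c5 (m x0 x2) (i x2) x1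
    grind (ematch := 0) only
  have c249 : ∀ x0 x1 x2, m (i (m x0 (m x1 x2))) (m x0 (m x1 (m x2 (m x1 x0)))) = m x1 x0 := by
    intro x0 x1 x2
    have := c6 x0 x1 x2
    have := c2 (m x0 (m x1 x2)) (m x1 x0)
    grind (ematch := 0) only
  have c250 : ∀ x0 x2 x1, m x0 (m (i x2) (m (m x2 x1) (m (i x2) x0))) = m (m x0 x1) (m (i x2) x0) := by
    intro x0 x2 x1
    have := c6 x0 (i x2) (m x2 x1)
    have := c2 x2 x1
    grind (ematch := 0) only
  have c252 : ∀ x0 x1 x2, m (m x0 (m x1 (m x2 (m x1 x0)))) (i (m x1 x0)) = m x0 (m x1 x2) := by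
    intro x0 x1 x2
    have := c6 x0 x1 x2
    have := c3 (m x0 (m x1 x2)) (m x1 x0)
    grind (ematch := 0) only
  have c253 : ∀ x0 x1 x2, m x0 (m (m x1 x2) (m (i x2) (m (m x1 x2) x0))) = m (m x0 x1) (m (m x1 x2) x0) := by
    intro x0 x1 x2
    have := c6 x0 (m x1 x2) (i x2)
    have := c3 x1 x2
    grind (ematch := 0) only
  have c254 : ∀ x0 x1 x2, m (m (i x0) (m (m x1 x0) x2)) x1 = m (i x0) (m (m x1 x0) (m x2 x1)) := by
    intro x0 x1 x2
    have := c3 x1 x0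
    have := c6 (i x0) (m x1 x0) x2
    grind (ematch := 0) only
  have c522 : m (m B (m A C)) (i C) = m B A := by
    have := c85
    have := c3 (m B A) C
    grind (ematch := 0) only
  have c529 : m (i (m B A)) (m B (m A (i C))) = i C := by
    have := c86
    have := c2 (m B A) (i C)
    grind (ematch := 0) only
  have c545 : m (m B (m (i A) C)) (i C) = m B (i A) := by
    have := c91
    have := c3 (m B (i A)) C
    grind (ematch := 0) only
  have c582 : m (i (m B C)) (m B (m C A)) = A := by
    have := c105
    have := c2 (m B C) A
    grind (ematch := 0) only
  have c583 : m (m B (m C A)) (i A) = m B C := by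
    have := c105
    have := c3 (m B C) A
    grind (ematch := 0) only
  have c609 : m (m B (m (i C) A)) (i A) = m B (i C) := by
    have := c111
    have := c3 (m B (i C)) A
    grind (ematch := 0) only
  have c743 : m (m C (m A B)) (i B) = m C A := by
    have := c155
    have := c3 (m C A) B
    grind (ematch := 0) only
  have c781 : m (m C (m B A)) (i A) = m C B := by
    have := c165
    have := c3 (m C B) A
    grind (ematch := 0) only
  have c977 : ∀ x0, i (i x0) = x0 := by
    intro x0
    have := c1 (i (i x0))
    have := c226 x0
    have := c2 (i x0) x0
    grind (ematch := 0) only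
  have c979 : ∀ x0 x1, m x0 (m (i x0) x1) = x1 := by
    intro x0 x1
    have := c977 x0
    have := c2 (i x0) x1
    grind (ematch := 0) only
  have c980 : ∀ x0 x1, m (m x0 (i x1)) x1 = x0 := by
    intro x0 x1
    have := c977 x1
    have := c3 x0 (i x1)
    grind (ematch := 0) only
  have c1014 : ∀ x1 x0, i (m x1 x0) = m (i x0) (i x1) := by
    intro x1 x0
    have := c230 (i x1) (m x1 x0)
    have := c2 x1 x0
    grind (ematch := 0) only
  have c1114 : ∀ x2 x1 x0, m (m x2 x1) (m (m (m (i (m x2 x1)) x0) x1) x2) = m (m x0 x1) x2 := by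
    intro x2 x1 x0
    have := c5 x2 x1 (m (i (m x2 x1)) x0)
    have := c979 (m x2 x1) x0
    grind (ematch := 0) only
  have c1117 : ∀ x0 x1 x2, m (m (m (i x0) x1) (m x0 x2)) x1 = m (m (i x0) x1) (m x0 (m x2 x1)) := by
    intro x0 x1 x2
    have := c979 x0 x1
    have := c6 (m (i x0) x1) x0 x2
    grind (ematch := 0) only
  have c1123 : ∀ x0 x1 x2, m (m (m x0 x1) x2) (m x0 (i x2)) = m x0 (m (m x1 x2) (m x0 (i x2))) := by
    intro x0 x1 x2
    have := c980 x0 x2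
    have := c5 (m x0 (i x2)) x2 x1
    grind (ematch := 0) only
  have c1131 : m (m A (m (i B) (i C))) C = m A (i B) := by
    have := c32
    have := c980 (m A (i B)) C
    grind (ematch := 0) only
  have c1132 : m (m A (m C (i B))) B = m A C := by
    have := c36
    have := c980 (m A C) B
    grind (ematch := 0) only
  have c1133 : m (m A (m (i C) (i B))) B = m A (i C) := by
    have := c42
    have := c980 (m A (i C)) B
    grind (ematch := 0) only
  have c1136 : m (m (i A) (m C (i B))) B = m (i A) C := by
    have := c72
    have := c980 (m (i A) C) B
    grind (ematch := 0) only
  have c1138 : m (m B (m A (i C))) C = m B A := by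
    have := c86
    have := c980 (m B A) C
    grind (ematch := 0) only
  have c1140 : m (m B (m C (i A))) A = m B C := by
    have := c106
    have := c980 (m B C) A
    grind (ematch := 0) only
  have c1144 : m (m (i B) (m C (i A))) A = m (i B) C := by
    have := c142
    have := c980 (m (i B) C) A
    grind (ematch := 0) only
  have c1146 : m (m C (m A (i B))) B = m C A := by
    have := c156
    have := c980 (m C A) B
    grind (ematch := 0) only
  have c1147 : m (m C (m (i A) (i B))) B = m C (i A) := by
    have := c162
    have := c980 (m C (i A)) B
    grind (ematch := 0) only
  have c1148 : m (m C (m B (i A))) A = m C B := by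
    have := c166
    have := c980 (m C B) A
    grind (ematch := 0) only
  have c1372 : ∀ x0 x1, m (m x0 x1) (i x0) = m x0 (m x1 (i x0)) := by
    intro x0 x1
    have := c2 (i x0) (m (m x0 x1) (i x0))
    have := c234 x0 x1
    have := c977 x0
    grind (ematch := 0) only
  have c1420 : ∀ x0 x1, m (m (i x0) x1) x0 = m (i x0) (m x1 x0) := by
    intro x0 x1
    have := c977 x0
    have := c3 x1 x0
    have := c235 (i x0) (m x1 x0)
    grind (ematch := 0) only
  have c1775 : ∀ x0 x1 x2, m (m x0 (m x1 (m x2 (m x1 x0)))) (i x1) = m x0 (m (m (m x1 x2) (m x1 x0)) (i x1)) := by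
    intro x0 x1 x2
    have := c6 x0 x1 x2
    have := c240 x0 (m x1 x2) x1
    grind (ematch := 0) only
  have c1794 : ∀ x0 x1 x2, m (m (i x0) (i x1)) (m (m x1 x0) x2) = x2 := by
    intro x0 x1 x2
    have := c1014 x1 x0
    have := c2 (m x1 x0) x2
    grind (ematch := 0) only
  have c1795 : ∀ x0 x1 x2, m (m x0 (m x1 x2)) (m (i x2) (i x1)) = x0 := by
    intro x0 x1 x2
    have := c1014 x1 x2
    have := c3 x0 (m x1 x2)
    grind (ematch := 0) only
  have c1806 : ∀ x0 x1 x2, m (m x0 (m (m x1 (i x2)) (m x0 x2))) (m (i x2) (i x0)) = m (m x0 x1) (i x2) := by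
    intro x0 x1 x2
    have := c1014 x0 x2
    have := c3 x0 x2
    have := c241 (m x0 x2) (i x2) x1
    grind (ematch := 0) only
  have c1916 : ∀ x2 x0 x1, m (i x2) (m (m (m x2 x0) (i x1)) (m (i x2) x1)) = m (m x0 (i x1)) (m (i x2) x1) := by
    intro x2 x0 x1
    have := c244 (i x2) (m x2 x0) x1
    have := c2 x2 x0
    grind (ematch := 0) only
  have c2307 : ∀ x2 x1 x0, m (m (m (i x2) (i x1)) (i x0)) (m x0 (m x1 (m x2 (m x1 x0)))) = m x1 x0 := by
    intro x2 x1 x0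
    have := c1014 x1 x2
    have := c1014 x0 (m x1 x2)
    have := c249 x0 x1 x2
    grind (ematch := 0) only
  have c2328 : ∀ x1 x2 x0, m (m (m (m (m x1 x2) (i x0)) (i x1)) (i x2)) (m x2 (m x1 x0)) = m x1 x2 := by
    intro x1 x2 x0
    have := c977 x1
    have := c977 x2
    have := c1014 (i x2) (i x1)
    have := c1014 x0 (m (i x2) (i x1))
    have := c1014 x1 x2
    have := c980 x0 (m x1 x2)
    have := c2307 (m x0 (i (m x1 x2))) x1 x2
    grind (ematch := 0) only
  have c2365 : ∀ x0 x1 x2, m (m x0 x1) (m (i x0) (m (m x0 x2) x1)) = m (m (m x0 x1) x2) x1 := by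
    intro x0 x1 x2
    have := c2 x0 x1
    have := c250 (m x0 x1) x0 x2
    grind (ematch := 0) only
  have c2376 : m (m (i C) (i B)) (m B (m C A)) = A := by
    have := c1014 B C
    have := c582
    grind (ematch := 0) only
  have c2436 : ∀ x0 x1 x2, m (m x0 (m x1 (m x2 (m x1 x0)))) (m (i x0) (i x1)) = m x0 (m x1 x2) := by
    intro x0 x1 x2
    have := c1014 x1 x0
    have := c252 x0 x1 x2
    grind (ematch := 0) only
  have c2440 : ∀ x0 x1 x2, m (m (i x0) (m (m x1 x0) (m x2 x1))) (i x1) = m (i x0) (m (m x1 x0) x2) := by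
    intro x0 x1 x2
    have := c979 x0 (i x1)
    have := c977 x0
    have := c1014 x1 x0
    have := c3 x1 x0
    have := c2436 (i x0) (m x1 x0) x2
    grind (ematch := 0) only
  have c2630 : m (m (i A) (m B (m A C))) B = m (i A) (m (m B A) (m C B)) := by
    have := c85
    have := c254 A B C
    grind (ematch := 0) only
  have c2633 : m (m A (m B (m (i A) C))) B = m A (m (m B (i A)) (m C B)) := by
    have := c977 A
    have := c91
    have := c254 (i A) B C
    grind (ematch := 0) only
  have c2856 : ∀ x0, m (m (m x0 A) (m (m B C) x0)) (i x0) = m (m (m x0 A) (m B (m C (i A)))) A := by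
    intro x0
    have := c1140
    have := c241 x0 A (m B (m C (i A)))
    grind (ematch := 0) only
  have c2858 : m A (m (m B (m C (i A))) (m (m A (i C)) (m B C))) = m (m A B) (m B C) := by
    have := c977 A
    have := c1014 C (i A)
    have := c1140
    have := c253 A B (m C (i A))
    grind (ematch := 0) only
  have c4103 : ∀ x2 x1 x0, m (m (i x2) (i x1)) (m (m (m (m x1 x2) x0) (i x1)) (i x2)) = m (m x0 (i x1)) (i x2) := by
    intro x2 x1 x0
    have := c5 (i x2) (i x1) (m (m x1 x2) x0)
    have := c1794 x2 x1 x0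
    grind (ematch := 0) only
  have c4175 : m (m (i A) C) (m (i C) (m A B)) = B := by
    have := c977 C
    have := c191
    have := c1794 A (i C) B
    grind (ematch := 0) only
  have c4191 : ∀ x0 x1 x2, m (m x0 (i x1)) (m (m x1 (i x0)) x2) = x2 := by
    intro x0 x1 x2
    have := c977 x0
    have := c1794 (i x0) x1 x2
    grind (ematch := 0) only
  have c4237 : ∀ x0, m (m x0 (m A (m C B))) (m (i B) (m (i C) (i A))) = x0 := by
    intro x0
    have := c1014 A C
    have := c35
    have := c1795 x0 (m A C) B
    grind (ematch := 0) only
  have c4245 : ∀ x0, m (m x0 (m (i A) (m C B))) (m (i B) (m (i C) A)) = x0 := by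
    intro x0
    have := c977 A
    have := c1014 (i A) C
    have := c71
    have := c1795 x0 (m (i A) C) B
    grind (ematch := 0) only
  have c4281 : ∀ x0 x1 x2, m (m x0 (m x1 (i x2))) (m x2 (i x1)) = x0 := by
    intro x0 x1 x2
    have := c977 x2
    have := c1795 x0 x1 (i x2)
    grind (ematch := 0) only
  have c5128 : ∀ x2 x1 x0, m (m x2 (i x1)) (m (m (m (m x1 (i x2)) x0) (i x1)) x2) = m (m x0 (i x1)) x2 := by
    intro x2 x1 x0
    have := c5 x2 (i x1) (m (m x1 (i x2)) x0)
    have := c4191 x2 x1 x0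
    grind (ematch := 0) only
  have c5145 : ∀ x0 x2 x1, m x0 (m (m x2 (i x0)) (m (m (m x0 (i x2)) x1) x2)) = m (m x0 x1) x2 := by
    intro x0 x2 x1
    have := c977 x0
    have := c254 (i x0) x2 (m (m x0 (i x2)) x1)
    have := c4191 x2 x0 x1
    grind (ematch := 0) only
  have c5322 : m (m (i A) (i B)) (m B (m A (i C))) = i C := by
    have := c1014 B A
    have := c529
    grind (ematch := 0) only
  have c5324 : m (m (i A) (i B)) (m (m B (m A (m (i C) (i B)))) (i A)) = m (i C) (m (i B) (i A)) := by
    have := c42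
    have := c1372 B (m A (i C))
    have := c5 (i A) (i B) (m B (m A (i C)))
    have := c5322
    have := c208
    grind (ematch := 0) only
  have c5327 : m (m B (i A)) (m B C) = m B (m (i A) (m B C)) := by
    have := c545
    have := c244 B (m (i A) C) C
    have := c3 (i A) C
    grind (ematch := 0) only
  have c13314 : m (m A (i B)) (m B (m (i A) (m B C))) = m B C := by
    have := c977 A
    have := c1014 B (i A)
    have := c5327
    have := c2 (m B (i A)) (m B C)
    grind (ematch := 0) only
  have c26333 : ∀ x0 x1 x2, m (m x0 x1) (m (m (m (m (i x1) (i x0)) x2) x1) x0) = m (m x2 x1) x0 := by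
    intro x0 x1 x2
    have := c1014 x0 x1
    have := c1114 x0 x1 x2
    grind (ematch := 0) only
  have c26337 : ∀ x0 x2 x1, m x0 (m (m (m (i x0) x2) x1) (m x0 (i x1))) = m (m x2 x1) (m x0 (i x1)) := by
    intro x0 x2 x1
    have := c2 x1 (i x0)
    have := c977 x1
    have := c1014 x0 (i x1)
    have := c980 x0 x1
    have := c26333 (m x0 (i x1)) x1 x2
    grind (ematch := 0) only
  have c33486 : ∀ x1 x0 x2, m (m (i x1) (i x0)) (m (m (m x0 x1) x2) x1) = m (i x0) (m (m x0 x2) x1) := by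
    intro x1 x0 x2
    have := c1014 x0 x1
    have := c2365 x0 x1 x2
    have := c2 (m x0 x1) (m (i x0) (m (m x0 x2) x1))
    grind (ematch := 0) only
  have c33491 : m (m A (m B C)) B = m (m A B) (m C B) := by
    have := c25
    have := c2365 A B C
    have := c35
    have := c2 A (m C B)
    grind (ematch := 0) only
  have c33494 : m (m (i A) (m B C)) B = m (m (i A) B) (m C B) := by
    have := c61
    have := c2365 (i A) B C
    have := c71
    have := c977 A
    have := c979 A (m C B)
    grind (ematch := 0) only
  have c33515 : m (m (m B (i C)) (m A C)) (i C) = m B (m (i C) A) := by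
    have := c2365 B (i C) (m A C)
    have := c522
    have := c2 B A
    have := c111
    grind (ematch := 0) only
  have c33516 : m (m (m B (i A)) (m C A)) (i A) = m B (m (i A) C) := by
    have := c2365 B (i A) (m C A)
    have := c583
    have := c2 B C
    have := c91
    grind (ematch := 0) only
  have c33518 : m (m (m C (i B)) (m A B)) (i B) = m C (m (i B) A) := by
    have := c2365 C (i B) (m A B)
    have := c743
    have := c2 C A
    have := c171
    grind (ematch := 0) only
  have c33519 : m (m (m C (i A)) (m B A)) (i A) = m C (m (i A) B) := by
    have := c2365 C (i A) (m B A)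
    have := c781
    have := c2 C B
    have := c161
    grind (ematch := 0) only
  have c33522 : m (m (m A B) (m C (i B))) B = m A (m B C) := by
    have := c2365 A B (m C (i B))
    have := c1132
    have := c2 A C
    have := c25
    grind (ematch := 0) only
  have c33523 : m (m (m B C) (m A (i C))) C = m B (m C A) := by
    have := c2365 B C (m A (i C))
    have := c1138
    have := c2 B A
    have := c105
    grind (ematch := 0) only
  have c33524 : m (m (m B A) (m C (i A))) A = m B (m A C) := by
    have := c2365 B A (m C (i A))
    have := c1140
    have := c2 B C
    have := c85
    grind (ematch := 0) only
  have c33525 : m (m (m C B) (m A (i B))) B = m C (m B A) := by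
    have := c2365 C B (m A (i B))
    have := c1146
    have := c2 C A
    have := c165
    grind (ematch := 0) only
  have c33526 : m (m (m C A) (m B (i A))) A = m C (m A B) := by
    have := c2365 C A (m B (i A))
    have := c1148
    have := c2 C B
    have := c155
    grind (ematch := 0) only
  have c33544 : m (m (m A C) (m (i B) (i C))) C = m A (m C (i B)) := by
    have := c2365 A C (m (i B) (i C))
    have := c1131
    have := c2 A (i B)
    have := c36
    grind (ematch := 0) only
  have c33551 : m (m (m (i B) A) (m C (i A))) A = m (i B) (m A C) := by
    have := c2365 (i B) A (m C (i A))
    have := c1144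
    have := c977 B
    have := c979 B C
    have := c121
    grind (ematch := 0) only
  have c33552 : m (m (m C B) (m (i A) (i B))) B = m C (m B (i A)) := by
    have := c2365 C B (m (i A) (i B))
    have := c1147
    have := c2 C (i A)
    have := c166
    grind (ematch := 0) only
  have c34037 : m (m A (m B C)) (i B) = m (m A B) (m C (i B)) := by
    have := c33522
    have := c3 (m (m A B) (m C (i B))) B
    grind (ematch := 0) only
  have c34120 : m (m B C) (m A B) = m B (m C (m A B)) := by
    have := c980 A C
    have := c5 B C (m A (i C))
    have := c33523
    have := c4 B (m C A)
    have := c155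
    grind (ematch := 0) only
  have c34199 : m (m B A) (m C B) = m B (m A (m C B)) := by
    have := c980 C A
    have := c5 B A (m C (i A))
    have := c33524
    have := c4 B (m A C)
    have := c35
    grind (ematch := 0) only
  have c34318 : m (m C B) (m A C) = m C (m B (m A C)) := by
    have := c980 A B
    have := c5 C B (m A (i B))
    have := c33525
    have := c4 C (m B A)
    have := c85
    grind (ematch := 0) only
  have c34358 : m (m C (m B (m A C))) (m (i C) (i A)) = m C B := by
    have := c1014 A C
    have := c34318
    have := c3 (m C B) (m A C)
    grind (ematch := 0) only
  have c34397 : m (m C A) (m B C) = m C (m A (m B C)) := by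
    have := c980 B A
    have := c5 C A (m B (i A))
    have := c33526
    have := c4 C (m A B)
    have := c25
    grind (ematch := 0) only
  have c34437 : m (m C (m A (m B C))) (m (i C) (i B)) = m C A := by
    have := c1014 B C
    have := c34397
    have := c3 (m C A) (m B C)
    grind (ematch := 0) only
  have c34794 : m (m (m (i A) B) (m C B)) (i B) = m (i A) (m B C) := by
    have := c33494
    have := c3 (m (i A) (m B C)) B
    grind (ematch := 0) only
  have c35279 : m (m B (i C)) (m (i B) (i A)) = m B (m (i C) (m (i B) (i A))) := by
    have := c977 B
    have := c1014 C (i B)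
    have := c1014 A B
    have := c1014 (m A B) (m C (i B))
    have := c34037
    have := c1014 (m A (m B C)) (i B)
    have := c1014 A (m B C)
    have := c1014 B C
    have := c208
    grind (ematch := 0) only
  have c35636 : m (m (i A) B) (m A C) = m (i A) (m B (m A C)) := by
    have := c2 C B
    have := c977 A
    have := c977 C
    have := c34358
    have := c2436 (i A) (i C) (m C (m B (m A C)))
    have := c2 C (m B (m A C))
    grind (ematch := 0) only
  have c35719 : m (m (i B) A) (m B C) = m (i B) (m A (m B C)) := by
    have := c2 C A
    have := c977 B
    have := c977 C
    have := c34437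
    have := c2436 (i B) (i C) (m C (m A (m B C)))
    have := c2 C (m A (m B C))
    grind (ematch := 0) only
  have c35865 : m (m (i A) (m B (m A C))) B = m (m (i A) B) (m A (m C B)) := by
    have := c979 A B
    have := c35636
    have := c6 (m (i A) B) A C
    grind (ematch := 0) only
  have c36400 : m (m B (i C)) (m A B) = m B (m (i C) (m A B)) := by
    have := c3 A C
    have := c5 B (i C) (m A C)
    have := c33515
    have := c4 B (m (i C) A)
    have := c191
    grind (ematch := 0) only
  have c36475 : m (m C (i B)) (m B (m (i C) (m A B))) = m A B := by
    have := c977 C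
    have := c1014 B (i C)
    have := c36400
    have := c2 (m B (i C)) (m A B)
    grind (ematch := 0) only
  have c36476 : m (m B (m (i C) (m A B))) (m (i B) (i A)) = m B (i C) := by
    have := c1014 A B
    have := c36400
    have := c3 (m B (i C)) (m A B)
    grind (ematch := 0) only
  have c36510 : m (m A B) (m (i B) (m (i A) (m C (i B)))) = m C (i B) := by
    have := c72
    have := c4 (i B) (m (i A) C)
    have := c127
    have := c1014 A B
    have := c977 C
    have := c1014 (i C) (m A B)
    have := c1014 B (m (i C) (m A B))
    have := c36475
    have := c3 (m C (i B)) (m B (m (i C) (m A B)))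
    grind (ematch := 0) only
  have c36538 : m (m B (i A)) (m C B) = m B (m (i A) (m C B)) := by
    have := c3 C A
    have := c5 B (i A) (m C A)
    have := c33516
    have := c4 B (m (i A) C)
    have := c71
    grind (ematch := 0) only
  have c36614 : m (m B (m (i A) (m C B))) (m (i B) (i C)) = m B (i A) := by
    have := c1014 C B
    have := c36538
    have := c3 (m B (i A)) (m C B)
    grind (ematch := 0) only
  have c36814 : m (m C (i A)) (m B C) = m C (m (i A) (m B C)) := by
    have := c3 B A
    have := c5 C (i A) (m B A)
    have := c33519
    have := c4 C (m (i A) B)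
    have := c61
    grind (ematch := 0) only
  have c36890 : m (m C (m (i A) (m B C))) (m (i C) (i B)) = m C (i A) := by
    have := c1014 B C
    have := c36814
    have := c3 (m C (i A)) (m B C)
    grind (ematch := 0) only
  have c36952 : m (m A C) (m (i B) A) = m A (m C (m (i B) A)) := by
    have := c980 (i B) C
    have := c5 A C (m (i B) (i C))
    have := c33544
    have := c4 A (m C (i B))
    have := c171
    grind (ematch := 0) only
  have c36992 : m (m A (m C (m (i B) A))) (m (i A) B) = m A C := by
    have := c977 B
    have := c1014 (i B) A
    have := c36952
    have := c3 (m A C) (m (i B) A)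
    grind (ematch := 0) only
  have c37029 : m (m B C) (m (i B) A) = m B (m C (m (i B) A)) := by
    have := c2 A C
    have := c977 A
    have := c36992
    have := c2436 B (i A) (m A (m C (m (i B) A)))
    have := c2 A (m C (m (i B) A))
    grind (ematch := 0) only
  have c37671 : m (m (i B) A) (m C (i B)) = m (i B) (m A (m C (i B))) := by
    have := c980 C A
    have := c5 (i B) A (m C (i A))
    have := c33551
    have := c4 (i B) (m A C)
    have := c36
    grind (ematch := 0) only
  have c37717 : m (m C B) (m (i A) C) = m C (m B (m (i A) C)) := by
    have := c980 (i A) B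
    have := c5 C B (m (i A) (i B))
    have := c33552
    have := c4 C (m B (i A))
    have := c91
    grind (ematch := 0) only
  have c37757 : m (m C (m B (m (i A) C))) (m (i C) A) = m C B := by
    have := c977 A
    have := c1014 (i A) C
    have := c37717
    have := c3 (m C B) (m (i A) C)
    grind (ematch := 0) only
  have c37794 : m (m A B) (m (i A) C) = m A (m B (m (i A) C)) := by
    have := c2 C B
    have := c977 C
    have := c37757
    have := c2436 A (i C) (m C (m B (m (i A) C)))
    have := c2 C (m B (m (i A) C))
    grind (ematch := 0) only
  have c37841 : m (m A (m B (m (i A) C))) B = m (m A B) (m (i A) (m C B)) := by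
    have := c2 A B
    have := c37794
    have := c6 (m A B) (i A) C
    grind (ematch := 0) only
  have c40584 : m (m (i A) (i C)) (m A B) = m (i A) (m (i C) (m A B)) := by
    have := c2 B (i C)
    have := c977 A
    have := c977 B
    have := c36476
    have := c2436 (i A) (i B) (m B (m (i C) (m A B)))
    have := c2 B (m (i C) (m A B))
    grind (ematch := 0) only
  have c40604 : m (m A B) (m (m (i B) (m (i A) C)) A) = m C A := by
    have := c1136
    have := c1420 B (m (i A) (m C (i B)))
    have := c5 A B (m (i B) (m (i A) (m C (i B))))
    have := c36510
    have := c980 C B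
    grind (ematch := 0) only
  have c40605 : m (m (i B) (m (i A) C)) A = m (m (i B) (i A)) (m C A) := by
    have := c2 (m A B) (m (m (i B) (m (i A) C)) A)
    have := c40604
    have := c1014 A B
    grind (ematch := 0) only
  have c40606 : m (m C A) (m (i A) (m (i C) (m A B))) = m A B := by
    have := c191
    have := c977 A
    have := c1014 (i A) C
    have := c977 B
    have := c1014 (i B) (m (i A) C)
    have := c1014 (m (i B) (m (i A) C)) A
    have := c40604
    have := c3 (m A B) (m (m (i B) (m (i A) C)) A)
    grind (ematch := 0) only
  have c40636 : m (i A) (m (m C A) (m (m (i A) (m (i C) (m A B))) C)) = m B C := by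
    have := c254 A C (m (i A) (m (i C) (m A B)))
    have := c40606
    have := c2 A B
    grind (ematch := 0) only
  have c40675 : m (m B (i A)) (m B (m C B)) = m B (m (i A) (m B (m C B))) := by
    have := c977 C
    have := c977 B
    have := c1014 (i B) (i C)
    have := c36614
    have := c1123 B (m (i A) (m C B)) (m (i B) (i C))
    have := c1795 (i A) C B
    grind (ematch := 0) only
  have c40804 : m (m (i B) (i A)) (m B C) = m (i B) (m (i A) (m B C)) := by
    have := c2 C (i A)
    have := c977 B
    have := c977 C
    have := c36890
    have := c2436 (i B) (i C) (m C (m (i A) (m B C)))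
    have := c2 C (m (i A) (m B C))
    grind (ematch := 0) only
  have c41548 : m (m (i B) (m A (m C (i B)))) (m B (i C)) = m (i B) A := by
    have := c977 B
    have := c1014 C (i B)
    have := c37671
    have := c3 (m (i B) A) (m C (i B))
    grind (ematch := 0) only
  have c48250 : ∀ x0 x2 x1, m (i x0) (m (m (m x0 (m x2 (m x0 x1))) (m (i x1) (i x0))) x1) = m x2 x1 := by
    intro x0 x2 x1
    have := c2 x1 (m x0 (m x2 (m x0 x1)))
    have := c977 x1
    have := c1775 (i x0) (i x1) (m x1 (m x0 (m x2 (m x0 x1))))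
    have := c2436 x1 x0 x2
    have := c2 x1 (m x0 x2)
    have := c2 x0 x2
    grind (ematch := 0) only
  have c49528 : ∀ x0 x1 x2, m (m x0 (m x1 (m x0 x2))) (m (i x2) (i x0)) = m (m x0 (m x1 x2)) (i x2) := by
    intro x0 x1 x2
    have := c3 x1 x2
    have := c1806 x0 (m x1 x2) x2
    grind (ematch := 0) only
  have c53662 : m (m (i A) (m B (m A C))) B = m (i A) (m B (m A (m C B))) := by
    have := c2630
    have := c34199
    grind (ematch := 0) only
  have c53696 : m (m A (m B (m (i A) C))) B = m A (m B (m (i A) (m C B))) := by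
    have := c2633
    have := c36538
    grind (ematch := 0) only
  have c54646 : ∀ x2 x0 x1, m (m x2 (i x0)) (m (m (m x0 (i x2)) x1) x2) = m (i x0) (m (m x0 x1) x2) := by
    intro x2 x0 x1
    have := c2 x0 (m (m x2 (i x0)) (m (m (m x0 (i x2)) x1) x2))
    have := c5145 x0 x2 x1
    grind (ematch := 0) only
  have c55738 : m A (m (m (i A) (m C (i B))) (m A B)) = m (m C (i B)) (m A B) := by
    have := c977 A
    have := c72
    have := c1916 (i A) C B
    grind (ematch := 0) only
  have c63886 : ∀ x0 x1 x2, m (m (m (m (m x0 x1) x2) (i x0)) (i x1)) (m x1 (m x0 (i x2))) = m x0 x1 := by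
    intro x0 x1 x2
    have := c977 x2
    have := c2328 x0 x1 (i x2)
    grind (ematch := 0) only
  have c70313 : m (m (m (i B) A) (m B (m C (i B)))) B = m (i B) (m A (m B C)) := by
    have := c977 B
    have := c1372 B C
    have := c2856 (i B)
    have := c1117 B A (m C (i A))
    have := c980 C A
    have := c35719
    grind (ematch := 0) only
  have c70654 : m (m (i A) B) (m A (m C B)) = m (i A) (m B (m A (m C B))) := by
    exact (c35865).symm.trans (
      c53662)
  have c71232 : m (m A B) (m (i A) (m C B)) = m A (m B (m (i A) (m C B))) := by
    exact (c37841).symm.trans (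
      c53696)
  have c83492 : m B (m (m (i B) A) (m B (m C (i B)))) = m A (m B (m C (i B))) := by
    have := c977 C
    have := c1014 B (i C)
    have := c41548
    have := c26337 B (m A (m C (i B))) (m B (i C))
    have := c4281 A C B
    grind (ematch := 0) only
  have c85392 : ∀ x1 x0 x2, m x1 (m (m (i x1) (m (m x0 x1) x2)) (i x0)) = m (m x0 x1) (m x2 (i x0)) := by
    intro x1 x0 x2
    have := c977 x1
    have := c33486 (i x0) (i x1) (m (m x0 x1) x2)
    have := c1794 x1 x0 x2
    have := c977 x0
    grind (ematch := 0) only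
  have c85410 : m A (m (m (i A) (m (i C) (m A B))) C) = m (m (i C) A) (m B C) := by
    have := c977 A
    have := c33486 C (i A) (m (i C) (m A B))
    have := c4175
    grind (ematch := 0) only
  have c86728 : m (m C A) (m (m (i A) (m (i C) (m A B))) C) = m A (m B C) := by
    have := c2 (i A) (m (m C A) (m (m (i A) (m (i C) (m A B))) C))
    have := c40636
    have := c977 A
    grind (ematch := 0) only
  have c86739 : m (m A (m B C)) (m (i C) (m (m (i B) (i A)) (m C A))) = m C A := by
    have := c40605
    have := c127
    have := c1014 A B
    have := c977 C
    have := c1014 (i C) (m A B)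
    have := c977 A
    have := c1014 (i A) (m (i C) (m A B))
    have := c1014 (m (i A) (m (i C) (m A B))) C
    have := c86728
    have := c3 (m C A) (m (m (i A) (m (i C) (m A B))) C)
    grind (ematch := 0) only
  have c87511 : m (m (i A) B) (m C B) = m (i A) (m B (m C B)) := by
    have := c48250 A (m (i A) B) (m C B)
    have := c70654
    have := c1014 C B
    have := c148
    have := c979 A (m B (m A (m C B)))
    have := c4237 B
    grind (ematch := 0) only
  have c87523 : m (m A B) (m C B) = m A (m B (m C B)) := by
    have := c48250 (i A) (m A B) (m C B)
    have := c71232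
    have := c977 A
    have := c1014 C B
    have := c147
    have := c2 A (m B (m (i A) (m C B)))
    have := c4245 B
    grind (ematch := 0) only
  have c88569 : m (m (i A) (m B C)) B = m (i A) (m B (m C B)) := by
    exact (c33494).trans (
      c87511)
  have c88571 : m (m (i A) (m B (m C B))) (i B) = m (i A) (m B C) := by
    have := c87511
    have := c34794
    grind (ematch := 0) only
  have c97887 : m (m B (m (i C) (i B))) (m B (m (m C (i B)) (m A B))) = m A B := by
    have := c1372 B (i C)
    have := c609
    have := c111
    have := c977 B
    have := c1014 C (i B)
    have := c977 A
    have := c1014 (i A) (m C (i B))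
    have := c55738
    have := c2307 (m (i A) (m C (i B))) A B
    grind (ematch := 0) only
  have c100495 : m (m A (i B)) (m (m B (m (i A) (m B C))) A) = m B (m C A) := by
    have := c88571
    have := c1372 B (m (i A) (m B (m C B)))
    have := c40675
    have := c5128 A B (m B (m C B))
    have := c1372 B (m C B)
    have := c3 C B
    have := c105
    grind (ematch := 0) only
  have c100960 : m (m B (m B (m C A))) (i A) = m B (m B C) := by
    have := c977 B
    have := c100495
    have := c2440 (i B) A (m B (m (i A) (m B C)))
    have := c13314
    grind (ematch := 0) only
  have c100975 : m (m B (m B C)) A = m B (m B (m C A)) := by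
    have := c977 A
    have := c100960
    have := c3 (m B (m B (m C A))) (i A)
    grind (ematch := 0) only
  have c105037 : m (m A (m B (m C (i B)))) B = m A (m B C) := by
    have := c83492
    have := c4 B (m (m (i B) A) (m B (m C (i B))))
    have := c70313
    have := c979 B (m A (m B C))
    grind (ematch := 0) only
  have c105045 : m (m A B) (m C (i B)) = m A (m B (m C (i B))) := by
    have := c34037
    have := c105037
    have := c3 (m A (m B (m C (i B)))) B
    grind (ematch := 0) only
  have c105098 : m (m B (m (i C) (i B))) (i A) = m B (m (i C) (m (i B) (i A))) := by
    have := c1372 B (i C)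
    have := c977 B
    have := c1014 C (i B)
    have := c1014 B (m C (i B))
    have := c1014 A (m B (m C (i B)))
    have := c105045
    have := c1014 (m A B) (m C (i B))
    have := c1014 A B
    have := c35279
    grind (ematch := 0) only
  have c105458 : m (m B (m (i C) (m (i B) (i A)))) A = m B (m (i C) (i B)) := by
    have := c977 A
    have := c105098
    have := c3 (m B (m (i C) (i B))) (i A)
    grind (ematch := 0) only
  have c109460 : m (m (i A) (i B)) (m B (m A (m (i C) (i B)))) = m (i C) (i B) := by
    have := c980 (m B (m A (m (i C) (i B)))) A
    have := c977 A
    have := c85392 (i B) (i A) (m (m B (m A (m (i C) (i B)))) (i A))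
    have := c5324
    have := c977 B
    have := c105458
    have := c2 B (m (i C) (i B))
    grind (ematch := 0) only
  have c109676 : m (m B A) (m (i C) (i B)) = m B (m A (m (i C) (i B))) := by
    have := c977 B
    have := c977 A
    have := c1014 (i A) (i B)
    have := c109460
    have := c2 (m (i A) (i B)) (m B (m A (m (i C) (i B))))
    grind (ematch := 0) only
  have c116297 : m (i B) (m (m B C) (m (m (i C) A) (m B C))) = m A (m B C) := by
    have := c979 C (i B)
    have := c3 C A
    have := c1014 B C
    have := c85410
    have := c40584
    have := c1014 C A
    have := c977 A
    have := c977 B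
    have := c1014 (i B) (i A)
    have := c1014 (m (i B) (i A)) (m C A)
    have := c977 C
    have := c1014 (i C) (m (m (i B) (i A)) (m C A))
    have := c86739
    have := c63886 A (m B C) (m (i C) (m (m (i B) (i A)) (m C A)))
    grind (ematch := 0) only
  have c116298 : m (m B C) (m (m (i C) A) (m B C)) = m B (m A (m B C)) := by
    have := c2 (i B) (m (m B C) (m (m (i C) A) (m B C)))
    have := c116297
    have := c977 B
    grind (ematch := 0) only
  have c116309 : m (m B C) (m (i C) A) = m B A := by
    have := c1795 (m (i C) A) B C
    have := c1014 B C
    have := c1372 (m B C) (m (m (i C) A) (m B C))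
    have := c116298
    have := c49528 B A C
    have := c522
    grind (ematch := 0) only
  have c116312 : m (m B A) (m (i A) C) = m B C := by
    have := c977 C
    have := c1014 (i C) A
    have := c116309
    have := c3 (m B C) (m (i C) A)
    grind (ematch := 0) only
  have c116539 : m (m (i A) (i B)) (m B C) = m (i A) C := by
    have := c1014 B A
    have := c116312
    have := c2 (m B A) (m (i A) C)
    grind (ematch := 0) only
  have c116983 : m (m B A) (m (i A) (m C B)) = m B (m C B) := by
    have := c977 A
    have := c71
    have := c116539
    have := c54646 B (i A) (m B C)
    have := c88569
    have := c979 A (m B (m C B))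
    grind (ematch := 0) only
  have c117137 : m (m B (m C (i A))) (m A (m (i C) A)) = m B A := by
    have := c106
    have := c3 C B
    have := c1372 B (m C B)
    have := c979 B (m (i C) A)
    have := c147
    have := c1014 C B
    have := c977 A
    have := c1014 (i A) (m C B)
    have := c116983
    have := c63886 B A (m (i A) (m C B))
    grind (ematch := 0) only
  have c117230 : m (m A (m (i C) (i B))) (m B A) = m A (m (i C) A) := by
    have := c42
    have := c977 A
    have := c1014 C (i A)
    have := c1014 B (m C (i A))
    have := c117137
    have := c2 (m B (m C (i A))) (m A (m (i C) A))
    grind (ematch := 0) only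
  have c117516 : m (m B (m C (i A))) (m (m A (i C)) (m B C)) = m B (m B C) := by
    have := c106
    have := c977 B
    have := c977 C
    have := c1014 (i C) (i B)
    have := c3 (i C) A
    have := c1372 A (m (i C) A)
    have := c117230
    have := c4103 (m (i C) (i B)) A (m B A)
    have := c3 B A
    grind (ematch := 0) only
  have c118660 : m (m A B) (m B C) = m A (m B (m B C)) := by
    have := c2858
    have := c117516
    grind (ematch := 0) only
  have c125807 : m (m B (m (i C) (i B))) (m B (m C (m (i B) A))) = A := by
    have := c33518
    have := c1372 B (m (m C (i B)) (m A B))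
    have := c85392 (m (i C) (i B)) B (m B (m (m C (i B)) (m A B)))
    have := c97887
    have := c1014 (i C) (i B)
    have := c977 C
    have := c977 B
    have := c34120
    have := c1372 B (m C (m A B))
    have := c743
    have := c2376
    grind (ematch := 0) only
  have c125808 : m (m B (m C (i B))) A = m B (m C (m (i B) A)) := by
    have := c1372 B C
    have := c977 B
    have := c977 C
    have := c1014 (i C) (i B)
    have := c1014 B (m (i C) (i B))
    have := c125807
    have := c2 (m B (m (i C) (i B))) (m B (m C (m (i B) A)))
    grind (ematch := 0) only
  have goal_g024 : m A (m B (m B C)) = m (m A B) (m B C) := by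
    exact (c118660).symm
  have goal_g430 : m (m B C) (m (i B) A) = m (m (m B C) (i B)) A := by
    have := c37029
    have := c125808
    have := c108
    grind (ematch := 0) only
  have goal_g134 : m (i A) (m (i B) (m B C)) = m (m (i A) (i B)) (m B C) := by
    have := c2 B C
    have := c116539
    grind (ematch := 0) only
  have goal_g042 : m A (m (m B C) B) = m (m A (m B C)) B := by
    have := c4 B C
    have := c87523
    have := c33491
    grind (ematch := 0) only
  have goal_g043 : m A (m (m B C) (i B)) = m (m A (m B C)) (i B) := by
    have := c108
    have := c105045
    have := c34037
    grind (ematch := 0) only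
  have goal_g052 : m A (m (i (m B C)) B) = m (m A (i (m B C))) B := by
    have := c230 B C
    have := c1133
    have := c1014 B C
    grind (ematch := 0) only
  have goal_g240 : m B (m (m B C) A) = m (m B (m B C)) A := by
    have := c105
    have := c100975
    grind (ematch := 0) only
  have goal_g214 : m B (m (i A) (m B C)) = m (m B (i A)) (m B C) := by
    exact (c5327).symm
  have goal_g205 : m B (m A (i (m B C))) = m (m B A) (i (m B C)) := by
    have := c1014 B C
    have := c109676
    grind (ematch := 0) only
  have goal_g314 : m (i B) (m (i A) (m B C)) = m (m (i B) (i A)) (m B C) := by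
    exact (c40804).symm
  have goal_g402 : m (m B C) (m A B) = m (m (m B C) A) B := by
    have := c34120
    have := c155
    have := c4 B (m C A)
    have := c105
    grind (ematch := 0) only
  exact ⟨goal_g024, goal_g430, goal_g134, goal_g042, goal_g043, goal_g052, goal_g240, goal_g214, goal_g205, goal_g314, goal_g402⟩

theorem suf_key2 {Q : Type*} (m : Q → Q → Q) (i : Q → Q) (e : Q)
    (one_mul : ∀ x, m e x = x) (mul_one : ∀ x, m x e = x)
    (lip : ∀ x y, m (i x) (m x y) = y) (rip : ∀ x y, m (m y x) (i x) = y)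
    (flex : ∀ x y, m (m x y) x = m x (m y x))
    (L : ∀ x y u, m (m x u) (m (m y u) x) = m (m (m (m x u) y) u) x)
    (R : ∀ x y v, m x (m v (m y (m v x))) = m (m x (m v y)) (m v x))
    (alt1 : ∀ x y, m (m x x) y = m x (m x y)) (alt2 : ∀ x y, m (m x y) y = m x (m y y))
    (A B C : Q)
    (HS : ∀ u v w : Q, u ∈ ({A, i A, B, i B, C, i C} : Set Q) →
      v ∈ ({A, i A, B, i B, C, i C} : Set Q) → w ∈ ({A, i A, B, i B, C, i C} : Set Q) →
      m u (m v w) = m (m u v) w)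
    (hk025 : m A (m B (i (m B C))) = m (m A B) (i (m B C)))
    (hk052 : m A (m (i (m B C)) B) = m (m A (i (m B C))) B)
    (hk241 : m B (m (m B C) (i A)) = m (m B (m B C)) (i A))
    (hk250 : m B (m (i (m B C)) A) = m (m B (i (m B C))) A) :
    m (m B C) (m B A) = m (m (m B C) B) A := by
  have c1 : ∀ x0, m x0 e = x0 := by
    intros; exact mul_one _
  have c2 : ∀ x0 x1, m (i x0) (m x0 x1) = x1 := by
    intros; exact lip _ _
  have c3 : ∀ x0 x1, m (m x0 x1) (i x1) = x0 := by
    intros; exact rip _ _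
  have c4 : ∀ x0 x1, m (m x0 x1) x0 = m x0 (m x1 x0) := by
    intros; exact flex _ _
  have c5 : ∀ x0 x1 x2, m (m (m (m x0 x1) x2) x1) x0 = m (m x0 x1) (m (m x2 x1) x0) := by
    intros; exact (L _ _ _).symm
  have c6 : ∀ x0 x1 x2, m (m x0 (m x1 x2)) (m x1 x0) = m x0 (m x1 (m x2 (m x1 x0))) := by
    intros; exact (R _ _ _).symm
  have c26 : m (m A B) (i C) = m A (m B (i C)) := by
    exact (HS A B (i C) (by simp) (by simp) (by simp)).symm
  have c72 : m (m (i A) C) (i B) = m (i A) (m C (i B)) := by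
    exact (HS (i A) C (i B) (by simp) (by simp) (by simp)).symm
  have c105 : m (m B C) A = m B (m C A) := by
    exact (HS B C A (by simp) (by simp) (by simp)).symm
  have c106 : m (m B C) (i A) = m B (m C (i A)) := by
    exact (HS B C (i A) (by simp) (by simp) (by simp)).symm
  have c111 : m (m B (i C)) A = m B (m (i C) A) := by
    exact (HS B (i C) A (by simp) (by simp) (by simp)).symm
  have c172 : m (m C (i B)) (i A) = m C (m (i B) (i A)) := by
    exact (HS C (i B) (i A) (by simp) (by simp) (by simp)).symm
  have c207 : m (m (i C) (i B)) A = m (i C) (m (i B) A) := by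
    exact (HS (i C) (i B) A (by simp) (by simp) (by simp)).symm
  have c226 : m (m A B) (i (m B C)) = m A (m B (i (m B C))) := by
    first | exact hk025 | exact (hk025).symm
  have c230 : m (m A (i (m B C))) B = m A (m (i (m B C)) B) := by
    first | exact hk052 | exact (hk052).symm
  have c244 : m (m B (m B C)) (i A) = m B (m (m B C) (i A)) := by
    first | exact hk241 | exact (hk241).symm
  have c245 : m (m B (i (m B C))) A = m B (m (i (m B C)) A) := by
    first | exact hk250 | exact (hk250).symm
  have c270 : ∀ x0, m (i x0) x0 = e := by
    intro x0
    have := c1 x0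
    have := c2 x0 e
    grind (ematch := 0) only
  have c274 : ∀ x0 x1, m (i (m x0 x1)) x0 = i x1 := by
    intro x0 x1
    have := c3 x0 x1
    have := c2 (m x0 x1) (i x1)
    grind (ematch := 0) only
  have c275 : ∀ x0 x1, m x0 (i (m x1 x0)) = i x1 := by
    intro x0 x1
    have := c2 x1 x0
    have := c3 (i x1) (m x1 x0)
    grind (ematch := 0) only
  have c284 : ∀ x0 x1 x2, m (m (m x0 x1) (m x2 x0)) (i x2) = m x0 (m (m x1 (m x2 x0)) (i x2)) := by
    intro x0 x1 x2
    have := c2 x2 x0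
    have := c5 (i x2) (m x2 x0) x1
    grind (ematch := 0) only
  have c288 : ∀ x0 x1 x2, m (m (m x0 x1) (i x2)) (m x0 x2) = m x0 (m (m x1 (i x2)) (m x0 x2)) := by
    intro x0 x1 x2
    have := c3 x0 x2
    have := c5 (m x0 x2) (i x2) x1
    grind (ematch := 0) only
  have c294 : ∀ x0 x2 x1, m x0 (m (i x2) (m (m x2 x1) (m (i x2) x0))) = m (m x0 x1) (m (i x2) x0) := by
    intro x0 x2 x1
    have := c6 x0 (i x2) (m x2 x1)
    have := c2 x2 x1
    grind (ematch := 0) only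
  have c627 : m (m B (m C A)) (i A) = m B C := by
    have := c105
    have := c3 (m B C) A
    grind (ematch := 0) only
  have c1013 : m (m (m A (m B (i (m B C)))) B) A = m (m A B) (m (m (i (m B C)) B) A) := by
    have := c226
    have := c5 A B (i (m B C))
    grind (ematch := 0) only
  have c1090 : m (m B (m B C)) (i A) = m B (m B (m C (i A))) := by
    have := c244
    have := c106
    grind (ematch := 0) only
  have c1189 : ∀ x0, i (i x0) = x0 := by
    intro x0
    have := c1 (i (i x0))
    have := c270 x0
    have := c2 (i x0) x0
    grind (ematch := 0) only
  have c1191 : ∀ x0 x1, m x0 (m (i x0) x1) = x1 := by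
    intro x0 x1
    have := c1189 x0
    have := c2 (i x0) x1
    grind (ematch := 0) only
  have c1192 : ∀ x0 x1, m (m x0 (i x1)) x1 = x0 := by
    intro x0 x1
    have := c1189 x1
    have := c3 x0 (i x1)
    grind (ematch := 0) only
  have c1214 : m (m A (i (m B C))) B = m A (i C) := by
    have := c230
    have := c274 B C
    grind (ematch := 0) only
  have c1218 : ∀ x1 x0, i (m x1 x0) = m (i x0) (i x1) := by
    intro x1 x0
    have := c274 (i x1) (m x1 x0)
    have := c2 x1 x0
    grind (ematch := 0) only
  have c1222 : ∀ x0 x1 x2, m (i (m (m x0 x1) (m (m x2 x1) x0))) (m (m (m x0 x1) x2) x1) = i x0 := by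
    intro x0 x1 x2
    have := c5 x0 x1 x2
    have := c274 (m (m (m x0 x1) x2) x1) x0
    grind (ematch := 0) only
  have c1366 : ∀ x2 x1 x0, m (m x2 x1) (m (m (i (m x0 (m x2 x1))) x1) x2) = m (m (i x0) x1) x2 := by
    intro x2 x1 x0
    have := c5 x2 x1 (i (m x0 (m x2 x1)))
    have := c275 (m x2 x1) x0
    grind (ematch := 0) only
  have c1495 : ∀ x0 x2 x1, m x0 (m x2 (m (m (i x2) x1) (m x2 x0))) = m (m x0 x1) (m x2 x0) := by
    intro x0 x2 x1
    have := c6 x0 x2 (m (i x2) x1)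
    have := c1191 x2 x1
    grind (ematch := 0) only
  have c1542 : m (m B (m B (m C (i A)))) A = m B (m B C) := by
    have := c1090
    have := c1192 (m B (m B C)) A
    grind (ematch := 0) only
  have c2176 : ∀ x0 x1 x2, m (m x0 (m (m x1 (m x2 x0)) (i x2))) x2 = m (m x0 x1) (m x2 x0) := by
    intro x0 x1 x2
    have := c1189 x2
    have := c284 x0 x1 x2
    have := c3 (m (m x0 x1) (m x2 x0)) (i x2)
    grind (ematch := 0) only
  have c2179 : ∀ x0 x1 x2, m (m x0 (m x1 (m x2 (m x1 x0)))) (i x1) = m x0 (m (m (m x1 x2) (m x1 x0)) (i x1)) := by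
    intro x0 x1 x2
    have := c6 x0 x1 x2
    have := c284 x0 (m x1 x2) x1
    grind (ematch := 0) only
  have c2198 : m (m A B) (m (i C) (i B)) = m A (m B (m (i C) (i B))) := by
    have := c1218 B C
    have := c226
    grind (ematch := 0) only
  have c2204 : m (m B (m (i C) (i B))) A = m B (m (i C) (m (i B) A)) := by
    have := c1218 B C
    have := c245
    have := c207
    grind (ematch := 0) only
  have c2219 : ∀ x0 x1 x2, m (m x0 (m x1 x2)) (m (i x2) (i x1)) = x0 := by
    intro x0 x1 x2
    have := c1218 x1 x2
    have := c3 x0 (m x1 x2)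
    grind (ematch := 0) only
  have c2852 : ∀ x0 x1 x2, m (m x0 x1) (m (i x0) (m (m x0 x2) x1)) = m (m (m x0 x1) x2) x1 := by
    intro x0 x1 x2
    have := c2 x0 x1
    have := c294 (m x0 x1) x0 x2
    grind (ematch := 0) only
  have c2910 : m (m B C) (m B A) = m B (m C (m B A)) := by
    have := c627
    have := c288 B (m C A) A
    have := c3 C A
    grind (ematch := 0) only
  have c3702 : m (m A (m (i C) (i B))) B = m A (i C) := by
    have := c1218 B C
    have := c1214
    grind (ematch := 0) only
  have c5088 : ∀ x0, m (m x0 (m (i C) (m (i B) A))) (m (i A) (m B C)) = x0 := by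
    intro x0
    have := c1189 B
    have := c1189 C
    have := c1218 (i C) (i B)
    have := c207
    have := c2219 x0 (m (i C) (i B)) A
    grind (ematch := 0) only
  have c27010 : m (m (m A (m B (m (i C) (i B)))) B) A = m (m A B) (m (i C) A) := by
    have := c1218 B C
    have := c1013
    have := c1192 (i C) B
    grind (ematch := 0) only
  have c30595 : ∀ x0 x1 x2, m (m (i x0) (m (i x1) (m (i x2) (m (i x1) (i x0))))) (m (m (m x0 x1) x2) x1) = i x0 := by
    intro x0 x1 x2
    have := c6 (i x0) (i x1) (i x2)
    have := c1218 x2 x1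
    have := c1218 (m x2 x1) x0
    have := c1218 x0 x1
    have := c1218 (m x0 x1) (m (m x2 x1) x0)
    have := c1222 x0 x1 x2
    grind (ematch := 0) only
  have c33138 : ∀ x0 x1 x2, m (m x0 x1) (m (m (m (m (i x1) (i x0)) (i x2)) x1) x0) = m (m (i x2) x1) x0 := by
    intro x0 x1 x2
    have := c1218 x0 x1
    have := c1218 x2 (m x0 x1)
    have := c1366 x0 x1 x2
    grind (ematch := 0) only
  have c33141 : ∀ x0 x1 x2, m (m (m (i x0) x1) x2) (m (i x2) (m (i x1) (m x0 (m x2 x1)))) = m x2 x1 := by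
    intro x0 x1 x2
    have := c1189 x0
    have := c1189 x2
    have := c1189 x1
    have := c1218 (i x1) (i x2)
    have := c1218 (m (i x1) (i x2)) (i x0)
    have := c1218 (m (m (i x1) (i x2)) (i x0)) x1
    have := c1218 (m (m (m (i x1) (i x2)) (i x0)) x1) x2
    have := c33138 x2 x1 x0
    have := c3 (m x2 x1) (m (m (m (m (i x1) (i x2)) (i x0)) x1) x2)
    grind (ematch := 0) only
  have c38167 : m (m A (m B (m (i C) (i B)))) B = m A (m B (i C)) := by
    have := c2198
    have := c2852 A B (m (i C) (i B))
    have := c3702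
    have := c2 A (i C)
    have := c26
    grind (ematch := 0) only
  have c41125 : m (m A B) (m (i C) A) = m A (m B (m (i C) A)) := by
    have := c27010
    have := c38167
    have := c4 A (m B (i C))
    have := c111
    grind (ematch := 0) only
  have c41127 : m (m A (m B (i C))) (i B) = m A (m B (m (i C) (i B))) := by
    have := c38167
    have := c3 (m A (m B (m (i C) (i B)))) B
    grind (ematch := 0) only
  have c41166 : m (m (i B) (i A)) (m A (m B (m (i C) A))) = m (i C) A := by
    have := c1218 A B
    have := c41125
    have := c2 (m A B) (m (i C) A)
    grind (ematch := 0) only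
  have c45261 : m (m (m B (m C (m (i B) (i A)))) (m A B)) (i C) = B := by
    have := c1495 B A (m C (m (i B) (i A)))
    have := c1189 B
    have := c1189 A
    have := c172
    have := c4 (i A) (m C (i B))
    have := c72
    have := c1189 C
    have := c1218 (i C) A
    have := c1218 B (m (i C) A)
    have := c1218 A (m B (m (i C) A))
    have := c3 (i C) A
    have := c41166
    have := c30595 (i B) (i A) (m A (m B (m (i C) A)))
    grind (ematch := 0) only
  have c45262 : m (m B (m C (m (i B) (i A)))) (m A B) = m B C := by
    have := c3 (m (m B (m C (m (i B) (i A)))) (m A B)) (i C)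
    have := c45261
    have := c1189 C
    grind (ematch := 0) only
  have c45287 : m (m B (m B (m C (m (i B) (i A))))) (m A B) = m B (m B C) := by
    have := c2176 B (m B (m C (m (i B) (i A)))) A
    have := c45262
    have := c106
    have := c1542
    grind (ematch := 0) only
  have c92786 : m (m A (m B (m (i C) (m (i B) A)))) (m (i A) (m B C)) = m A B := by
    have := c2204
    have := c4 A (m B (m (i C) (i B)))
    have := c1192 (m A (m B (m (i C) (i B)))) B
    have := c41127
    have := c26
    have := c1189 A
    have := c1189 B
    have := c1218 (i B) (i A)
    have := c1218 C (m (i B) (i A))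
    have := c1218 B (m C (m (i B) (i A)))
    have := c1218 B (m B (m C (m (i B) (i A))))
    have := c2 B (m B C)
    have := c45287
    have := c33141 (m B (m B (m C (m (i B) (i A))))) B A
    grind (ematch := 0) only
  have c108639 : m (m B (m C B)) A = m B (m C (m B A)) := by
    have := c4 B C
    have := c2 A B
    have := c1189 A
    have := c92786
    have := c2179 (m B C) (i A) (m A (m B (m (i C) (m (i B) A))))
    have := c2 A (m B (m (i C) (m (i B) A)))
    have := c5088 B
    have := c2910
    grind (ematch := 0) only
  have goal_g420 : m (m B C) (m B A) = m (m (m B C) B) A := by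
    have := c2910
    have := c108639
    have := c4 B C
    grind (ematch := 0) only
  exact goal_g420

theorem suf_mirror {Q : Type*} (m : Q → Q → Q) (i : Q → Q)
    (anti : ∀ x y, i (m x y) = m (i y) (i x)) (x y z : Q) (h : m x (m y z) = m (m x y) z) :
    m (i z) (m (i y) (i x)) = m (m (i z) (i y)) (i x) := by
  have := congrArg i h
  simp only [anti] at this
  exact this.symm

theorem suf_pair {Q : Type*} (m : Q → Q → Q) (i : Q → Q)
    (ii : ∀ x, i (i x) = x)
    (lip : ∀ x y, m (i x) (m x y) = y) (rip : ∀ x y, m (m y x) (i x) = y)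
    (li : ∀ x y, m (m (i x) x) y = y) (ri : ∀ x y, m y (m x (i x)) = y)
    (flex : ∀ x y, m (m x y) x = m x (m y x)) :
    (∀ x y, m x (m (i x) y) = m (m x (i x)) y) ∧ (∀ x y, m (i x) (m x y) = m (m (i x) x) y) ∧
    (∀ x y, m y (m x (i x)) = m (m y x) (i x)) ∧ (∀ x y, m y (m (i x) x) = m (m y (i x)) x) ∧
    (∀ x y, m x (m y (i x)) = m (m x y) (i x)) ∧ (∀ x y, m (i x) (m y x) = m (m (i x) y) x) := by
  have lip2 : ∀ x y, m x (m (i x) y) = y := fun x y => by simpa only [ii] using lip (i x) y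
  have rip2 : ∀ x y, m (m y (i x)) x = y := fun x y => by simpa only [ii] using rip (i x) y
  have f2 : ∀ x y, m (i x) (m y x) = m (m (i x) y) x := by
    intro x y
    have h := flex x (m (i x) y)
    rw [lip2] at h
    rw [h, lip]
  refine ⟨fun x y => ?_, fun x y => ?_, fun x y => ?_, fun x y => ?_, fun x y => ?_, f2⟩
  · have := li (i x) y
    rw [ii] at this
    rw [this, lip2]
  · rw [li, lip]
  · rw [ri, rip]
  · have := ri (i x) y
    rw [ii] at this
    rw [this, rip2]
  · have := f2 (i x) y
    rwa [ii] at this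

theorem suf_step {Q : Type*} (m : Q → Q → Q) (i : Q → Q) (e : Q)
    (one_mul : ∀ x, m e x = x) (mul_one : ∀ x, m x e = x)
    (lip : ∀ x y, m (i x) (m x y) = y) (rip : ∀ x y, m (m y x) (i x) = y)
    (flex : ∀ x y, m (m x y) x = m x (m y x))
    (L : ∀ x y u, m (m x u) (m (m y u) x) = m (m (m (m x u) y) u) x)
    (R : ∀ x y v, m x (m v (m y (m v x))) = m (m x (m v y)) (m v x))
    (alt1 : ∀ x y, m (m x x) y = m x (m x y)) (alt2 : ∀ x y, m (m x y) y = m x (m y y))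
    (anti : ∀ x y, i (m x y) = m (i y) (i x)) (ii : ∀ x, i (i x) = x)
    (A B C : Q)
    (HS : ∀ u v w : Q, u ∈ ({A, i A, B, i B, C, i C} : Set Q) →
      v ∈ ({A, i A, B, i B, C, i C} : Set Q) → w ∈ ({A, i A, B, i B, C, i C} : Set Q) →
      m u (m v w) = m (m u v) w)
    (u v w : Q) (hu : u ∈ ({A, i A, B, i B, m B C, i (m B C)} : Set Q))
    (hv : v ∈ ({A, i A, B, i B, m B C, i (m B C)} : Set Q))
    (hw : w ∈ ({A, i A, B, i B, m B C, i (m B C)} : Set Q)) :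
    m u (m v w) = m (m u v) w := by
  have i1 : ∀ x, m (i x) x = e := fun x => by simpa only [mul_one] using lip x e
  have i2 : ∀ x, m x (i x) = e := fun x => by simpa only [one_mul] using rip x e
  obtain ⟨p1, p2, p3, p4, p5, p6⟩ := suf_pair m i ii lip rip
    (fun x y => by rw [i1, one_mul]) (fun x y => by rw [i2, mul_one]) flex
  have HS2 : ∀ u v w : Q, u ∈ ({i A, i (i A), B, i B, C, i C} : Set Q) →
      v ∈ ({i A, i (i A), B, i B, C, i C} : Set Q) →
      w ∈ ({i A, i (i A), B, i B, C, i C} : Set Q) →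
      m u (m v w) = m (m u v) w := by
    intro u v w hu hv hw
    rw [ii, Set.insert_comm] at hu hv hw
    exact HS u v w hu hv hw
  obtain ⟨hk024, hk430, hk134, hk042, hk043, hk052, hk240, hk214, hk205, hk314, hk402⟩ := suf_key1 m i e one_mul mul_one lip rip flex L R alt1 alt2 A B C HS
  obtain ⟨hk124, hk431, hk034, hk142, hk143, hk152, hk241, hk204, hk215, hk304, hk412⟩ := suf_key1 m i e one_mul mul_one lip rip flex L R alt1 alt2 (i A) B C HS2
  rw [ii] at hk034 hk204 hk304
  have hk531 : m (i (m B C)) (m (i B) (i A)) = m (m (i (m B C)) (i B)) (i A) := by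
    simpa only [ii] using suf_mirror m i anti _ _ _ hk024
  have hk530 : m (i (m B C)) (m (i B) A) = m (m (i (m B C)) (i B)) A := by
    simpa only [ii] using suf_mirror m i anti _ _ _ hk124
  have hk125 : m (i A) (m B (i (m B C))) = m (m (i A) B) (i (m B C)) := by
    simpa only [ii] using suf_mirror m i anti _ _ _ hk430
  have hk025 : m A (m B (i (m B C))) = m (m A B) (i (m B C)) := by
    simpa only [ii] using suf_mirror m i anti _ _ _ hk431
  have hk520 : m (i (m B C)) (m B A) = m (m (i (m B C)) B) A := by
    simpa only [ii] using suf_mirror m i anti _ _ _ hk134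
  have hk521 : m (i (m B C)) (m B (i A)) = m (m (i (m B C)) B) (i A) := by
    simpa only [ii] using suf_mirror m i anti _ _ _ hk034
  have hk351 : m (i B) (m (i (m B C)) (i A)) = m (m (i B) (i (m B C))) (i A) := by
    simpa only [ii] using suf_mirror m i anti _ _ _ hk042
  have hk350 : m (i B) (m (i (m B C)) A) = m (m (i B) (i (m B C))) A := by
    simpa only [ii] using suf_mirror m i anti _ _ _ hk142
  have hk251 : m B (m (i (m B C)) (i A)) = m (m B (i (m B C))) (i A) := by
    simpa only [ii] using suf_mirror m i anti _ _ _ hk043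
  have hk250 : m B (m (i (m B C)) A) = m (m B (i (m B C))) A := by
    simpa only [ii] using suf_mirror m i anti _ _ _ hk143
  have hk341 : m (i B) (m (m B C) (i A)) = m (m (i B) (m B C)) (i A) := by
    simpa only [ii] using suf_mirror m i anti _ _ _ hk052
  have hk340 : m (i B) (m (m B C) A) = m (m (i B) (m B C)) A := by
    simpa only [ii] using suf_mirror m i anti _ _ _ hk152
  have hk153 : m (i A) (m (i (m B C)) (i B)) = m (m (i A) (i (m B C))) (i B) := by
    simpa only [ii] using suf_mirror m i anti _ _ _ hk240
  have hk053 : m A (m (i (m B C)) (i B)) = m (m A (i (m B C))) (i B) := by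
    simpa only [ii] using suf_mirror m i anti _ _ _ hk241
  have hk503 : m (i (m B C)) (m A (i B)) = m (m (i (m B C)) A) (i B) := by
    simpa only [ii] using suf_mirror m i anti _ _ _ hk214
  have hk513 : m (i (m B C)) (m (i A) (i B)) = m (m (i (m B C)) (i A)) (i B) := by
    simpa only [ii] using suf_mirror m i anti _ _ _ hk204
  have hk413 : m (m B C) (m (i A) (i B)) = m (m (m B C) (i A)) (i B) := by
    simpa only [ii] using suf_mirror m i anti _ _ _ hk205
  have hk403 : m (m B C) (m A (i B)) = m (m (m B C) A) (i B) := by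
    simpa only [ii] using suf_mirror m i anti _ _ _ hk215
  have hk502 : m (i (m B C)) (m A B) = m (m (i (m B C)) A) B := by
    simpa only [ii] using suf_mirror m i anti _ _ _ hk314
  have hk512 : m (i (m B C)) (m (i A) B) = m (m (i (m B C)) (i A)) B := by
    simpa only [ii] using suf_mirror m i anti _ _ _ hk304
  have hk315 : m (i B) (m (i A) (i (m B C))) = m (m (i B) (i A)) (i (m B C)) := by
    simpa only [ii] using suf_mirror m i anti _ _ _ hk402
  have hk305 : m (i B) (m A (i (m B C))) = m (m (i B) A) (i (m B C)) := by
    simpa only [ii] using suf_mirror m i anti _ _ _ hk412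
  have hk420 := suf_key2 m i e one_mul mul_one lip rip flex L R alt1 alt2 A B C HS hk025 hk052 hk241 hk250
  have hk421 := suf_key2 m i e one_mul mul_one lip rip flex L R alt1 alt2 (i A) B C HS2 (by simpa only [ii] using hk125) (by simpa only [ii] using hk152) (by simpa only [ii] using hk240) (by simpa only [ii] using hk251)
  have hk135 : m (i A) (m (i B) (i (m B C))) = m (m (i A) (i B)) (i (m B C)) := by
    simpa only [ii] using suf_mirror m i anti _ _ _ hk420
  have hk035 : m A (m (i B) (i (m B C))) = m (m A (i B)) (i (m B C)) := by
    simpa only [ii] using suf_mirror m i anti _ _ _ hk421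
  simp only [Set.mem_insert_iff, Set.mem_singleton_iff] at hu hv hw
  rcases hu with hu | hu | hu | hu | hu | hu <;>
  rcases hv with hv | hv | hv | hv | hv | hv <;>
  rcases hw with hw | hw | hw | hw | hw | hw <;>
  rw [hu, hv, hw] <;>
  first
  | exact (alt1 _ _).symm
  | exact (alt2 _ _).symm
  | exact (flex _ _).symm
  | exact p1 _ _
  | exact p2 _ _
  | exact p3 _ _
  | exact p4 _ _
  | exact p5 _ _
  | exact p6 _ _
  | assumption
  | (simpa only [ii] using ‹_›)

/-- Every SUF IP loop is a stepping-up loop. -/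
theorem suf_ip_stepping_up {Q : Type*} (L : LoopStr Q) (inv : Q → Q)
    (lip : ∀ x y, L.mul (inv x) (L.mul x y) = y)
    (rip : ∀ x y, L.mul (L.mul y x) (inv x) = y)
    (lsuf : ∀ x y u,
      L.mul (L.rd x u) (L.mul (L.rd y u) x)
        = L.mul (L.rd (L.mul (L.rd x u) y) u) x)
    (rsuf : ∀ x y v,
      L.mul x (L.ld v (L.mul y (L.ld v x)))
        = L.mul (L.mul x (L.ld v y)) (L.ld v x)) :
    (∀ x y, L.mul x (L.mul x y) = L.mul (L.mul x x) y)
    ∧ (∀ x y, L.mul (L.mul x y) y = L.mul x (L.mul y y))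
    ∧ (∀ x y, L.mul x (L.mul y x) = L.mul (L.mul x y) x)
    ∧ (∀ a b c, SA L inv a b c → SA L inv a b (L.mul b c)) := by
  have ii : ∀ x, inv (inv x) = x := fun x => by
    have h := lip (inv x) x
    have h1 : L.mul (inv x) x = L.one := by simpa only [L.mul_one] using lip x L.one
    rwa [h1, L.mul_one] at h
  have lip2 : ∀ x y, L.mul x (L.mul (inv x) y) = y := fun x y => by
    simpa only [ii] using lip (inv x) y
  have rip2 : ∀ x y, L.mul (L.mul y (inv x)) x = y := fun x y => by
    simpa only [ii] using rip (inv x) y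
  have hrd : ∀ x u, L.rd x u = L.mul x (inv u) := fun x u => by
    have h := L.rd_mul u (L.mul x (inv u))
    rwa [rip2] at h
  have hld : ∀ v x, L.ld v x = L.mul (inv v) x := fun v x => by
    have h := L.ld_mul v (L.mul (inv v) x)
    rwa [lip2] at h
  have hL : ∀ x y u, L.mul (L.mul x u) (L.mul (L.mul y u) x)
      = L.mul (L.mul (L.mul (L.mul x u) y) u) x := fun x y u => by
    simpa only [hrd, ii] using lsuf x y (inv u)
  have hR : ∀ x y v, L.mul x (L.mul v (L.mul y (L.mul v x)))
      = L.mul (L.mul x (L.mul v y)) (L.mul v x) := fun x y v => by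
    simpa only [hld, ii] using rsuf x y (inv v)
  have flex : ∀ x y, L.mul (L.mul x y) x = L.mul x (L.mul y x) := fun x y => by
    simpa only [L.mul_one] using (hL x y L.one).symm
  obtain ⟨anti, al, ar⟩ := suf_basic L.mul inv L.one L.one_mul L.mul_one lip rip flex hL hR
  refine ⟨al, ar, fun x y => (flex x y).symm, fun a b c h u v w hu hv hw => ?_⟩
  exact suf_step L.mul inv L.one L.one_mul L.mul_one lip rip flex hL hR
    (fun x y => (al x y).symm) ar anti ii a b c h u v w hu hv hw
end

section
/- Every Moufang loop is a stepping-up loop: in a Moufang loop (with its two-sided inverses), for all a, b, c, SA(a,b,c) implies SA(a,b,b·c). -/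
/-- Every Moufang loop (with its two-sided inverses) is a stepping-up loop. -/
theorem moufang_stepping_up {Q : Type*} (L : LoopStr Q) (inv : Q → Q)
    (hinv : ∀ x, L.rd L.one x = inv x ∧ L.ld x L.one = inv x)
    (moufang : ∀ x y z,
      L.mul (L.mul (L.mul x y) z) y = L.mul x (L.mul y (L.mul z y))) :
    ∀ a b c, SA L inv a b c → SA L inv a b (L.mul b c) := by
  have rc : ∀ x y z, L.mul y x = L.mul z x → y = z := fun x y z h => by
    rw [← L.rd_mul x y, h, L.rd_mul]
  have lc : ∀ x y z, L.mul x y = L.mul x z → y = z := fun x y z h => by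
    rw [← L.ld_mul x y, h, L.ld_mul]
  have ri : ∀ x, L.mul x (inv x) = L.one := fun x => by rw [← (hinv x).2, L.mul_ld]
  have li : ∀ x, L.mul (inv x) x = L.one := fun x => by rw [← (hinv x).1, L.mul_rd]
  have rip : ∀ x y, L.mul (L.mul x y) (inv y) = x := fun x y => by
    apply rc y
    rw [moufang, li, L.mul_one]
  have lip : ∀ y w, L.mul (inv y) (L.mul y w) = w := fun y w => by
    have h := moufang (inv y) y (L.rd w y)
    rw [li, L.one_mul, L.mul_rd] at h
    exact h.symm
  have ii : ∀ x, inv (inv x) = x := fun x => by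
    apply lc (inv x)
    rw [ri, li]
  have lip' : ∀ y w, L.mul y (L.mul (inv y) w) = w := fun y w => by
    have h := lip (inv y) w
    rwa [ii] at h
  have anti : ∀ x y, inv (L.mul x y) = L.mul (inv y) (inv x) := fun x y => by
    have h := lip (L.mul x y) (inv y)
    rw [rip] at h
    rw [← h, rip]
  have flex : ∀ y z, L.mul (L.mul y z) y = L.mul y (L.mul z y) := fun y z => by
    have h := moufang L.one y z
    rwa [L.one_mul, L.one_mul] at h
  obtain ⟨A, hA⟩ : ∃ A : Q → Q → Q → Prop, ∀ x y z, A x y z ↔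
      L.mul x (L.mul y z) = L.mul (L.mul x y) z := ⟨_, fun _ _ _ => Iff.rfl⟩
  have R : ∀ x y z, A x y z ↔ A x (L.mul y z) y := fun x y z => by
    rw [hA, hA, flex, ← moufang]
    exact ⟨fun h => by rw [h], fun h => (rc _ _ _ h).symm⟩
  have I : ∀ x y z, A x y z → A x (L.mul y z) (inv z) := fun x y z h => by
    rw [hA] at h ⊢
    rw [rip, h, rip]
  have S : ∀ x y z, A x y z → A x y (L.mul y z) := fun x y z h => by
    have h1 := (R _ _ _).1 (I x y z h)
    rw [rip] at h1
    exact h1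
  have Sinv : ∀ x y z, A x y z → A x y (L.mul (inv y) z) := fun x y z h => by
    have h6 : A x z (inv (L.mul (inv y) z)) := by
      apply (R x z (inv (L.mul (inv y) z))).2
      rw [anti, ii, lip']
      exact h
    have h7 := I _ _ _ h6
    rw [ii, anti, ii, lip'] at h7
    exact h7
  have sw2 : ∀ x y z, A x y z → A x z y := fun x y z h => by
    have h1 := (R _ _ _).1 (Sinv x y z h)
    rwa [lip'] at h1
  have rev : ∀ x y z, A x y z → A (inv z) (inv y) (inv x) := fun x y z h => by
    rw [hA] at h ⊢
    rw [← anti, ← anti, ← anti, ← anti, h]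
  have rev' : ∀ x y z, A (inv z) (inv y) (inv x) → A x y z := fun x y z h => by
    have := rev _ _ _ h
    rwa [ii, ii, ii] at this
  have sw1 : ∀ x y z, A x y z → A y x z := fun x y z h =>
    rev' _ _ _ (sw2 _ _ _ (rev _ _ _ h))
  have n3aux : ∀ x y z, A x y z → A x (L.mul y (inv z)) z := fun x y z h => by
    have h1 := Sinv _ _ _ (sw1 _ _ _ (sw2 _ _ _ (rev _ _ _ h)))
    have h2 := rev _ _ _ (sw2 _ _ _ (sw1 _ _ _ h1))
    simpa only [anti, ii] using h2
  have n3 : ∀ x y z, A x y z → A x y (inv z) := fun x y z h => by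
    have h1 : A x (L.mul y (inv z)) z := by
      apply n3aux
      exact h
    have h2 := I _ _ _ h1
    have h3 : L.mul (L.mul y (inv z)) z = y := by
      have := rip y (inv z)
      rwa [ii] at this
    rwa [h3] at h2
  have n2 : ∀ x y z, A x y z → A x (inv y) z := fun x y z h =>
    sw2 _ _ _ (n3 _ _ _ (sw2 _ _ _ h))
  have n1 : ∀ x y z, A x y z → A (inv x) y z := fun x y z h =>
    sw1 _ _ _ (n2 _ _ _ (sw1 _ _ _ h))
  have alt : ∀ x y, A x y y := fun x y => by
    rw [hA]
    have h := moufang x y L.one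
    rw [L.mul_one, L.one_mul] at h
    exact h.symm
  have alt2 : ∀ x y, A y x y := fun x y => sw1 _ _ _ (alt x y)
  have alt3 : ∀ x y, A y y x := fun x y => sw2 _ _ _ (alt2 x y)
  intro a b c h
  have key : A a b (L.mul b c) := by
    apply S
    rw [hA]
    apply h <;> simp
  generalize L.mul b c = d at key
  have base : ∀ u v w, (u = a ∨ u = b ∨ u = d) → (v = a ∨ v = b ∨ v = d) →
      (w = a ∨ w = b ∨ w = d) → A u v w := by
    have k1 := sw1 _ _ _ key
    have k2 := sw2 _ _ _ key
    have k3 := sw2 _ _ _ k1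
    have k4 := sw1 _ _ _ k2
    have k5 := sw1 _ _ _ k3
    rintro u v w (rfl | rfl | rfl) (rfl | rfl | rfl) (rfl | rfl | rfl) <;>
      first | assumption | apply alt | apply alt2 | apply alt3
  have dec : ∀ u, u ∈ ({a, inv a, b, inv b, d, inv d} : Set Q) →
      ∃ u', (u' = a ∨ u' = b ∨ u' = d) ∧ (u = u' ∨ u = inv u') := by
    intro u hu
    simp only [Set.mem_insert_iff, Set.mem_singleton_iff] at hu
    rcases hu with h | h | h | h | h | h
    · exact ⟨a, by simp, by simp [h]⟩
    · exact ⟨a, by simp, by simp [h]⟩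
    · exact ⟨b, by simp, by simp [h]⟩
    · exact ⟨b, by simp, by simp [h]⟩
    · exact ⟨d, by simp, by simp [h]⟩
    · exact ⟨d, by simp, by simp [h]⟩
  intro u v w hu hv hw
  obtain ⟨u', hu', hu⟩ := dec u hu
  obtain ⟨v', hv', hv⟩ := dec v hv
  obtain ⟨w', hw', hw⟩ := dec w hw
  rw [← hA]
  have h0 := base _ _ _ hu' hv' hw'
  have h1 : A u v' w' := by
    rcases hu with rfl | rfl
    · exact h0
    · exact n1 _ _ _ h0
  have h2 : A u v w' := by
    rcases hv with rfl | rfl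
    · exact h1
    · exact n2 _ _ _ h1
  rcases hw with rfl | rfl
  · exact h2
  · exact n3 _ _ _ h2
end
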